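/- arXiv:2302.07085 — 2 statements merged into one kernel-verified Lean document; each statement's English description precedes it below -/
import Mathlib

section
/- Let Ω ⊂ ℂⁿ (n ≥ 1) be a bounded domain admitting a C^∞ defining function ρ such that every boundary point of Ω is strongly pseudoconvex (with respect to ρ). Let p ∈ ∂Ω and let F : Ω → Ω be a holomorphic map with F(z) = z + o(‖z−p‖³) as z → p within Ω. Then F(z) = z for all z ∈ Ω. -/
open Complex Topology Filter Metric Set Function

noncomputable section

/-- `ℂⁿ` as a normed space. -/
abbrev En (n : ℕ) : Type := EuclideanSpace ℂ (Fin n)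

/-- A domain: a nonempty open connected set. -/
def IsDomain' {n : ℕ} (Ω : Set (En n)) : Prop :=
  IsOpen Ω ∧ IsConnected Ω

/-- The Levi form of `ρ` at `q` in direction `ξ`:
`(1/4)(H_q(ξ,ξ) + H_q(iξ,iξ))` with `H_q` the second real Fréchet derivative. -/
def LeviForm {n : ℕ} (ρ : En n → ℝ) (q ξ : En n) : ℝ :=
  (1 / 4) * (iteratedFDeriv ℝ 2 ρ q ![ξ, ξ] + iteratedFDeriv ℝ 2 ρ q ![I • ξ, I • ξ])

/-- `ξ` lies in the complex tangent space of `{ρ = 0}` at `q`. -/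
def InCplxTangent {n : ℕ} (ρ : En n → ℝ) (q ξ : En n) : Prop :=
  fderiv ℝ ρ q ξ = 0 ∧ fderiv ℝ ρ q (I • ξ) = 0

/-- `ρ` is a `C^m` defining function for `Ω`. -/
def IsDefiningFunction {n : ℕ} (Ω : Set (En n)) (m : ℕ∞) (ρ : En n → ℝ) : Prop :=
  ContDiff ℝ m ρ ∧ Ω = {z | ρ z < 0} ∧ frontier Ω = {z | ρ z = 0} ∧
    ∀ q ∈ frontier Ω, fderiv ℝ ρ q ≠ 0

/-- `q` is a strongly pseudoconvex point with respect to `ρ`. -/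
def StronglyPcxAt {n : ℕ} (ρ : En n → ℝ) (q : En n) : Prop :=
  ∀ ξ : En n, ξ ≠ 0 → InCplxTangent ρ q ξ → 0 < LeviForm ρ q ξ

/-- `Ω` is pseudoconvex with `C^∞` boundary, witnessed by the defining function `ρ`. -/
def IsPcxCinfBoundary {n : ℕ} (Ω : Set (En n)) (ρ : En n → ℝ) : Prop :=
  IsDefiningFunction Ω ⊤ ρ ∧
    ∀ q ∈ frontier Ω, ∀ ξ : En n, InCplxTangent ρ q ξ → 0 ≤ LeviForm ρ q ξ

/-- `F z = z + o(‖z - p‖^k)` as `z → p` within `Ω`. -/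
def LittleOh {n : ℕ} (Ω : Set (En n)) (F : En n → En n) (p : En n) (k : ℕ) : Prop :=
  Tendsto (fun z => ‖F z - z‖ / ‖z - p‖ ^ k) (𝓝[Ω] p) (𝓝 0)

/-- `F` is an automorphism of `Ω`: a holomorphic bijection with holomorphic inverse. -/
def IsAutomorphismOf {n : ℕ} (F : En n → En n) (Ω : Set (En n)) : Prop :=
  DifferentiableOn ℂ F Ω ∧ MapsTo F Ω Ω ∧
    ∃ G : En n → En n, DifferentiableOn ℂ G Ω ∧ MapsTo G Ω Ω ∧
      (∀ z ∈ Ω, G (F z) = z) ∧ (∀ z ∈ Ω, F (G z) = z)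

/-!
A holomorphic polynomial change of `ρ` produces near `p` a peak function `f` for which `Re f`
dominates the squared tangential displacement, together with a one-variable function `k` that
approximates `f` to fourth order on the complex line through `p` in a direction `v`. For every
holomorphic disc `γ` in `Ω` the barrier built from `Re (1 / f)` is superharmonic along `γ`, while
`Re (1 / k)` has a subharmonic minorant with the same pole at `p`. If `G` is a holomorphic self-map
tangent to the identity to third order at `p`, then `f ∘ G - k = o(ζ³)` along the line, so that
`1 / (f ∘ G) - 1 / k = o(ζ)`: the poles cancel, and the minimum principle compares the two barriers
on the line. Hence `G` keeps small discs of the line near `p`, with constants that do not depend on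
`G`.

On such a disc `Re (1 / (f ∘ G) - 1 / k)` has a nonnegative strictly superharmonic majorant which
decays linearly at the boundary point. The Hopf lemma and the Borel–Carathéodory inequality bound
the oscillation of `1 / (f ∘ G) - 1 / k` on the disc of radius `a` by a multiple of `√a`. Summing
over the radii `a / 2 ^ m` bounds the function itself, and so the displacement of `G` by
`B a ^ (5 / 4)`, where `B` is independent of `G`.

The bound therefore applies to all iterates of `F` at once. By the Baire category theorem it is
uniform over a ball of directions, so all iterates of `F` stay within `s / 8` of the identity on
some ball of radius `s` in `Ω`. This forces `F` to be the identity on a smaller ball, and the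
identity theorem concludes.
-/

section SecondDerivative

variable {E F H : Type*} [NormedAddCommGroup E] [NormedSpace ℝ E] [NormedAddCommGroup F]
  [NormedSpace ℝ F] [NormedAddCommGroup H] [NormedSpace ℝ H]

theorem iteratedFDeriv_two_comp {f : F → H} {g : E → F} {x : E} (hf : ContDiffAt ℝ 2 f (g x))
    (hg : ContDiffAt ℝ 2 g x) (v : E) :
    iteratedFDeriv ℝ 2 (fun y => f (g y)) x ![v, v] =
      iteratedFDeriv ℝ 2 f (g x) ![fderiv ℝ g x v, fderiv ℝ g x v] +
        fderiv ℝ f (g x) (iteratedFDeriv ℝ 2 g x ![v, v]) := by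
  have hchain : fderiv ℝ (fun y => f (g y)) =ᶠ[𝓝 x]
      fun y => (fderiv ℝ f (g y)).comp (fderiv ℝ g y) := by
    filter_upwards [hg.eventually (by simp), hg.continuousAt.eventually (hf.eventually (by simp))]
      with y hgy hfy
    exact fderiv_comp y (hfy.differentiableAt two_ne_zero) (hgy.differentiableAt two_ne_zero)
  have hf' : DifferentiableAt ℝ (fderiv ℝ f) (g x) :=
    (hf.fderiv_right (m := 1) le_rfl).differentiableAt one_ne_zero
  have hg' : DifferentiableAt ℝ (fderiv ℝ g) x :=
    (hg.fderiv_right (m := 1) le_rfl).differentiableAt one_ne_zero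
  have hderiv : HasFDerivAt (fun y => (fderiv ℝ f (g y)).comp (fderiv ℝ g y)) _ x :=
    (hf'.hasFDerivAt.comp x (hg.differentiableAt two_ne_zero).hasFDerivAt).clm_comp hg'.hasFDerivAt
  simp [iteratedFDeriv_two_apply, hchain.fderiv_eq, hderiv.fderiv, add_comm]

theorem deriv_deriv_comp_line {f : E → F} {x : E} (hf : ContDiffAt ℝ 2 f x) (v : E) :
    deriv (deriv fun t : ℝ => f (x + t • v)) 0 = iteratedFDeriv ℝ 2 f x ![v, v] := by
  set g : ℝ → E := fun t => x + t • v
  have hg0 : g 0 = x := by simp [g]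
  have hg : fderiv ℝ g = fun _ => ContinuousLinearMap.toSpanSingleton ℝ v := by
    funext t
    exact (((hasFDerivAt_id t).smul_const v).const_add x).fderiv.trans (by ext; simp)
  have h2 : deriv (deriv fun t => f (g t)) 0 =
      iteratedFDeriv ℝ 2 (fun t => f (g t)) 0 ![1, 1] := by
    simp [iteratedFDeriv_apply_eq_iteratedDeriv_mul_prod, iteratedDeriv_eq_iterate]
  rw [h2, iteratedFDeriv_two_comp (hg0.symm ▸ hf) (by fun_prop), iteratedFDeriv_two_apply g, hg,
    hg0]
  simp

theorem iteratedFDeriv_two_nonneg_of_isLocalMin {f : E → ℝ} {x : E} (hmin : IsLocalMin f x)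
    (hf : ContDiffAt ℝ 2 f x) (v : E) : 0 ≤ iteratedFDeriv ℝ 2 f x ![v, v] := by
  rw [← deriv_deriv_comp_line hf]
  set g : ℝ → ℝ := fun t => f (x + t • v)
  have hx : x + (0 : ℝ) • v = x := by simp
  have hcont : ContinuousAt (fun t : ℝ => x + t • v) 0 := by fun_prop
  have hg : IsLocalMin g 0 := by
    have := hcont.eventually (hx.symm ▸ hmin)
    simpa [IsLocalMin, IsMinFilter, g] using this
  have hgc : ContinuousAt g 0 := ContinuousAt.comp (f := fun t : ℝ => x + t • v)
    (hx.symm ▸ hf.continuousAt) hcont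
  by_contra! hneg
  have hmax := isLocalMax_of_deriv_deriv_neg hneg hg.deriv_eq_zero hgc
  have hconst : g =ᶠ[𝓝 0] fun _ => g 0 := by
    filter_upwards [hg, hmax] with t h₁ h₂ using le_antisymm h₂ h₁
  simp [hconst.deriv.deriv_eq] at hneg

theorem iteratedFDeriv_two_norm_sq {E : Type*} [NormedAddCommGroup E] [InnerProductSpace ℝ E]
    (x v : E) : iteratedFDeriv ℝ 2 (fun y : E => ‖y‖ ^ 2) x ![v, v] = 2 * ‖v‖ ^ 2 := by
  have h : fderiv ℝ (fun y : E => ‖y‖ ^ 2) = ⇑(2 • innerSL ℝ (E := E)) := fderiv_norm_sq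
  rw [iteratedFDeriv_two_apply, h, ContinuousLinearMap.fderiv, ← real_inner_self_eq_norm_sq,
    two_mul, two_smul]
  rfl

end SecondDerivative

open Laplacian InnerProductSpace

section HolomorphicDisc

variable {E F : Type*} [NormedAddCommGroup E] [NormedSpace ℂ E] [CompleteSpace E]
  [NormedAddCommGroup F] [NormedSpace ℝ F] {γ : ℂ → E} {ζ : ℂ}

-- The terms in the second derivative of `γ` cancel because `γ` is harmonic.
theorem laplacian_comp_holomorphic {f : E → F} (hf : ContDiffAt ℝ 2 f (γ ζ))
    (hγ : AnalyticAt ℂ γ ζ) :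
    Δ (fun ξ => f (γ ξ)) ζ = iteratedFDeriv ℝ 2 f (γ ζ) ![deriv γ ζ, deriv γ ζ] +
      iteratedFDeriv ℝ 2 f (γ ζ) ![I • deriv γ ζ, I • deriv γ ζ] := by
  have hγ2 : ContDiffAt ℝ 2 γ ζ := hγ.harmonicAt.1
  have hharm : Δ γ ζ = 0 := hγ.harmonicAt.2.self_of_nhds
  have hd : ∀ w : ℂ, fderiv ℝ γ ζ w = w • deriv γ ζ := fun w => by
    rw [hγ.differentiableAt.fderiv_restrictScalars ℝ]
    simp
  rw [laplacian_eq_iteratedFDeriv_complexPlane] at hharm ⊢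
  dsimp only
  rw [iteratedFDeriv_two_comp hf hγ2, iteratedFDeriv_two_comp hf hγ2, hd, hd, one_smul,
    add_add_add_comm, ← (fderiv ℝ f (γ ζ)).map_add]
  simp only [hharm, map_zero, add_zero]

theorem laplacian_norm_sq_holomorphic {E : Type*} [NormedAddCommGroup E] [InnerProductSpace ℂ E]
    [CompleteSpace E] {γ : ℂ → E} (hγ : AnalyticAt ℂ γ ζ) :
    Δ (fun ξ => ‖γ ξ‖ ^ 2) ζ = 4 * ‖deriv γ ζ‖ ^ 2 := by
  let _ : InnerProductSpace ℝ E := InnerProductSpace.complexToReal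
  rw [laplacian_comp_holomorphic (f := fun x : E => ‖x‖ ^ 2) (contDiff_norm_sq ℝ).contDiffAt hγ,
    iteratedFDeriv_two_norm_sq, iteratedFDeriv_two_norm_sq, norm_smul, norm_I]
  ring

end HolomorphicDisc

/-- `Δ u ζ ≤ l` in the sense of test functions: some `C²` function touches `u` from above at `ζ`
and has Laplacian at most `l` there. This makes sense for functions that are only semicontinuous
and is preserved by minima of two functions. -/
def LaplacianLE (u : ℂ → ℝ) (ζ : ℂ) (l : ℝ) : Prop :=
  ∃ φ : ℂ → ℝ, ContDiffAt ℝ 2 φ ζ ∧ u ≤ᶠ[𝓝 ζ] φ ∧ u ζ = φ ζ ∧ Δ φ ζ ≤ l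

namespace LaplacianLE

variable {u w : ℂ → ℝ} {ζ : ℂ} {l m : ℝ}

theorem of_contDiffAt (hu : ContDiffAt ℝ 2 u ζ) : LaplacianLE u ζ (Δ u ζ) :=
  ⟨u, hu, EventuallyLE.rfl, rfl, le_rfl⟩

theorem neg_of_contDiffAt (hu : ContDiffAt ℝ 2 u ζ) : LaplacianLE (fun ξ => -u ξ) ζ (-Δ u ζ) :=
  ⟨-u, hu.neg, EventuallyLE.rfl, rfl, (congrFun laplacian_neg ζ).le⟩

theorem mono (hu : LaplacianLE u ζ l) (h : l ≤ m) : LaplacianLE u ζ m :=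
  let ⟨φ, hφ, hle, heq, hl⟩ := hu
  ⟨φ, hφ, hle, heq, hl.trans h⟩

theorem of_touch (hw : LaplacianLE w ζ l) (hle : u ≤ᶠ[𝓝 ζ] w) (heq : u ζ = w ζ) :
    LaplacianLE u ζ l :=
  let ⟨φ, hφ, hwφ, heq', hl⟩ := hw
  ⟨φ, hφ, hle.trans hwφ, heq.trans heq', hl⟩

theorem congr (hw : LaplacianLE w ζ l) (h : u =ᶠ[𝓝 ζ] w) : LaplacianLE u ζ l :=
  hw.of_touch h.le h.eq_of_nhds

theorem add (hu : LaplacianLE u ζ l) (hw : LaplacianLE w ζ m) :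
    LaplacianLE (fun ξ => u ξ + w ξ) ζ (l + m) := by
  obtain ⟨φ, hφ, hle, heq, hl⟩ := hu
  obtain ⟨ψ, hψ, hle', heq', hm⟩ := hw
  exact ⟨φ + ψ, hφ.add hψ, by filter_upwards [hle, hle'] with ξ h₁ h₂ using add_le_add h₁ h₂,
    congrArg₂ _ heq heq', (hφ.laplacian_add hψ).trans_le (add_le_add hl hm)⟩

theorem const_mul (hu : LaplacianLE u ζ l) {c : ℝ} (hc : 0 ≤ c) :
    LaplacianLE (fun ξ => c * u ξ) ζ (c * l) := by
  obtain ⟨φ, hφ, hle, heq, hl⟩ := hu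
  refine ⟨c • φ, hφ.const_smul c, hle.mono fun ξ hξ => mul_le_mul_of_nonneg_left hξ hc,
    congrArg (c * ·) heq, ?_⟩
  rw [laplacian_smul c hφ]
  exact mul_le_mul_of_nonneg_left hl hc

theorem const (c : ℝ) (ζ : ℂ) : LaplacianLE (fun _ => c) ζ 0 :=
  (of_contDiffAt contDiffAt_const).mono (by simp)

theorem nonneg_of_isLocalMin (hu : LaplacianLE u ζ l) (hmin : IsLocalMin u ζ) : 0 ≤ l := by
  obtain ⟨φ, hφ, hle, heq, hl⟩ := hu
  have hφmin : IsLocalMin φ ζ := by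
    filter_upwards [hmin, hle] with ξ h₁ h₂ using heq ▸ h₁.trans h₂
  refine le_trans ?_ hl
  rw [laplacian_eq_iteratedFDeriv_complexPlane]
  exact add_nonneg (iteratedFDeriv_two_nonneg_of_isLocalMin hφmin hφ _)
    (iteratedFDeriv_two_nonneg_of_isLocalMin hφmin hφ _)

theorem re_of_analyticAt {f : ℂ → ℂ} (hf : AnalyticAt ℂ f ζ) :
    LaplacianLE (fun ξ => (f ξ).re) ζ 0 :=
  ⟨_, hf.harmonicAt_re.1, EventuallyLE.rfl, rfl, hf.harmonicAt_re.2.self_of_nhds.le⟩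

section NormSq

variable {E : Type*} [NormedAddCommGroup E] [InnerProductSpace ℂ E] [CompleteSpace E] {γ : ℂ → E}

theorem norm_sq_of_analyticAt (hγ : AnalyticAt ℂ γ ζ) :
    LaplacianLE (fun ξ => ‖γ ξ‖ ^ 2) ζ (4 * ‖deriv γ ζ‖ ^ 2) := by
  let _ : InnerProductSpace ℝ E := InnerProductSpace.complexToReal
  have h := of_contDiffAt (hγ.harmonicAt.1.norm_sq ℝ)
  rwa [laplacian_norm_sq_holomorphic hγ] at h

theorem neg_norm_sq_of_analyticAt (hγ : AnalyticAt ℂ γ ζ) :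
    LaplacianLE (fun ξ => -‖γ ξ‖ ^ 2) ζ 0 := by
  let _ : InnerProductSpace ℝ E := InnerProductSpace.complexToReal
  refine (neg_of_contDiffAt (hγ.harmonicAt.1.norm_sq ℝ)).mono ?_
  rw [laplacian_norm_sq_holomorphic hγ, Left.neg_nonpos_iff]
  positivity

end NormSq

end LaplacianLE

theorem laplacian_comp_eq_leviForm {n : ℕ} {ψ : En n → ℝ} {γ : ℂ → En n} {ζ : ℂ}
    (hψ : ContDiffAt ℝ 2 ψ (γ ζ)) (hγ : AnalyticAt ℂ γ ζ) :
    Δ (fun ξ => ψ (γ ξ)) ζ = 4 * LeviForm ψ (γ ζ) (deriv γ ζ) := by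
  rw [laplacian_comp_holomorphic hψ hγ, LeviForm]
  ring

theorem LaplacianLE.neg_comp {n : ℕ} {ψ : En n → ℝ} {γ : ℂ → En n} {ζ : ℂ}
    (hψ : ContDiffAt ℝ 2 ψ (γ ζ)) (hγ : AnalyticAt ℂ γ ζ) :
    LaplacianLE (fun ξ => -ψ (γ ξ)) ζ (-4 * LeviForm ψ (γ ζ) (deriv γ ζ)) := by
  have h := LaplacianLE.neg_of_contDiffAt (hψ.comp ζ hγ.harmonicAt.1)
  rwa [comp_def, laplacian_comp_eq_leviForm hψ hγ, ← neg_mul] at h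

theorem nonneg_of_laplacianLE_neg {V : Set ℂ} (hV : IsOpen V) {U : ℂ → ℝ}
    (hU : ∀ ζ ∈ V, LowerSemicontinuousAt U ζ) (hlap : ∀ ζ ∈ V, ∃ l < 0, LaplacianLE U ζ l)
    (hbd : ∀ ε > 0, ∃ S ⊆ V, IsCompact S ∧ ∀ ζ ∈ V, ζ ∉ S → -ε ≤ U ζ) {ζ : ℂ} (hζ : ζ ∈ V) :
    0 ≤ U ζ := by
  by_contra! hneg
  obtain ⟨S, hSV, hS, hSU⟩ := hbd (-U ζ / 2) (by linarith)
  have hζS : ζ ∈ S := by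
    by_contra h
    linarith [hSU ζ hζ h]
  obtain ⟨x, hxS, hx⟩ := LowerSemicontinuousOn.exists_isMinOn ⟨ζ, hζS⟩ hS
    fun y hy => (hU y (hSV hy)).lowerSemicontinuousWithinAt S
  have hxζ : U x ≤ U ζ := hx hζS
  have hmin : IsLocalMin U x := by
    filter_upwards [hV.mem_nhds (hSV hxS)] with y hy
    by_cases hyS : y ∈ S
    · exact hx hyS
    · linarith [hSU y hy hyS]
  obtain ⟨l, hl, hUl⟩ := hlap x (hSV hxS)
  exact (hUl.nonneg_of_isLocalMin hmin).not_gt hl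

section Taylor

variable {E F : Type*} [NormedAddCommGroup E] [NormedSpace ℝ E] [NormedAddCommGroup F]
  [NormedSpace ℝ F] [CompleteSpace F] {f : E → F} {q : E}

theorem isBigO_taylor_remainder {n : ℕ} (hf : ContDiffAt ℝ (n + 1) f q) :
    (fun d => f (q + d) - ∑ k ∈ Finset.range (n + 1),
      (k.factorial : ℝ)⁻¹ • iteratedFDeriv ℝ k f q fun _ => d) =O[𝓝 0] fun d => ‖d‖ ^ (n + 1) := by
  set D := iteratedFDeriv ℝ (n + 1) f
  have hD : ∀ᶠ z in 𝓝 q, ‖D z‖ < ‖D q‖ + 1 :=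
    (hf.continuousAt_iteratedFDeriv (by norm_cast)).norm.eventually_lt_const (lt_add_one _)
  obtain ⟨r, hr, hball⟩ := Metric.eventually_nhds_iff_ball.1 ((hf.eventually (by simp)).and hD)
  refine .of_bound ((n.factorial : ℝ)⁻¹ * (‖D q‖ + 1)) ?_
  filter_upwards [ball_mem_nhds 0 hr] with d hd
  have hseg : ∀ t ∈ Icc (0 : ℝ) 1, q + t • d ∈ ball q r := fun t ht => by
    rw [mem_ball_iff_norm, add_sub_cancel_left, norm_smul, Real.norm_of_nonneg ht.1]
    exact (mul_le_of_le_one_left (norm_nonneg d) ht.2).trans_lt (mem_ball_zero_iff.1 hd)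
  have hint : ‖∫ t in (0 : ℝ)..1, (1 - t) ^ n • D (q + t • d) fun _ => d‖
      ≤ (‖D q‖ + 1) * ‖d‖ ^ (n + 1) * |1 - 0| := by
    refine intervalIntegral.norm_integral_le_of_norm_le_const fun t ht => ?_
    rw [uIoc_of_le zero_le_one] at ht
    have hDt : ‖D (q + t • d)‖ ≤ ‖D q‖ + 1 := (hball _ (hseg t ⟨ht.1.le, ht.2⟩)).2.le
    have h1t : ‖(1 - t) ^ n‖ ≤ 1 := by
      rw [norm_pow, Real.norm_of_nonneg (by linarith [ht.2])]
      exact pow_le_one₀ (by linarith [ht.2]) (by linarith [ht.1])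
    have happ := (D (q + t • d)).le_of_opNorm_le hDt fun _ => d
    rw [Finset.prod_const, Finset.card_fin] at happ
    rw [norm_smul]
    exact (mul_le_of_le_one_left (norm_nonneg _) h1t).trans happ
  rw [map_add_eq_sum_add_integral_iteratedFDeriv fun t ht => (hball _ (hseg t ht)).1,
    add_sub_cancel_left, norm_smul, Real.norm_of_nonneg (by positivity), mul_assoc,
    Real.norm_of_nonneg (by positivity)]
  gcongr
  simpa using hint

theorem isBigO_taylor_one_remainder (hf : ContDiffAt ℝ 2 f q) :
    (fun d => f (q + d) - f q - fderiv ℝ f q d) =O[𝓝 0] fun d => ‖d‖ ^ 2 := by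
  have h := isBigO_taylor_remainder (n := 1) (by exact_mod_cast hf)
  simpa [Finset.sum_range_succ, sub_sub] using h

theorem isBigO_taylor_three_remainder (hf : ContDiffAt ℝ 4 f q) :
    (fun d => f (q + d) - f q - fderiv ℝ f q d - (1 / 2 : ℝ) • fderiv ℝ (fderiv ℝ f) q d d
      - (1 / 6 : ℝ) • iteratedFDeriv ℝ 3 f q fun _ => d) =O[𝓝 0] fun d => ‖d‖ ^ 4 := by
  have h := isBigO_taylor_remainder (n := 3) (by exact_mod_cast hf)
  simpa [Finset.sum_range_succ, iteratedFDeriv_two_apply, Nat.factorial, sub_sub] using h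

end Taylor

section StrictlyPlurisubharmonic

theorem exists_pos_le_add_mul_of_isCompact {X : Type*} [TopologicalSpace X] {K : Set X}
    (hK : IsCompact K) {a b : X → ℝ} (ha : Continuous a) (hb : Continuous b)
    (hb0 : ∀ x ∈ K, 0 ≤ b x) (hab : ∀ x ∈ K, b x = 0 → 0 < a x) :
    ∃ N c : ℝ, 0 < c ∧ ∀ x ∈ K, c ≤ a x + N * b x := by
  have hK' : IsCompact (K ∩ {x | a x ≤ 0}) := hK.inter_right (isClosed_le ha continuous_const)
  obtain ⟨β, hβ, hβb⟩ := hK'.exists_forall_le' (a := 0) hb.continuousOn fun x hx =>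
    (hb0 x hx.1).lt_of_ne fun h => (hab x hx.1 h.symm).not_ge hx.2
  obtain ⟨A, hA⟩ := hK.bddBelow_image ha.continuousOn
  set N := (|A| + 1) / β
  have hN : 0 ≤ N := by positivity
  have hNβ : N * β = |A| + 1 := div_mul_cancel₀ _ hβ.ne'
  have hpos : ∀ x ∈ K, 0 < a x + N * b x := fun x hx => by
    by_cases hax : a x ≤ 0
    · have hAx : A ≤ a x := hA (mem_image_of_mem a hx)
      have hNb : N * β ≤ N * b x := mul_le_mul_of_nonneg_left (hβb x ⟨hx, hax⟩) hN
      linarith [neg_abs_le A]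
    · linarith [mul_nonneg hN (hb0 x hx)]
  obtain ⟨c, hc, hcK⟩ := hK.exists_forall_le' (a := 0) (ha.add (hb.const_mul N)).continuousOn hpos
  exact ⟨N, c, hc, hcK⟩

variable {n : ℕ} {Ω : Set (En n)} {ρ σ : En n → ℝ} {p q : En n}

theorem leviForm_real_smul (ρ : En n → ℝ) (q : En n) (t : ℝ) (ξ : En n) :
    LeviForm ρ q (t • ξ) = t ^ 2 * LeviForm ρ q ξ := by
  simp only [LeviForm, iteratedFDeriv_two_apply, Matrix.cons_val_zero, Matrix.cons_val_one,
    smul_comm I t, map_smul, smul_apply, smul_eq_mul]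
  ring

theorem leviForm_comp (hρ : ContDiffAt ℝ 2 ρ q) {χ : ℝ → ℝ} (hχ : ContDiffAt ℝ 2 χ (ρ q))
    (ξ : En n) : LeviForm (fun z => χ (ρ z)) q ξ = deriv χ (ρ q) * LeviForm ρ q ξ +
      deriv (deriv χ) (ρ q) / 4 * (fderiv ℝ ρ q ξ ^ 2 + fderiv ℝ ρ q (I • ξ) ^ 2) := by
  simp [LeviForm, iteratedFDeriv_two_comp hχ hρ, iteratedFDeriv_apply_eq_iteratedDeriv_mul_prod,
    iteratedDeriv_eq_iterate, fderiv_eq_smul_deriv]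
  ring

theorem eventually_le_leviForm (hσ : ContDiffAt ℝ 2 σ p) {c c' : ℝ} (hc : c' < c)
    (hp : ∀ ξ, c * ‖ξ‖ ^ 2 ≤ LeviForm σ p ξ) :
    ∀ᶠ z in 𝓝 p, ∀ ξ, c' * ‖ξ‖ ^ 2 ≤ LeviForm σ z ξ := by
  set D := iteratedFDeriv ℝ 2 σ
  have hD : ∀ᶠ z in 𝓝 p, ‖D z - D p‖ < c - c' :=
    (tendsto_iff_norm_sub_tendsto_zero.1 (hσ.continuousAt_iteratedFDeriv (k := 2) le_rfl)
      ).eventually_lt_const (sub_pos.2 hc)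
  filter_upwards [hD] with z hz ξ
  have hdir : ∀ η : En n, ‖η‖ = ‖ξ‖ → |D z ![η, η] - D p ![η, η]| ≤ (c - c') * ‖ξ‖ ^ 2 := by
    intro η hη
    have := (D z - D p).le_of_opNorm_le hz.le ![η, η]
    simpa [Fin.prod_univ_two, hη, ← sq] using this
  have h1 := (abs_le.1 (hdir ξ rfl)).1
  have h2 := (abs_le.1 (hdir (I • ξ) (by rw [norm_smul, norm_I, one_mul]))).1
  have h3 := hp ξ
  simp only [LeviForm] at h3 ⊢
  nlinarith [sq_nonneg ‖ξ‖]

theorem IsDefiningFunction.eq_zero {m : ℕ∞} (hρ : IsDefiningFunction Ω m ρ)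
    (hp : p ∈ frontier Ω) : ρ p = 0 := by
  rwa [hρ.2.2.1] at hp

theorem StronglyPcxAt.exists_le_add_mul (h : StronglyPcxAt ρ p) : ∃ N c : ℝ, 0 < c ∧
    ∀ ξ, c * ‖ξ‖ ^ 2 ≤
      LeviForm ρ p ξ + N * (fderiv ℝ ρ p ξ ^ 2 + fderiv ℝ ρ p (I • ξ) ^ 2) := by
  have hcont : Continuous (LeviForm ρ p) := by
    unfold LeviForm
    fun_prop
  obtain ⟨N, c, hc, hN⟩ := exists_pos_le_add_mul_of_isCompact (isCompact_sphere (0 : En n) 1)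
    (a := LeviForm ρ p) (b := fun ξ => fderiv ℝ ρ p ξ ^ 2 + fderiv ℝ ρ p (I • ξ) ^ 2)
    hcont (by fun_prop) (fun ξ _ => by positivity) fun ξ hξ hb => by
      rw [add_eq_zero_iff_of_nonneg (sq_nonneg _) (sq_nonneg _), sq_eq_zero_iff,
        sq_eq_zero_iff] at hb
      exact h ξ (ne_zero_of_mem_unit_sphere ⟨ξ, hξ⟩) hb
  refine ⟨N, c, hc, fun ξ => ?_⟩
  rcases eq_or_ne ξ 0 with rfl | hξ
  · simp [LeviForm, iteratedFDeriv_two_apply]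
  have hu := hN (‖ξ‖⁻¹ • ξ) (by simp [norm_smul, hξ])
  simp only [leviForm_real_smul, smul_comm I (‖ξ‖⁻¹), map_smul, smul_eq_mul] at hu
  have hξ' : 0 < ‖ξ‖ := norm_pos_iff.2 hξ
  have hscale := mul_le_mul_of_nonneg_right hu (sq_nonneg ‖ξ‖)
  field_simp at hscale
  linarith

theorem exists_strictly_psh_defining (hρ : IsDefiningFunction Ω 4 ρ) (hp : p ∈ frontier Ω)
    (hspc : StronglyPcxAt ρ p) :
    ∃ σ : En n → ℝ, ContDiff ℝ 4 σ ∧ σ p = 0 ∧ fderiv ℝ σ p ≠ 0 ∧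
      (∀ᶠ z in 𝓝 p, z ∈ Ω ↔ σ z < 0) ∧
      ∃ c > 0, ∀ᶠ z in 𝓝 p, ∀ ξ, c * ‖ξ‖ ^ 2 ≤ LeviForm σ z ξ := by
  obtain ⟨N, c, hc, hN⟩ := hspc.exists_le_add_mul
  have hρp := hρ.eq_zero hp
  have hρ4 : ContDiff ℝ 4 ρ := hρ.1
  -- at a zero of `ρ`, the term in `ρ ^ 2` only adds a multiple of the squared norm of `∂ρ`
  set χ : ℝ → ℝ := fun t => t + 2 * N * t ^ 2
  have hχ : ContDiff ℝ 4 χ := by fun_prop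
  have hχ' : deriv χ = fun t => 1 + 4 * N * t := by
    funext t
    have : HasDerivAt χ (1 + 2 * N * (2 * t ^ 1)) t :=
      (hasDerivAt_id t).add ((hasDerivAt_pow 2 t).const_mul _)
    exact this.deriv.trans (by ring)
  have hχ'' : deriv (deriv χ) 0 = 4 * N := by simp [hχ']
  have hσ : ContDiff ℝ 4 fun z => χ (ρ z) := hχ.comp hρ4
  have hρ2 : ContDiffAt ℝ 2 ρ p := hρ4.contDiffAt.of_le (by norm_num)
  refine ⟨fun z => χ (ρ z), hσ, by simp [χ, hρp], ?_, ?_, c / 2, half_pos hc, ?_⟩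
  · have hchain : HasFDerivAt (fun z => χ (ρ z)) (deriv χ (ρ p) • fderiv ℝ ρ p) p :=
      (hχ.differentiable (by norm_num) _).hasDerivAt.comp_hasFDerivAt p
        (hρ2.differentiableAt two_ne_zero).hasFDerivAt
    rw [hchain.fderiv]
    simpa [hχ', hρp] using hρ.2.2.2 p hp
  · have hcont : ContinuousAt (fun z => 1 + 2 * N * ρ z) p :=
      (continuous_const.add (hρ4.continuous.const_mul _)).continuousAt
    filter_upwards [hcont.eventually_const_lt (u := 0) (by simp [hρp])] with z hz
    rw [hρ.2.1, show χ (ρ z) = ρ z * (1 + 2 * N * ρ z) by ring]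
    simp [mul_neg_iff, hz, not_lt_of_gt hz]
  · refine eventually_le_leviForm (hσ.contDiffAt.of_le (by norm_num)) (half_lt_self hc) fun ξ => ?_
    rw [leviForm_comp hρ2 (hχ.contDiffAt.of_le (by norm_num)), hρp, hχ'', hχ']
    simpa using hN ξ

end StrictlyPlurisubharmonic

section NormalForm

variable {E F : Type*} [NormedAddCommGroup E] [NormedSpace ℂ E] [NormedAddCommGroup F]
  [NormedSpace ℂ F]

/-- The complex linear part `z ↦ (L z - i L (i z)) / 2` of a real linear map `L`. -/
def complexLinearPart (L : E →L[ℝ] F) : E →L[ℂ] F where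
  toFun z := (1 / 2 : ℂ) • (L z - I • L (I • z))
  map_add' z w := by
    simp only [smul_add, map_add]
    module
  map_smul' c z := by
    have hc : ∀ w : E, L (c • w) = c.re • L w + c.im • L (I • w) := fun w => by
      rw [← map_smul, ← map_smul, ← map_add]
      congr 1
      conv_lhs => rw [← re_add_im c, add_smul, mul_smul]
      rfl
    rw [smul_comm I c, hc, hc, smul_smul I I, I_mul_I, neg_one_smul, map_neg, RingHom.id_apply]
    conv_rhs => rw [← re_add_im c]
    simp only [← Complex.coe_smul]
    match_scalars
    · ring
    · linear_combination (c.im / 2 : ℂ) * I_mul_I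
  cont := by fun_prop

/-- The complex bilinear form `B` such that `g ↦ Re B(g, g)` is the part of the real quadratic form
`H(g, g) / 2` which is not seen by the Levi form. -/
def complexBilinearPart (H : E →L[ℝ] E →L[ℝ] ℝ) : E →L[ℂ] E →L[ℂ] ℂ :=
  (1 / 2 : ℂ) • complexLinearPart
    ((StrongDual.extendRCLikeL (𝕜 := ℂ) (F := E)).toContinuousLinearMap ∘L H)

theorem re_complexBilinearPart_self (H : E →L[ℝ] E →L[ℝ] ℝ) (g : E) :
    (complexBilinearPart H g g).re = 1 / 4 * (H g g - H (I • g) (I • g)) := by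
  simp [complexBilinearPart, complexLinearPart, StrongDual.extendRCLikeL_apply,
    StrongDual.extendRCLike_apply]
  ring

/-- The holomorphic polynomial `ℓ + …` of degree three whose real part, near the origin, is
approximately minus a real function with derivative `-Re ℓ`, second derivative `H` and third
derivative `6 * τ` in the direction `I • v`, up to the Levi form of `H` in the directions
`d - ℓ d • v`. -/
def normalForm (ℓ : E →L[ℂ] ℂ) (H : E →L[ℝ] E →L[ℝ] ℝ) (τ : ℝ) (v d : E) : ℂ :=
  ℓ d - complexBilinearPart H (d - ℓ d • v) (d - ℓ d • v)
    + I * ℓ d * StrongDual.extendRCLike (𝕜 := ℂ) (H (I • v)) (d - ℓ d • v)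
    + ((H (I • v) (I • v) : ℂ) + I * H v (I • v)) / 2 * ℓ d ^ 2 - I * τ * ℓ d ^ 3

variable (ℓ : E →L[ℂ] ℂ) (H : E →L[ℝ] E →L[ℝ] ℝ) (τ : ℝ) (v : E)

theorem contDiff_normalForm : ContDiff ℂ 1 (normalForm ℓ H τ v) := by
  unfold normalForm
  fun_prop

theorem re_normalForm (d : E) : (normalForm ℓ H τ v d).re =
    (ℓ d).re - 1 / 4 * (H (d - ℓ d • v) (d - ℓ d • v)
      - H (I • (d - ℓ d • v)) (I • (d - ℓ d • v)))
    + ((ℓ d).re * H (I • v) (I • (d - ℓ d • v)) - (ℓ d).im * H (I • v) (d - ℓ d • v))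
    + 1 / 2 * H (I • v) (I • v) * ((ℓ d).re ^ 2 - (ℓ d).im ^ 2)
    - (ℓ d).re * (ℓ d).im * H v (I • v)
    + τ * (3 * (ℓ d).re ^ 2 * (ℓ d).im - (ℓ d).im ^ 3) := by
  simp only [normalForm, sub_re, add_re, re_complexBilinearPart_self, mul_re, mul_im, I_re, I_im,
    div_ofNat_re, div_ofNat_im, add_im, ofReal_re, ofReal_im, pow_succ, pow_zero, one_mul,
    StrongDual.extendRCLike_apply, sub_im]
  simp
  ring

theorem isBigO_sub_apply_smul : (fun d => d - ℓ d • v) =O[𝓝 0] fun d => ‖d‖ :=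
  ((ContinuousLinearMap.id ℂ E - ℓ.smulRight v).isBigO_id (𝓝 0)).norm_right

theorem isBigO_normalForm_sub : (fun d => normalForm ℓ H τ v d - ℓ d) =O[𝓝 0] fun d => ‖d‖ ^ 2 := by
  have hℓ : (fun d => ℓ d) =O[𝓝 0] fun d => ‖d‖ := (ℓ.isBigO_id _).norm_right
  have hg := isBigO_sub_apply_smul ℓ v
  have hquad : (fun d => complexBilinearPart H (d - ℓ d • v) (d - ℓ d • v)) =O[𝓝 0]
      fun d => ‖d‖ ^ 2 := by
    simpa only [sq] using ((complexBilinearPart H).isBoundedBilinearMap.isBigO_comp).trans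
      (hg.norm_left.mul hg.norm_left)
  have hmixed : (fun d => I * ℓ d * StrongDual.extendRCLike (𝕜 := ℂ) (H (I • v)) (d - ℓ d • v))
      =O[𝓝 0] fun d => ‖d‖ ^ 2 := by
    simpa only [sq] using (hℓ.const_mul_left I).mul
      ((ContinuousLinearMap.isBigO_comp _ _ _).trans hg)
  have hcube : (fun d => ℓ d ^ 3) =O[𝓝 0] fun d => ‖d‖ ^ 2 :=
    (hℓ.pow 3).trans (Asymptotics.isLittleO_norm_pow_norm_pow (by norm_num)).isBigO
  refine (((hquad.neg_left.add hmixed).add ((hℓ.pow 2).const_mul_left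
    (((H (I • v) (I • v) : ℂ) + I * H v (I • v)) / 2))).sub
    (hcube.const_mul_left (I * τ))).congr_left fun d => ?_
  rw [normalForm]
  ring

theorem eq_re_smul_add_im_smul_add (d : E) :
    d = (ℓ d).re • v + (ℓ d).im • I • v + (d - ℓ d • v) := by
  conv_rhs => enter [2, 2, 1]; rw [← re_add_im (ℓ d)]
  simp only [add_smul, mul_smul, Complex.coe_smul]
  abel

theorem re_normalForm_add (hH : ∀ d e, H d e = H e d) (d : E) :
    (normalForm ℓ H τ v d).re + (1 / 2 * H d d - (ℓ d).re) =
      1 / 4 * (H (d - ℓ d • v) (d - ℓ d • v) + H (I • (d - ℓ d • v)) (I • (d - ℓ d • v)))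
      + (ℓ d).re * (H v (d - ℓ d • v) + H (I • v) (I • (d - ℓ d • v)))
      + 1 / 2 * (ℓ d).re ^ 2 * (H v v + H (I • v) (I • v))
      + τ * (3 * (ℓ d).re ^ 2 * (ℓ d).im - (ℓ d).im ^ 3) := by
  have hHd : H d d = H ((ℓ d).re • v + (ℓ d).im • I • v + (d - ℓ d • v))
      ((ℓ d).re • v + (ℓ d).im • I • v + (d - ℓ d • v)) := by
    rw [← eq_re_smul_add_im_smul_add]
  rw [hHd, re_normalForm]
  generalize d - ℓ d • v = g
  simp only [map_add, map_smul, add_apply, smul_apply,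
    smul_eq_mul, hH g v, hH g (I • v), hH (I • v) v]
  ring

theorem isBigO_multilinear_sub {α G : Type*} [NormedAddCommGroup G] [NormedSpace ℝ G]
    {l : Filter α} {k : ℕ} (T : ContinuousMultilinearMap ℝ (fun _ : Fin k => E) G) {a b : α → E}
    {N : α → ℝ} (ha : a =O[l] N) (hb : b =O[l] N) :
    (fun i => T (fun _ => a i) - T (fun _ => b i)) =O[l] fun i => N i ^ (k - 1) * ‖a i - b i‖ := by
  have hmax : (fun i => max ‖a i‖ ‖b i‖) =O[l] N :=
    (Asymptotics.IsBigO.of_norm_le fun i => by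
      rw [Real.norm_of_nonneg (by positivity)]
      exact max_le_add_of_nonneg (norm_nonneg _) (norm_nonneg _)).trans
      (ha.norm_left.add hb.norm_left)
  refine (Asymptotics.IsBigO.of_bound (‖T‖ * k) (Eventually.of_forall fun i => ?_)).trans
    ((hmax.pow (k - 1)).mul (Asymptotics.isBigO_refl (fun i => ‖a i - b i‖) l))
  refine (T.norm_image_sub_le _ _).trans ?_
  rw [Fintype.card_fin, Real.norm_of_nonneg (by positivity), ← mul_assoc]
  gcongr
  exacts [pi_norm_const_le (a i), pi_norm_const_le (b i), pi_norm_const_le (a i - b i)]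

/-- The size of the error in the approximation of `s` by the real part of the normal form. -/
def normalFormError (ℓ : E →L[ℂ] ℂ) (v : E) (s : E → ℝ) (d : E) : ℝ :=
  |s d| * ‖d‖ + ‖d - ℓ d • v‖ * ‖d‖ ^ 2 + ‖d‖ ^ 4

variable {ℓ v} {s : E → ℝ}

theorem isBigO_mul_norm_normalFormError :
    (fun d => s d * ‖d‖) =O[𝓝 0] normalFormError ℓ v s :=
  .of_norm_le fun d => by
    rw [normalFormError, norm_mul, norm_norm, Real.norm_eq_abs]
    exact le_add_of_le_of_nonneg (le_add_of_nonneg_right (by positivity)) (by positivity)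

theorem isBigO_sq_mul_norm_normalFormError :
    (fun d => ‖d‖ ^ 2 * ‖d - ℓ d • v‖) =O[𝓝 0] normalFormError ℓ v s :=
  .of_norm_le fun d => by
    rw [normalFormError, Real.norm_of_nonneg (by positivity), mul_comm]
    exact le_add_of_le_of_nonneg (le_add_of_nonneg_left (by positivity)) (by positivity)

theorem isBigO_pow_four_normalFormError :
    (fun d => ‖d‖ ^ 4) =O[𝓝 0] normalFormError ℓ v s :=
  .of_norm_le fun d => by
    rw [normalFormError, Real.norm_of_nonneg (by positivity)]
    exact le_add_of_nonneg_left (by positivity)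

theorem isBigO_re_mul_normalFormError {h : E → ℝ}
    (hs : (fun d => s d - (ℓ d).re) =O[𝓝 0] fun d => ‖d‖ ^ 2) (hh : h =O[𝓝 0] fun d => ‖d‖)
    (hNh : (fun d => ‖d‖ ^ 2 * h d) =O[𝓝 0] normalFormError ℓ v s) :
    (fun d => (ℓ d).re * h d) =O[𝓝 0] normalFormError ℓ v s :=
  ((((Asymptotics.isBigO_refl s _).mul hh).trans isBigO_mul_norm_normalFormError).sub
    ((hs.mul (Asymptotics.isBigO_refl h _)).trans hNh)).congr_left fun d => by ring

theorem isBigO_re_mul_sq_normalFormError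
    (hs : (fun d => s d - (ℓ d).re) =O[𝓝 0] fun d => ‖d‖ ^ 2) :
    (fun d => (ℓ d).re * ‖d‖ ^ 2) =O[𝓝 0] normalFormError ℓ v s := by
  refine isBigO_re_mul_normalFormError hs ?_ ?_
  · simpa using (Asymptotics.isLittleO_norm_pow_norm_pow (E' := E) one_lt_two).isBigO
  · exact isBigO_pow_four_normalFormError.congr_left fun d => by ring

theorem isBigO_re_apply : (fun d => (ℓ d).re) =O[𝓝 0] fun d => ‖d‖ :=
  ((reCLM ∘L ℓ.restrictScalars ℝ).isBigO_id _).norm_right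

theorem isBigO_im_apply : (fun d => (ℓ d).im) =O[𝓝 0] fun d => ‖d‖ :=
  ((imCLM ∘L ℓ.restrictScalars ℝ).isBigO_id _).norm_right

theorem isBigO_re_sq_normalFormError
    (hs : (fun d => s d - (ℓ d).re) =O[𝓝 0] fun d => ‖d‖ ^ 2) :
    (fun d => (ℓ d).re * (ℓ d).re) =O[𝓝 0] normalFormError ℓ v s :=
  isBigO_re_mul_normalFormError hs isBigO_re_apply
    ((isBigO_re_mul_sq_normalFormError hs).congr_left fun _ => mul_comm _ _)

theorem isBigO_trilinear_sub_normalFormError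
    (hs : (fun d => s d - (ℓ d).re) =O[𝓝 0] fun d => ‖d‖ ^ 2)
    (T : ContinuousMultilinearMap ℝ (fun _ : Fin 3 => E) ℝ) :
    (fun d => T (fun _ => d) - (ℓ d).im ^ 3 * T (fun _ => I • v)) =O[𝓝 0]
      normalFormError ℓ v s := by
  have him : (fun d => (ℓ d).im • I • v) =O[𝓝 0] fun d => ‖d‖ :=
    (((imCLM ∘L ℓ.restrictScalars ℝ).smulRight (I • v)).isBigO_id (𝓝 0)).norm_right
  have hsub : (fun d => ‖d‖ ^ 2 * ‖d - (ℓ d).im • I • v‖) =O[𝓝 0] normalFormError ℓ v s := by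
    refine Asymptotics.IsBigO.trans (.of_norm_le fun d => ?_)
      (((isBigO_re_mul_sq_normalFormError hs).norm_left.const_mul_left ‖v‖).add
        isBigO_sq_mul_norm_normalFormError)
    have hd : d - (ℓ d).im • I • v = (ℓ d).re • v + (d - ℓ d • v) := by
      conv_lhs => enter [1]; rw [eq_re_smul_add_im_smul_add ℓ v d]
      abel
    rw [hd, Real.norm_of_nonneg (by positivity), norm_mul, Real.norm_of_nonneg (sq_nonneg ‖d‖)]
    calc ‖d‖ ^ 2 * ‖(ℓ d).re • v + (d - ℓ d • v)‖
        ≤ ‖d‖ ^ 2 * (‖(ℓ d).re‖ * ‖v‖ + ‖d - ℓ d • v‖) := by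
          gcongr
          exact (norm_add_le _ _).trans_eq (by rw [norm_smul])
      _ = _ := by ring
  refine ((isBigO_multilinear_sub T (Asymptotics.isBigO_refl _ _).norm_right him).trans
    hsub).congr_left fun d => ?_
  rw [T.map_smul_univ (fun _ => (ℓ d).im) fun _ => I • v]
  simp

theorem isBigO_neg_sub_re {σ : E → ℝ} {p : E} (hσ : ContDiffAt ℝ 2 σ p) (hσp : σ p = 0)
    (hℓ : ∀ d, fderiv ℝ σ p d = -(ℓ d).re) :
    (fun d => -σ (p + d) - (ℓ d).re) =O[𝓝 0] fun d => ‖d‖ ^ 2 :=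
  (isBigO_taylor_one_remainder hσ).neg_left.congr_left fun d => by rw [hσp, hℓ]; ring

theorem isBigO_re_normalForm_sub {σ : E → ℝ} {p : E} (hσ : ContDiffAt ℝ 4 σ p) (hσp : σ p = 0)
    (hℓ : ∀ d, fderiv ℝ σ p d = -(ℓ d).re) (v : E) :
    (fun d => (normalForm ℓ (fderiv ℝ (fderiv ℝ σ) p)
        (1 / 6 * iteratedFDeriv ℝ 3 σ p fun _ => I • v) v d).re - -σ (p + d)
      - 1 / 4 * (fderiv ℝ (fderiv ℝ σ) p (d - ℓ d • v) (d - ℓ d • v)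
        + fderiv ℝ (fderiv ℝ σ) p (I • (d - ℓ d • v)) (I • (d - ℓ d • v)))) =O[𝓝 0]
      normalFormError ℓ v fun d => -σ (p + d) := by
  set H := fderiv ℝ (fderiv ℝ σ) p
  set T := iteratedFDeriv ℝ 3 σ p
  have hsymm : ∀ d e, H d e = H e d :=
    hσ.isSymmSndFDerivAt (by rw [minSmoothness_of_isRCLikeNormedField]; norm_num)
  have hs := isBigO_neg_sub_re (hσ.of_le (by norm_num)) hσp hℓ
  have hsq := isBigO_re_sq_normalFormError (v := v) hs
  have hcross : (fun d => (ℓ d).re * (H v (d - ℓ d • v) + H (I • v) (I • (d - ℓ d • v))))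
      =O[𝓝 0] normalFormError ℓ v fun d => -σ (p + d) := by
    have hlin := (H v + H (I • v) ∘L (I • ContinuousLinearMap.id ℂ E).restrictScalars ℝ).isBigO_comp
      (fun d => d - ℓ d • v) (𝓝 0)
    refine isBigO_re_mul_normalFormError hs (hlin.trans (isBigO_sub_apply_smul ℓ v)) ?_
    exact ((Asymptotics.isBigO_refl (fun d => ‖d‖ ^ 2) _).mul hlin.norm_right).trans
      isBigO_sq_mul_norm_normalFormError
  have hcubic : (fun d => (ℓ d).re * (ℓ d).re * (ℓ d).im) =O[𝓝 0]
      normalFormError ℓ v fun d => -σ (p + d) := by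
    have him := ((imCLM.continuous.comp ℓ.continuous).continuousAt (x := 0)).isBigO_one ℝ
    simpa using hsq.mul him
  refine ((((((isBigO_taylor_three_remainder hσ).trans isBigO_pow_four_normalFormError).add
    ((isBigO_trilinear_sub_normalFormError hs T).const_mul_left (1 / 6))).add hcross).add
    (hsq.const_mul_left (1 / 2 * (H v v + H (I • v) (I • v))))).add
    (hcubic.const_mul_left (1 / 2 * T fun _ => I • v))).congr_left fun d => ?_
  have hid := re_normalForm_add ℓ H (1 / 6 * T fun _ => I • v) v hsymm d
  rw [hσp, hℓ, smul_eq_mul, smul_eq_mul]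
  linear_combination -hid

theorem re_pow_four (ζ : ℂ) : (ζ ^ 4).re = ‖ζ‖ ^ 4 - 8 * ζ.re ^ 2 * ζ.im ^ 2 := by
  have h : ‖ζ‖ ^ 2 = ζ.re ^ 2 + ζ.im ^ 2 := by
    rw [← normSq_eq_norm_sq, normSq_apply]; ring
  rw [show ‖ζ‖ ^ 4 = (ζ.re ^ 2 + ζ.im ^ 2) ^ 2 by rw [← h]; ring]
  simp only [pow_succ, pow_zero, one_mul, mul_re, mul_im]
  ring

theorem isLittleO_re_sq_mul_im_sq (hs : (fun d => s d - (ℓ d).re) =O[𝓝 0] fun d => ‖d‖ ^ 2) :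
    (fun d => (ℓ d).re ^ 2 * (ℓ d).im ^ 2) =o[𝓝 0] fun d => |s d| + ‖d‖ ^ 4 := by
  have hre : Tendsto (fun d => (ℓ d).re) (𝓝 0) (𝓝 0) :=
    isBigO_re_apply.trans_tendsto tendsto_norm_zero
  have him : Tendsto (fun d => (ℓ d).im) (𝓝 0) (𝓝 0) :=
    isBigO_im_apply.trans_tendsto tendsto_norm_zero
  have hmain : (fun d => (ℓ d).re * (ℓ d).im ^ 2 * s d) =o[𝓝 0] fun d => |s d| + ‖d‖ ^ 4 := by
    have : (fun d => (ℓ d).re * (ℓ d).im ^ 2) =o[𝓝 0] fun _ => (1 : ℝ) :=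
      (Asymptotics.isLittleO_one_iff ℝ).2 (by simpa using hre.mul (him.pow 2))
    refine (this.mul_isBigO (Asymptotics.isBigO_refl s _)).trans_isBigO (.of_norm_le fun d => ?_)
    rw [one_mul, Real.norm_eq_abs]
    exact le_add_of_nonneg_right (by positivity)
  have hrem : (fun d => (ℓ d).re * (ℓ d).im ^ 2 * (s d - (ℓ d).re)) =o[𝓝 0]
      fun d => |s d| + ‖d‖ ^ 4 := by
    refine ((((Asymptotics.isLittleO_one_iff ℝ).2 hre).mul_isBigO
      (isBigO_im_apply.pow 2)).mul_isBigO hs).trans_isBigO (.of_norm_le fun d => ?_)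
    rw [one_mul, Real.norm_of_nonneg (by positivity), ← pow_add]
    exact le_add_of_nonneg_left (abs_nonneg _)
  exact (hmain.sub hrem).congr_left fun d => by ring

theorem norm_pow_four_le (ℓ : E →L[ℂ] ℂ) (v d : E) :
    ‖d‖ ^ 4 ≤ 8 * (1 + ‖v‖) ^ 4 * (‖ℓ d‖ ^ 4 + ‖d - ℓ d • v‖ ^ 4) := by
  have hle : ‖d‖ ≤ (1 + ‖v‖) * (‖ℓ d‖ + ‖d - ℓ d • v‖) := by
    have h := norm_add_le (d - ℓ d • v) (ℓ d • v)
    rw [sub_add_cancel, norm_smul] at h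
    have : 0 ≤ ‖ℓ d‖ + ‖v‖ * ‖d - ℓ d • v‖ := by positivity
    linarith
  calc ‖d‖ ^ 4 ≤ (1 + ‖v‖) ^ 4 * (‖ℓ d‖ + ‖d - ℓ d • v‖) ^ 4 := by rw [← mul_pow]; gcongr
    _ ≤ (1 + ‖v‖) ^ 4 * (2 ^ (4 - 1) * (‖ℓ d‖ ^ 4 + ‖d - ℓ d • v‖ ^ 4)) := by
      gcongr
      exact add_pow_le (norm_nonneg _) (norm_nonneg _) 4
    _ = _ := by ring

theorem exists_quartic_le (hs : (fun d => s d - (ℓ d).re) =O[𝓝 0] fun d => ‖d‖ ^ 2) (v : E)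
    {A c : ℝ} (hA : 0 ≤ A) (hc : 0 < c) :
    ∃ M > 0, ∀ᶠ d in 𝓝 0, 0 < s d →
      A * ‖d‖ ^ 4 ≤ s d / 4 + c * ‖d - ℓ d • v‖ ^ 2 + M * (ℓ d ^ 4).re := by
  set K := 8 * (1 + ‖v‖) ^ 4
  have : 0 < K := by positivity
  set M := K * (A + 1 / 4)
  have hM : 0 < M := by positivity
  refine ⟨M, hM, ?_⟩
  have hg : (fun d => ‖d - ℓ d • v‖ ^ 4) =o[𝓝 0] fun d => ‖d - ℓ d • v‖ ^ 2 :=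
    (Asymptotics.isLittleO_norm_pow_norm_pow (by norm_num)).comp_tendsto
      ((continuous_id.sub (ℓ.continuous.smul continuous_const)).tendsto' _ _ (by simp))
  filter_upwards [(isLittleO_re_sq_mul_im_sq hs).def (c := 1 / (32 * M)) (by positivity),
    hg.def (c := c / M) (by positivity)] with d hcross hγ hsd
  rw [Real.norm_of_nonneg (by positivity), Real.norm_of_nonneg (by positivity), abs_of_pos hsd,
    div_mul_eq_mul_div, le_div_iff₀ (by positivity)] at hcross
  rw [Real.norm_of_nonneg (by positivity), Real.norm_of_nonneg (by positivity),
    div_mul_eq_mul_div, le_div_iff₀ hM] at hγ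
  have hN : (A + 1 / 4) * ‖d‖ ^ 4 ≤ M * (‖ℓ d‖ ^ 4 + ‖d - ℓ d • v‖ ^ 4) :=
    (mul_le_mul_of_nonneg_left (norm_pow_four_le ℓ v d) (by positivity)).trans_eq (by ring)
  rw [re_pow_four]
  linarith

theorem exists_quartic_correction {φ L : E → ℝ} {c : ℝ} (hc : 0 < c)
    (hs : (fun d => s d - (ℓ d).re) =O[𝓝 0] fun d => ‖d‖ ^ 2)
    (hφ : (fun d => φ d - s d - L d) =O[𝓝 0] normalFormError ℓ v s) :
    ∃ M > 0, ∀ᶠ d in 𝓝 0, 0 < s d →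
      (c * ‖d - ℓ d • v‖ ^ 2 ≤ L d →
        s d / 4 + c / 2 * ‖d - ℓ d • v‖ ^ 2 ≤ φ d + M * (ℓ d ^ 4).re) ∧
      (d = ℓ d • v → L d = 0 → φ d - M * (ℓ d ^ 4).re ≤ 3 * s d) := by
  obtain ⟨C, hC, hφC⟩ := hφ.exists_pos
  obtain ⟨M, hM, hquartic⟩ := exists_quartic_le hs v (A := C + C ^ 2 / c) (c := c / 4)
    (by positivity) (by positivity)
  refine ⟨M, hM, ?_⟩
  have hsmall : ∀ᶠ d : E in 𝓝 0, C * ‖d‖ ≤ 1 / 4 :=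
    (Continuous.tendsto' (by fun_prop) (0 : E) 0 (by simp)).eventually_le_const (by norm_num)
  filter_upwards [hφC.bound, hquartic, hsmall] with d herr hquart hd hsd
  have hquart := hquart hsd
  have hsN := mul_le_mul_of_nonneg_right hd hsd.le
  have hCN : 0 ≤ C ^ 2 / c * ‖d‖ ^ 4 := by positivity
  rw [normalFormError, abs_of_pos hsd, Real.norm_eq_abs, Real.norm_of_nonneg (by positivity),
    abs_le] at herr
  refine ⟨fun hL => ?_, fun hd0 hL => ?_⟩
  · have hamgm : C * (‖d - ℓ d • v‖ * ‖d‖ ^ 2) ≤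
        c / 4 * ‖d - ℓ d • v‖ ^ 2 + C ^ 2 / c * ‖d‖ ^ 4 := by
      have : 0 ≤ c / 4 * (‖d - ℓ d • v‖ - 2 * C / c * ‖d‖ ^ 2) ^ 2 := by positivity
      have hexp : c / 4 * (‖d - ℓ d • v‖ - 2 * C / c * ‖d‖ ^ 2) ^ 2 =
          c / 4 * ‖d - ℓ d • v‖ ^ 2 + C ^ 2 / c * ‖d‖ ^ 4 - C * (‖d - ℓ d • v‖ * ‖d‖ ^ 2) := by
        field_simp; ring
      linarith
    linarith
  · rw [sub_eq_zero.2 hd0, norm_zero] at herr hquart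
    linarith

/-- The sign in front of the quartic term decides whether the real part is a lower or, along the
line `ℂ v`, an upper bound. -/
theorem exists_holomorphic_model {σ : E → ℝ} {p : E} (hσ : ContDiffAt ℝ 4 σ p) (hσp : σ p = 0)
    (hℓ : ∀ d, fderiv ℝ σ p d = -(ℓ d).re) (v : E) {c : ℝ} (hc : 0 < c)
    (hlevi : ∀ ξ, c * ‖ξ‖ ^ 2 ≤ 1 / 4 * (fderiv ℝ (fderiv ℝ σ) p ξ ξ
      + fderiv ℝ (fderiv ℝ σ) p (I • ξ) (I • ξ))) :
    ∃ h h' : E → ℂ, ContDiff ℂ 1 h ∧ ContDiff ℂ 1 h' ∧ h 0 = 0 ∧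
      (fun d => h d - ℓ d) =O[𝓝 0] (fun d => ‖d‖ ^ 2) ∧
      (fun d => h' d - ℓ d) =O[𝓝 0] (fun d => ‖d‖ ^ 2) ∧
      (fun d => h d - h' d) =O[𝓝 0] (fun d => ‖d‖ ^ 4) ∧
      ∀ᶠ d in 𝓝 0, σ (p + d) < 0 →
        -σ (p + d) / 4 + c / 2 * ‖d - ℓ d • v‖ ^ 2 ≤ (h d).re ∧
        (d = ℓ d • v → (h' d).re ≤ 3 * -σ (p + d)) := by
  set N := normalForm ℓ (fderiv ℝ (fderiv ℝ σ) p) (1 / 6 * iteratedFDeriv ℝ 3 σ p fun _ => I • v) v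
  have hN : ContDiff ℂ 1 N := contDiff_normalForm ..
  have hNℓ : (fun d => N d - ℓ d) =O[𝓝 0] fun d => ‖d‖ ^ 2 := isBigO_normalForm_sub ..
  obtain ⟨M, -, hbound⟩ := exists_quartic_correction hc
    (isBigO_neg_sub_re (hσ.of_le (by norm_num)) hσp hℓ) (isBigO_re_normalForm_sub hσ hσp hℓ v)
  have hquart : ∀ μ : ℂ, (fun d => μ * ℓ d ^ 4) =O[𝓝 0] fun d => ‖d‖ ^ 4 := fun μ =>
    ((ℓ.isBigO_id _).norm_right.pow 4).const_mul_left μ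
  have hsub : ∀ μ : ℂ, (fun d => N d + μ * ℓ d ^ 4 - ℓ d) =O[𝓝 0] fun d => ‖d‖ ^ 2 := fun μ =>
    (hNℓ.add ((hquart μ).trans
      (Asymptotics.isLittleO_norm_pow_norm_pow (by norm_num)).isBigO)).congr_left fun d => by ring
  refine ⟨fun d => N d + M * ℓ d ^ 4, fun d => N d + (-M : ℂ) * ℓ d ^ 4, by fun_prop, by fun_prop,
    by simp [N, normalForm], hsub _, hsub _, (hquart (2 * M)).congr_left fun d => by ring, ?_⟩
  filter_upwards [hbound] with d hd hσd
  obtain ⟨hlower, hupper⟩ := hd (neg_pos.2 hσd)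
  refine ⟨?_, fun hdv => ?_⟩
  · simpa only [add_re, re_ofReal_mul] using hlower (hlevi _)
  · rw [← ofReal_neg, add_re, re_ofReal_mul, neg_mul, ← sub_eq_add_neg]
    exact hupper hdv (by rw [sub_eq_zero.2 hdv]; simp)

theorem hasStrictFDerivAt_of_isBigO {h : E → F} {L : E →L[ℂ] F} (hh : ContDiffAt ℂ 1 h 0)
    (h0 : h 0 = 0) (hL : (fun d => h d - L d) =O[𝓝 0] fun d => ‖d‖ ^ 2) :
    HasStrictFDerivAt h L 0 := by
  have hd : HasFDerivAt h L 0 := by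
    rw [hasFDerivAt_iff_isLittleO_nhds_zero]
    simpa [h0] using hL.trans_isLittleO (Asymptotics.isLittleO_norm_pow_id one_lt_two)
  simpa [hd.fderiv] using hh.hasStrictFDerivAt (by norm_num)

theorem isBigO_sub_of_hasStrictFDerivAt {h : E → ℂ} {p : E} (hh : HasStrictFDerivAt h ℓ p) (v : E) :
    (fun z : E × E => z.1 - z.2) =O[𝓝 (p, p)]
      fun z => ‖z.1 - z.2 - ℓ (z.1 - z.2) • v‖ + ‖h z.1 - h z.2‖ := by
  have hsmul : (fun z : E × E => (h z.1 - h z.2 - ℓ (z.1 - z.2)) • v) =o[𝓝 (p, p)]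
      fun z : E × E => z.1 - z.2 :=
    (((ContinuousLinearMap.id ℂ ℂ).smulRight v).isBigO_comp _ _).trans_isLittleO hh.isLittleO
  refine hsmul.right_isBigO_add.trans (.of_bound (1 + ‖v‖) (Eventually.of_forall fun z => ?_))
  rw [Real.norm_of_nonneg (by positivity)]
  calc ‖(h z.1 - h z.2 - ℓ (z.1 - z.2)) • v + (z.1 - z.2)‖
      = ‖(z.1 - z.2 - ℓ (z.1 - z.2) • v) + (h z.1 - h z.2) • v‖ := by congr 1; module
    _ ≤ ‖z.1 - z.2 - ℓ (z.1 - z.2) • v‖ + ‖h z.1 - h z.2‖ * ‖v‖ :=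
      (norm_add_le _ _).trans_eq (by rw [norm_smul])
    _ ≤ _ := by
      have : 0 ≤ ‖z.1 - z.2 - ℓ (z.1 - z.2) • v‖ * ‖v‖ + ‖h z.1 - h z.2‖ := by positivity
      linarith

end NormalForm

theorem norm_lt_two_mul_of_norm_sub_lt {a : ℝ} {ζ : ℂ} (h : ‖ζ - a‖ < a) : ‖ζ‖ < 2 * a := by
  have ha : ‖(a : ℂ)‖ = a := by rw [norm_real, Real.norm_of_nonneg ((norm_nonneg _).trans h.le)]
  linarith [norm_le_norm_sub_add ζ a]

theorem norm_sq_lt_mul_re_of_norm_sub_lt {a : ℝ} {ζ : ℂ} (h : ‖ζ - a‖ < a) :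
    ‖ζ‖ ^ 2 < 2 * a * ζ.re := by
  have hsq : ‖ζ - a‖ ^ 2 < a ^ 2 := by gcongr
  rw [← normSq_eq_norm_sq, normSq_apply] at hsq ⊢
  simp only [sub_re, sub_im, ofReal_re, ofReal_im] at hsq
  linarith

theorem re_pos_of_norm_sub_lt {a : ℝ} {ζ : ℂ} (h : ‖ζ - a‖ < a) : 0 < ζ.re :=
  pos_of_mul_pos_right ((sq_nonneg _).trans_lt (norm_sq_lt_mul_re_of_norm_sub_lt h))
    (mul_nonneg zero_le_two ((norm_nonneg _).trans h.le))

theorem eventually_forall_disc {P : ℂ → Prop} (h : ∀ᶠ ζ in 𝓝 0, P ζ) :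
    ∀ᶠ a : ℝ in 𝓝 0, ∀ ζ : ℂ, ‖ζ - a‖ < a → P ζ := by
  obtain ⟨ε, hε, hball⟩ := Metric.eventually_nhds_iff_ball.1 h
  filter_upwards [gt_mem_nhds (half_pos hε)] with a ha ζ hζ
  refine hball ζ (mem_ball_zero_iff.2 ?_)
  linarith [norm_lt_two_mul_of_norm_sub_lt hζ]

theorem eventually_forall_disc_pos {s : ℂ → ℝ}
    (hs : (fun ζ => s ζ - ζ.re) =O[𝓝 0] fun ζ => ‖ζ‖ ^ 2) :
    ∀ᶠ a : ℝ in 𝓝 0, ∀ ζ : ℂ, ‖ζ - a‖ < a → 0 < s ζ := by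
  obtain ⟨C, hC, hbound⟩ := hs.exists_pos
  filter_upwards [eventually_forall_disc hbound.bound,
    gt_mem_nhds (show (0 : ℝ) < 1 / (2 * C) by positivity)] with a hbound haC ζ hζ
  have hre := neg_le_of_abs_le (hbound ζ hζ)
  rw [norm_pow, norm_norm] at hre
  rw [lt_div_iff₀ (by positivity)] at haC
  calc 0 < (1 - 2 * a * C) * ζ.re := mul_pos (by linarith) (re_pos_of_norm_sub_lt hζ)
    _ ≤ ζ.re - C * ‖ζ‖ ^ 2 := by
      linarith [mul_le_mul_of_nonneg_left (norm_sq_lt_mul_re_of_norm_sub_lt hζ).le hC.le]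
    _ ≤ s ζ := by linarith

theorem exists_forall_ball {X : Type*} [PseudoMetricSpace X] {x : X} {P : X → Prop}
    (h : ∀ᶠ y in 𝓝 x, P y) : ∃ r > 0, r ≤ 1 ∧ ∀ y ∈ ball x r, P y := by
  obtain ⟨ε, hε, hball⟩ := Metric.eventually_nhds_iff_ball.1 h
  exact ⟨min ε 1, by positivity, min_le_right _ _,
    fun y hy => hball y (ball_subset_ball (min_le_left _ _) hy)⟩

/-- Local data near a boundary point `p` of `Ω` which is strongly pseudoconvex: a strictly
plurisubharmonic local defining function `σ`, a holomorphic function `f` peaking at `p`, and a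
function `k` on the complex line through `p` in the direction `v` which agrees with `f` up to
fourth order but whose real part lies below `-3 * σ`. The functional `ℓ` is the derivative of `f`
at `p`, and its real part is minus that of `σ`, so that `z ↦ z - p - ℓ (z - p) • v` is the
projection along `v` onto the complex tangent space. -/
structure LocalModel {n : ℕ} (Ω : Set (En n)) (p : En n) (ℓ : En n →L[ℂ] ℂ) (v : En n) where
  (σ : En n → ℝ) (f : En n → ℂ) (k : ℂ → ℂ) (r δ c C : ℝ)
  r_pos : 0 < r
  δ_pos : 0 < δ
  c_pos : 0 < c
  C_pos : 0 < C
  r_le_one : r ≤ 1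
  norm_smul_lt : ∀ ζ : ℂ, ‖ζ‖ < δ → ‖ζ • v‖ < r
  ℓ_v : ℓ v = 1
  contDiff : ContDiff ℝ 2 σ
  mem_iff : ∀ z, ‖z - p‖ < r → (z ∈ Ω ↔ σ z < 0)
  levi : ∀ z, ‖z - p‖ < r → ∀ ξ, c * ‖ξ‖ ^ 2 ≤ LeviForm σ z ξ
  abs_σ_le : ∀ z, ‖z - p‖ < r → |σ z| ≤ C * ‖z - p‖
  f_diff : Differentiable ℂ f
  k_diff : Differentiable ℂ k
  f_p : f p = 0
  re_f_pos : ∀ z ∈ Ω, ‖z - p‖ < r → 0 < (f z).re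
  le_re_f : ∀ z ∈ Ω, ‖z - p‖ < r → c * ‖z - p - ℓ (z - p) • v‖ ^ 2 ≤ (f z).re
  re_k_le : ∀ ζ : ℂ, ‖ζ‖ < δ → p + ζ • v ∈ Ω → (k ζ).re ≤ 3 * -σ (p + ζ • v)
  f_sub_k : ∀ ζ : ℂ, ‖ζ‖ < δ → ‖f (p + ζ • v) - k ζ‖ ≤ C * ‖ζ‖ ^ 4
  k_sub : ∀ ζ : ℂ, ‖ζ‖ < δ → ‖k ζ - ζ‖ ≤ C * ‖ζ‖ ^ 2
  lip : ∀ z z', ‖z - p‖ < r → ‖z' - p‖ < r → ‖f z - f z'‖ ≤ C * ‖z - z'‖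
  antilip : ∀ z z', ‖z - p‖ < r → ‖z' - p‖ < r →
    ‖z - z'‖ ≤ C * (‖z - z' - ℓ (z - z') • v‖ + ‖f z - f z'‖)
  disc : ∀ a < δ, ∀ ζ : ℂ, ‖ζ - a‖ < a → p + ζ • v ∈ Ω

theorem LocalModel.nonempty_of_eventually {n : ℕ} {Ω : Set (En n)} {p v : En n}
    {ℓ : En n →L[ℂ] ℂ} (hv : ℓ v = 1) {σ : En n → ℝ} (hσ : ContDiff ℝ 2 σ)
    (hΩ : ∀ᶠ z in 𝓝 p, z ∈ Ω ↔ σ z < 0) {c : ℝ} (hc : 0 < c)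
    (hlevi : ∀ᶠ z in 𝓝 p, ∀ ξ, c * ‖ξ‖ ^ 2 ≤ LeviForm σ z ξ)
    (hσO : σ =O[𝓝 p] fun z => z - p)
    {f : En n → ℂ} (hf : Differentiable ℂ f) (hfℓ : HasStrictFDerivAt f ℓ p) (hfp : f p = 0)
    (hfre : ∀ᶠ z in 𝓝 p, σ z < 0 → 0 < (f z).re ∧ c * ‖z - p - ℓ (z - p) • v‖ ^ 2 ≤ (f z).re)
    {k : ℂ → ℂ} (hk : Differentiable ℂ k)
    (hkre : ∀ᶠ ζ in 𝓝 0, σ (p + ζ • v) < 0 → (k ζ).re ≤ 3 * -σ (p + ζ • v))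
    (hfk : (fun ζ => f (p + ζ • v) - k ζ) =O[𝓝 0] fun ζ => ‖ζ‖ ^ 4)
    (hkO : (fun ζ => k ζ - ζ) =O[𝓝 0] fun ζ => ‖ζ‖ ^ 2)
    (hdisc : ∀ᶠ a : ℝ in 𝓝 0, ∀ ζ : ℂ, ‖ζ - a‖ < a → p + ζ • v ∈ Ω) :
    Nonempty (LocalModel Ω p ℓ v) := by
  have hlip := hfℓ.isBigO_sub
  have hanti := isBigO_sub_of_hasStrictFDerivAt hfℓ v
  rw [Asymptotics.isBigO_iff_eventually] at hσO hfk hkO hlip hanti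
  obtain ⟨C, hC, hσO, hfk, hkO, hlip, hanti⟩ := ((eventually_gt_atTop 0).and
    (hσO.and (hfk.and (hkO.and (hlip.and hanti))))).exists
  obtain ⟨r, hr, hr1, hball⟩ := exists_forall_ball
    (((hΩ.and (hlevi.and (hσO.and hfre))).prod_inl_nhds p).and (hlip.and hanti))
  have hline : ∀ᶠ ζ : ℂ in 𝓝 0, ‖ζ • v‖ < r :=
    Tendsto.eventually_lt_const (by simpa using hr) (Continuous.tendsto (by fun_prop) 0)
  obtain ⟨δ, hδ, -, hdball⟩ := exists_forall_ball
    (((hline.and (hkre.and (hfk.and hkO))).prod_inl_nhds (0 : ℝ)).and (hdisc.prod_inr_nhds (0 : ℂ)))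
  have hr_of : ∀ z z', ‖z - p‖ < r → ‖z' - p‖ < r → (z, z') ∈ ball (p, p) r := fun z z' hz hz' =>
    ball_prod_same p p r ▸ ⟨mem_ball_iff_norm.2 hz, mem_ball_iff_norm.2 hz'⟩
  have hz : ∀ z, ‖z - p‖ < r → _ := fun z hzr => (hball (z, z) (hr_of z z hzr hzr)).1
  have hζ : ∀ ζ : ℂ, ‖ζ‖ < δ → _ := fun ζ hζδ =>
    (hdball (ζ, 0) (by simpa [← ball_prod_same] using ⟨hζδ, hδ⟩)).1
  have hσ_of : ∀ ζ : ℂ, ‖ζ‖ < δ → p + ζ • v ∈ Ω → σ (p + ζ • v) < 0 := fun ζ hζδ =>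
    (hz _ (by simpa using (hζ ζ hζδ).1)).1.1
  simp only [norm_pow, norm_norm] at hζ
  refine ⟨⟨σ, f, k, r, δ, c, C, hr, hδ, hc, hC, hr1, fun ζ h => (hζ ζ h).1, hv, hσ,
    fun z h => (hz z h).1, fun z h => (hz z h).2.1, fun z h => (hz z h).2.2.1, hf, hk, hfp,
    fun z hzΩ h => ((hz z h).2.2.2 (((hz z h).1).1 hzΩ)).1,
    fun z hzΩ h => ((hz z h).2.2.2 (((hz z h).1).1 hzΩ)).2,
    fun ζ h hmem => (hζ ζ h).2.1 (hσ_of ζ h hmem), fun ζ h => (hζ ζ h).2.2.1,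
    fun ζ h => (hζ ζ h).2.2.2, fun z z' h h' => (hball _ (hr_of z z' h h')).2.1,
    fun z z' h h' => ?_, fun a ha ζ h => ?_⟩⟩
  · simpa [abs_of_nonneg, add_nonneg] using (hball _ (hr_of z z' h h')).2.2
  · have ha0 : 0 < a := (norm_nonneg _).trans_lt h
    exact (hdball (0, a) (by simpa [← ball_prod_same, abs_of_pos ha0] using ⟨hδ, ha⟩)).2 ζ h

theorem exists_localModel_of_strictly_psh {n : ℕ} {Ω : Set (En n)} {σ : En n → ℝ} {p v : En n}
    {ℓ : En n →L[ℂ] ℂ} (hσ : ContDiff ℝ 4 σ) (hσp : σ p = 0)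
    (hℓ : ∀ d, fderiv ℝ σ p d = -(ℓ d).re) (hv : ℓ v = 1)
    (hΩ : ∀ᶠ z in 𝓝 p, z ∈ Ω ↔ σ z < 0) {c : ℝ} (hc : 0 < c)
    (hlevi : ∀ᶠ z in 𝓝 p, ∀ ξ, c * ‖ξ‖ ^ 2 ≤ LeviForm σ z ξ) :
    Nonempty (LocalModel Ω p ℓ v) := by
  have hσ2 : ContDiff ℝ 2 σ := hσ.of_le (by norm_num)
  obtain ⟨h, h', hh, hh', h0, hhℓ, hh'ℓ, hhh', hre⟩ := exists_holomorphic_model hσ.contDiffAt hσp hℓ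
    v hc (fun ξ => by simpa [LeviForm, iteratedFDeriv_two_apply] using hlevi.self_of_nhds ξ)
  have hline : Tendsto (fun ζ : ℂ => ζ • v) (𝓝 0) (𝓝 0) :=
    Continuous.tendsto' (by fun_prop) _ _ (zero_smul ℂ v)
  have hadd : Tendsto (fun ζ : ℂ => p + ζ • v) (𝓝 0) (𝓝 p) :=
    Continuous.tendsto' (by fun_prop) _ _ (by simp)
  have hlineO : (fun ζ : ℂ => ‖ζ • v‖) =O[𝓝 0] fun ζ => ‖ζ‖ :=
    .of_bound ‖v‖ (by simp [norm_smul, mul_comm])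
  have hstrict : HasStrictFDerivAt (fun z => h (z - p)) ℓ p := by
    have := hasStrictFDerivAt_of_isBigO hh.contDiffAt h0 hhℓ
    rw [← sub_self p] at this
    exact HasStrictFDerivAt.comp (f := fun z => z - p) p this ((hasStrictFDerivAt_id p).sub_const p)
  refine LocalModel.nonempty_of_eventually hv hσ2 hΩ (half_pos hc) (hlevi.mono fun z hz ξ => ?_) ?_
    (f := fun z => h (z - p)) ((hh.differentiable one_ne_zero).comp (by fun_prop)) hstrict
    (by simp [h0]) ?_
    (k := fun ζ => h' (ζ • v)) ((hh'.differentiable one_ne_zero).comp (by fun_prop)) ?_ ?_ ?_ ?_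
  · exact (mul_le_mul_of_nonneg_right (half_le_self hc.le) (sq_nonneg _)).trans (hz ξ)
  · simpa [hσp] using (hσ2.differentiable two_ne_zero p).isBigO_sub
  · filter_upwards [(tendsto_sub_nhds_zero_iff.2 tendsto_id).eventually hre] with z hz hσz
    simp only [id, add_sub_cancel] at hz
    have hnonneg : 0 ≤ c / 2 * ‖z - p - ℓ (z - p) • v‖ ^ 2 := by positivity
    exact ⟨by linarith [(hz hσz).1], by linarith [(hz hσz).1]⟩
  · filter_upwards [hline.eventually hre] with ζ hζ hσζ
    exact (hζ hσζ).2 (by simp [hv])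
  · simpa [Function.comp_def] using (hhh'.comp_tendsto hline).trans (hlineO.pow 4)
  · simpa [hv, Function.comp_def] using (hh'ℓ.comp_tendsto hline).trans (hlineO.pow 2)
  · have hσO := ((isBigO_neg_sub_re hσ2.contDiffAt hσp hℓ).comp_tendsto hline).trans (hlineO.pow 2)
    simp only [Function.comp_def, map_smul, hv, smul_eq_mul, mul_one] at hσO
    filter_upwards [eventually_forall_disc (hadd.eventually hΩ), eventually_forall_disc_pos hσO]
      with a hmem hpos ζ hζ
    exact (hmem ζ hζ).2 (neg_pos.1 (hpos ζ hζ))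

theorem exists_localModel {n : ℕ} {Ω : Set (En n)} {ρ : En n → ℝ} {p : En n}
    (hρ : IsDefiningFunction Ω 4 ρ) (hp : p ∈ frontier Ω) (hspc : StronglyPcxAt ρ p) :
    ∃ ℓ : En n →L[ℂ] ℂ, (∃ v, ℓ v = 1) ∧ ∀ v, ℓ v = 1 → Nonempty (LocalModel Ω p ℓ v) := by
  obtain ⟨σ, hσ, hσp, hdσ, hΩ, c, hc, hlevi⟩ := exists_strictly_psh_defining hρ hp hspc
  obtain ⟨ℓ, hℓ⟩ : ∃ ℓ : En n →L[ℂ] ℂ, ∀ d, fderiv ℝ σ p d = -(ℓ d).re :=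
    ⟨StrongDual.extendRCLike (-fderiv ℝ σ p), fun d => by
      rw [← RCLike.re_eq_complex_re, StrongDual.re_extendRCLike_apply, neg_apply, neg_neg]⟩
  obtain ⟨d, hd⟩ : ∃ d, ℓ d ≠ 0 := by
    by_contra! h
    exact hdσ (ContinuousLinearMap.ext fun d => by simp [hℓ, h])
  exact ⟨ℓ, ⟨(ℓ d)⁻¹ • d, by simp [hd]⟩, fun v hv =>
    exists_localModel_of_strictly_psh hσ hσp hℓ hv hΩ hc hlevi⟩

theorem analyticAt_comp_of_differentiableOn {E F : Type*} [NormedAddCommGroup E] [NormedSpace ℂ E]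
    [CompleteSpace E] [NormedAddCommGroup F] [NormedSpace ℂ F] [CompleteSpace F] {f : E → F}
    {U : Set E} (hf : DifferentiableOn ℂ f U) (hU : IsOpen U) {γ : ℂ → E} {ζ : ℂ}
    (hγ : AnalyticAt ℂ γ ζ) (hmem : γ ζ ∈ U) : AnalyticAt ℂ (fun ξ => f (γ ξ)) ζ := by
  refine analyticAt_iff_eventually_differentiableAt.2 ?_
  filter_upwards [hγ.eventually_analyticAt, hγ.continuousAt.preimage_mem_nhds (hU.mem_nhds hmem)]
    with ξ hξ hξU
  exact (hf.differentiableAt (hU.mem_nhds hξU)).comp ξ hξ.differentiableAt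

theorem LocalModel.exists_norm_sq_le {n : ℕ} {Ω : Set (En n)} {p : En n}
    {ℓ : En n →L[ℂ] ℂ} {v : En n} (D : LocalModel Ω p ℓ v) :
    ∃ C' > 0, ∀ z ∈ Ω, ‖z - p‖ < D.r → ‖z - p‖ ^ 2 ≤ C' * ‖D.f z‖ := by
  have hC := D.C_pos
  have hc := D.c_pos
  have hp : ‖p - p‖ < D.r := by simpa using D.r_pos
  refine ⟨2 * D.C ^ 2 * (1 / D.c + D.C), by positivity, fun z hz hzr => ?_⟩
  have hanti := D.antilip z p hzr hp
  have hlip := D.lip z p hzr hp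
  rw [D.f_p, sub_zero] at hanti hlip
  have hle : D.c * ‖z - p - ℓ (z - p) • v‖ ^ 2 ≤ ‖D.f z‖ :=
    (D.le_re_f z hz hzr).trans (re_le_norm _)
  set τ := ‖z - p - ℓ (z - p) • v‖
  set φ := ‖D.f z‖
  have : 0 ≤ φ := norm_nonneg _
  have hτ : τ ^ 2 ≤ φ / D.c := by rw [le_div_iff₀ hc]; linarith
  have hφC : φ ≤ D.C := hlip.trans (mul_le_of_le_one_right hC.le (hzr.le.trans D.r_le_one))
  calc ‖z - p‖ ^ 2 ≤ (D.C * (τ + φ)) ^ 2 := by gcongr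
    _ = D.C ^ 2 * (τ + φ) ^ 2 := mul_pow _ _ _
    _ ≤ D.C ^ 2 * (2 * (τ ^ 2 + φ ^ 2)) := by gcongr; exact add_sq_le
    _ ≤ D.C ^ 2 * (2 * (φ / D.c + D.C * φ)) := by gcongr; rw [sq]; gcongr
    _ = 2 * D.C ^ 2 * (1 / D.c + D.C) * φ := by ring

/-- A local model together with constants for which the barriers below are superharmonic along
holomorphic discs and glue to a function on the whole domain: `gap` says that on the sphere of
radius `r₁` the inner barrier lies below the constant `κ * r₂ ^ 2`. -/
structure ComparisonData {n : ℕ} (Ω : Set (En n)) (p : En n) (ℓ : En n →L[ℂ] ℂ) (v : En n)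
    extends LocalModel Ω p ℓ v where
  (δ' C' r₁ r₂ K κ : ℝ)
  δ'_pos : 0 < δ'
  δ'_le : δ' ≤ δ
  C_mul_δ' : 2 * C * δ' ≤ 1
  C'_pos : 0 < C'
  norm_sq_le : ∀ z ∈ Ω, ‖z - p‖ < r → ‖z - p‖ ^ 2 ≤ C' * ‖f z‖
  r₁_pos : 0 < r₁
  r₁_lt : r₁ < r₂
  r₂_lt : r₂ < r
  κ_pos : 0 < κ
  K_pos : 0 < K
  κ_le : κ ≤ K * c
  K_ge : 48 ≤ K * δ' ^ 2
  gap : C' / r₁ ^ 2 + K * C * r₁ + κ * r₁ ^ 2 ≤ κ * r₂ ^ 2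

theorem exists_radii {A r : ℝ} (hA : 0 < A) (hr : 0 < r) (hr1 : r ≤ 1) :
    ∃ r₁ r₂ : ℝ, 0 < r₁ ∧ r₁ < r₂ ∧ r₂ < r ∧ A * r₁ + r₁ ^ 2 ≤ r₂ ^ 2 / 2 := by
  refine ⟨(r / 2) ^ 2 / (2 * (A + 1)), r / 2, by positivity, ?_, half_lt_self hr, ?_⟩
  · rw [div_lt_iff₀ (by positivity), sq]
    gcongr
    linarith
  · have hr₁ : (r / 2) ^ 2 / (2 * (A + 1)) ≤ 1 := by
      rw [div_le_one (by positivity)]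
      nlinarith
    calc _ ≤ A * ((r / 2) ^ 2 / (2 * (A + 1))) + (r / 2) ^ 2 / (2 * (A + 1)) := by
          gcongr
          exact pow_le_of_le_one (by positivity) hr₁ two_ne_zero
      _ = (r / 2) ^ 2 / 2 := by field_simp

theorem LocalModel.nonempty_comparisonData {n : ℕ} {Ω : Set (En n)} {p : En n}
    {ℓ : En n →L[ℂ] ℂ} {v : En n} (D : LocalModel Ω p ℓ v) :
    Nonempty (ComparisonData Ω p ℓ v) := by
  have hC := D.C_pos
  have hc := D.c_pos
  obtain ⟨C', hC', hnorm⟩ := D.exists_norm_sq_le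
  obtain ⟨r₁, r₂, hr₁, hr₁₂, hr₂, hr⟩ := exists_radii (div_pos hC hc) D.r_pos D.r_le_one
  have hr₂0 : 0 < r₂ := hr₁.trans hr₁₂
  have hδ' : 0 < min D.δ (1 / (2 * D.C)) := lt_min D.δ_pos (by positivity)
  set δ' := min D.δ (1 / (2 * D.C))
  obtain ⟨κ, hκ, hκgap, hκδ⟩ : ∃ κ > 0, C' / r₁ ^ 2 ≤ κ * (r₂ ^ 2 / 2) ∧ 48 ≤ κ * (δ' ^ 2 / D.c) :=
    ((eventually_gt_atTop 0).and
      (((tendsto_id.atTop_mul_const (by positivity)).eventually_ge_atTop _).and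
        ((tendsto_id.atTop_mul_const (by positivity)).eventually_ge_atTop _))).exists
  refine ⟨{ D with
    δ' := δ', C' := C', r₁ := r₁, r₂ := r₂, K := κ / D.c, κ := κ
    δ'_pos := hδ', δ'_le := min_le_left _ _
    C_mul_δ' := ?_, C'_pos := hC', norm_sq_le := hnorm, r₁_pos := hr₁, r₁_lt := hr₁₂
    r₂_lt := hr₂, κ_pos := hκ, K_pos := div_pos hκ hc
    κ_le := (div_mul_cancel₀ _ hc.ne').ge
    K_ge := hκδ.trans_eq (by ring), gap := ?_ }⟩
  · have : δ' ≤ 1 / (2 * D.C) := min_le_right _ _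
    rw [le_div_iff₀ (by positivity)] at this
    linarith
  · calc _ = C' / r₁ ^ 2 + κ * (D.C / D.c * r₁ + r₁ ^ 2) := by ring
      _ ≤ κ * (r₂ ^ 2 / 2) + κ * (r₂ ^ 2 / 2) := by gcongr
      _ = κ * r₂ ^ 2 := by ring

namespace ComparisonData

variable {n : ℕ} {Ω : Set (En n)} {p : En n} {ℓ : En n →L[ℂ] ℂ} {v : En n}

/-- The component of `z - p` in the complex tangent space `ker ℓ`, along the direction `v`. -/
def tangential (_ : ComparisonData Ω p ℓ v) (z : En n) : En n := z - p - ℓ (z - p) • v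

/-- The barrier near `p`, with its pole at `p`: its composition with every holomorphic disc is
superharmonic. -/
def innerBarrier (D : ComparisonData Ω p ℓ v) (z : En n) : ℝ :=
  ((D.f z)⁻¹).re - D.c * ‖(D.f z)⁻¹ • D.tangential z‖ ^ 2 - D.K * D.σ z + D.κ * ‖z - p‖ ^ 2

/-- The barrier on the whole domain, obtained by gluing `innerBarrier` with a constant. -/
def barrier (D : ComparisonData Ω p ℓ v) (z : En n) : ℝ :=
  if ‖z - p‖ < D.r₁ then D.innerBarrier z
  else if ‖z - p‖ < D.r₂ then min (D.innerBarrier z) (D.κ * D.r₂ ^ 2) else D.κ * D.r₂ ^ 2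

/-- The subharmonic function on the complex line `ζ ↦ p + ζ • v` which is compared with the
barrier. -/
def lineBarrier (D : ComparisonData Ω p ℓ v) (ζ : ℂ) : ℝ :=
  ((D.k ζ)⁻¹).re + D.K * D.σ (p + ζ • v)

section Barrier

variable (D : ComparisonData Ω p ℓ v) {z : En n} {γ : ℂ → En n} {ζ : ℂ}

theorem r₂_pos : 0 < D.r₂ := D.r₁_pos.trans D.r₁_lt

theorem r₁_lt_r : D.r₁ < D.r := D.r₁_lt.trans D.r₂_lt

theorem f_ne_zero (hz : z ∈ Ω) (hr : ‖z - p‖ < D.r) : D.f z ≠ 0 := fun h =>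
  (D.re_f_pos z hz hr).ne' (by rw [h, zero_re])

theorem differentiable_tangential : Differentiable ℂ D.tangential := by
  unfold tangential
  fun_prop

theorem laplacianLE_innerBarrier (hγ : AnalyticAt ℂ γ ζ) (hmem : γ ζ ∈ Ω)
    (hr : ‖γ ζ - p‖ < D.r) : LaplacianLE (fun x => D.innerBarrier (γ x)) ζ 0 := by
  have hinv : AnalyticAt ℂ (fun x => (D.f (γ x))⁻¹) ζ :=
    (analyticAt_comp_of_differentiableOn D.f_diff.differentiableOn isOpen_univ hγ
      (mem_univ _)).inv (D.f_ne_zero hmem hr)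
  have htan : AnalyticAt ℂ (fun x => D.tangential (γ x)) ζ :=
    analyticAt_comp_of_differentiableOn D.differentiable_tangential.differentiableOn isOpen_univ hγ
      (mem_univ _)
  have hsum := (((LaplacianLE.re_of_analyticAt hinv).add
    ((LaplacianLE.neg_norm_sq_of_analyticAt (hinv.fun_smul htan)).const_mul D.c_pos.le)).add
    ((LaplacianLE.neg_comp D.contDiff.contDiffAt hγ).const_mul D.K_pos.le)).add
    ((LaplacianLE.norm_sq_of_analyticAt
      (hγ.fun_sub (analyticAt_const (v := p)))).const_mul D.κ_pos.le)
  have hle : D.κ * ‖deriv γ ζ‖ ^ 2 ≤ D.K * LeviForm D.σ (γ ζ) (deriv γ ζ) :=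
    calc D.κ * ‖deriv γ ζ‖ ^ 2 ≤ D.K * D.c * ‖deriv γ ζ‖ ^ 2 := by gcongr; exact D.κ_le
      _ = D.K * (D.c * ‖deriv γ ζ‖ ^ 2) := mul_assoc _ _ _
      _ ≤ _ := mul_le_mul_of_nonneg_left (D.levi _ hr _) D.K_pos.le
  refine (hsum.mono (m := 0) ?_).congr (.of_eq <| funext fun x => ?_)
  · rw [deriv_sub_const]
    linarith
  · simp only [innerBarrier]
    ring

theorem mul_norm_sq_le_re_inv (hz : z ∈ Ω) (hr : ‖z - p‖ < D.r) :
    D.c * ‖(D.f z)⁻¹ • D.tangential z‖ ^ 2 ≤ ((D.f z)⁻¹).re := by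
  rw [norm_smul, norm_inv, inv_re, normSq_eq_norm_sq, mul_pow, inv_pow, ← div_eq_inv_mul,
    ← mul_div_assoc]
  gcongr
  exact D.le_re_f z hz hr

theorem mul_norm_sq_le_innerBarrier (hz : z ∈ Ω) (hr : ‖z - p‖ < D.r) :
    D.κ * ‖z - p‖ ^ 2 ≤ D.innerBarrier z := by
  have hσ := mul_neg_of_pos_of_neg D.K_pos ((D.mem_iff z hr).1 hz)
  unfold innerBarrier
  linarith [D.mul_norm_sq_le_re_inv hz hr]

theorem innerBarrier_le_of_norm_eq (hz : z ∈ Ω) (hr : ‖z - p‖ = D.r₁) :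
    D.innerBarrier z ≤ D.κ * D.r₂ ^ 2 := by
  have hr' : ‖z - p‖ < D.r := hr.trans_lt D.r₁_lt_r
  have hr₁ := D.r₁_pos
  have hf : ((D.f z)⁻¹).re ≤ D.C' / D.r₁ ^ 2 := by
    refine (re_le_norm _).trans ?_
    rw [norm_inv, inv_le_comm₀ (norm_pos_iff.2 (D.f_ne_zero hz hr'))
      (div_pos D.C'_pos (by positivity)), inv_div, div_le_iff₀' D.C'_pos, ← hr]
    exact D.norm_sq_le z hz hr'
  have hσ : -D.σ z ≤ D.C * D.r₁ := (neg_le_abs _).trans (hr ▸ D.abs_σ_le z hr')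
  calc D.innerBarrier z
      ≤ D.C' / D.r₁ ^ 2 - 0 + D.K * (D.C * D.r₁) + D.κ * D.r₁ ^ 2 := by
        rw [innerBarrier, hr, sub_eq_add_neg (_ - _) (D.K * _), ← mul_neg]
        gcongr
        exacts [mul_nonneg D.c_pos.le (sq_nonneg _), D.K_pos.le]
    _ ≤ D.κ * D.r₂ ^ 2 := by linarith [D.gap]

theorem continuousAt_innerBarrier (hz : z ∈ Ω) (hr : ‖z - p‖ < D.r) :
    ContinuousAt D.innerBarrier z := by
  have hf : ContinuousAt (fun z => (D.f z)⁻¹) z :=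
    D.f_diff.continuous.continuousAt.inv₀ (D.f_ne_zero hz hr)
  have hσ : ContinuousAt D.σ z := D.contDiff.continuous.continuousAt
  have htan : ContinuousAt D.tangential z := D.differentiable_tangential.continuous.continuousAt
  have hre : ContinuousAt (fun z => ((D.f z)⁻¹).re) z := continuous_re.continuousAt.comp hf
  unfold innerBarrier
  fun_prop

theorem min_le_barrier (z : En n) : min (D.innerBarrier z) (D.κ * D.r₂ ^ 2) ≤ D.barrier z := by
  unfold barrier
  split_ifs
  exacts [min_le_left _ _, le_rfl, min_le_right _ _]

theorem barrier_le_innerBarrier (h : ‖z - p‖ < D.r₂) : D.barrier z ≤ D.innerBarrier z := by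
  unfold barrier
  split_ifs
  exacts [le_rfl, min_le_left _ _]

theorem barrier_le_const (h : D.r₁ ≤ ‖z - p‖) : D.barrier z ≤ D.κ * D.r₂ ^ 2 := by
  rw [barrier, if_neg h.not_gt]
  split_ifs
  exacts [min_le_right _ _, le_rfl]

theorem barrier_of_norm_le (hz : z ∈ Ω) (h : ‖z - p‖ ≤ D.r₁) : D.barrier z = D.innerBarrier z := by
  rcases h.lt_or_eq with hlt | heq
  · exact if_pos hlt
  · rw [barrier, if_neg heq.ge.not_gt, if_pos (h.trans_lt D.r₁_lt),
      min_eq_left (D.innerBarrier_le_of_norm_eq hz heq)]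

theorem barrier_of_le_norm (h : D.r₂ ≤ ‖z - p‖) : D.barrier z = D.κ * D.r₂ ^ 2 := by
  rw [barrier, if_neg (D.r₁_lt.le.trans h).not_gt, if_neg h.not_gt]

theorem barrier_eq_min (hz : z ∈ Ω) (h₁ : D.r₁ ≤ ‖z - p‖) (h₂ : ‖z - p‖ ≤ D.r₂) :
    D.barrier z = min (D.innerBarrier z) (D.κ * D.r₂ ^ 2) := by
  rcases h₂.lt_or_eq with hlt | heq
  · rw [barrier, if_neg h₁.not_gt, if_pos hlt]
  · rw [D.barrier_of_le_norm heq.ge, min_eq_right]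
    simpa [heq] using D.mul_norm_sq_le_innerBarrier hz (heq.trans_lt D.r₂_lt)

theorem barrier_nonneg (hz : z ∈ Ω) : 0 ≤ D.barrier z := by
  have hκ : ∀ t : ℝ, 0 ≤ D.κ * t ^ 2 := fun t => mul_nonneg D.κ_pos.le (sq_nonneg t)
  rcases lt_or_ge ‖z - p‖ D.r₂ with h | h
  · exact (le_min ((hκ _).trans (D.mul_norm_sq_le_innerBarrier hz (h.trans D.r₂_lt)))
      (hκ _)).trans (D.min_le_barrier z)
  · exact (D.barrier_of_le_norm h).symm ▸ hκ _

theorem lowerSemicontinuousAt_barrier (hz : z ∈ Ω) : LowerSemicontinuousAt D.barrier z := by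
  have hnorm : Continuous fun z => ‖z - p‖ := by fun_prop
  rcases lt_or_ge ‖z - p‖ D.r₁ with h₁ | h₁
  · refine ((D.continuousAt_innerBarrier hz (h₁.trans D.r₁_lt_r)).congr
      ?_).lowerSemicontinuousAt
    filter_upwards [hnorm.continuousAt.eventually_lt_const h₁] with w hw using (if_pos hw).symm
  rcases le_or_gt ‖z - p‖ D.r₂ with h₂ | h₂
  · have hmin := (D.continuousAt_innerBarrier hz (h₂.trans_lt D.r₂_lt)).min
      (continuousAt_const (y := D.κ * D.r₂ ^ 2))
    intro y hy
    rw [D.barrier_eq_min hz h₁ h₂] at hy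
    exact (hmin.eventually_const_lt hy).mono fun w hw => hw.trans_le (D.min_le_barrier w)
  · refine ((continuousAt_const (y := D.κ * D.r₂ ^ 2)).congr ?_).lowerSemicontinuousAt
    filter_upwards [hnorm.continuousAt.eventually_const_lt h₂] with w hw
      using (D.barrier_of_le_norm hw.le).symm

theorem laplacianLE_barrier (hγ : AnalyticAt ℂ γ ζ) (hmem : γ ζ ∈ Ω) :
    LaplacianLE (fun x => D.barrier (γ x)) ζ 0 := by
  have hnorm : ContinuousAt (fun x => ‖γ x - p‖) ζ :=
    (hγ.continuousAt.sub continuousAt_const).norm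
  have hconst (h : D.r₁ < ‖γ ζ - p‖) (heq : D.barrier (γ ζ) = D.κ * D.r₂ ^ 2) :
      LaplacianLE (fun x => D.barrier (γ x)) ζ 0 :=
    (LaplacianLE.const (D.κ * D.r₂ ^ 2) ζ).of_touch
      ((hnorm.eventually_const_lt h).mono fun x hx => D.barrier_le_const hx.le) heq
  have hinner (h : ‖γ ζ - p‖ < D.r₂) (heq : D.barrier (γ ζ) = D.innerBarrier (γ ζ)) :
      LaplacianLE (fun x => D.barrier (γ x)) ζ 0 :=
    (D.laplacianLE_innerBarrier hγ hmem (h.trans D.r₂_lt)).of_touch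
      ((hnorm.eventually_lt_const h).mono fun x hx => D.barrier_le_innerBarrier hx) heq
  rcases le_or_gt ‖γ ζ - p‖ D.r₁ with h₁ | h₁
  · exact hinner (h₁.trans_lt D.r₁_lt) (D.barrier_of_norm_le hmem h₁)
  rcases lt_or_ge ‖γ ζ - p‖ D.r₂ with h₂ | h₂
  · rcases min_choice (D.innerBarrier (γ ζ)) (D.κ * D.r₂ ^ 2) with h | h
    · exact hinner h₂ ((D.barrier_eq_min hmem h₁.le h₂.le).trans h)
    · exact hconst h₁ ((D.barrier_eq_min hmem h₁.le h₂.le).trans h)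
  · exact hconst h₁ (D.barrier_of_le_norm h₂)

theorem norm_lt_of_lt_barrier (h : D.κ * D.r₂ ^ 2 < D.barrier z) : ‖z - p‖ < D.r₁ := by
  contrapose! h
  exact D.barrier_le_const h

end Barrier
end ComparisonData

theorem LittleOh.isLittleO {n : ℕ} {Ω : Set (En n)} {G : En n → En n} {p : En n} {k : ℕ}
    (h : LittleOh Ω G p k) (hp : p ∉ Ω) :
    (fun z => G z - z) =o[𝓝[Ω] p] fun z => ‖z - p‖ ^ k := by
  refine Asymptotics.IsLittleO.of_norm_left ((Asymptotics.isLittleO_iff_tendsto' ?_).2 h)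
  filter_upwards [self_mem_nhdsWithin] with z hz h0
  have hzp : ‖z - p‖ ≠ 0 := norm_ne_zero_iff.2 (sub_ne_zero.2 fun h => hp (h ▸ hz))
  exact absurd h0 (pow_ne_zero k hzp)

/-- A holomorphic self-map of `Ω` tangent to the identity to third order at `p`. -/
structure IsTangentSelfMap {n : ℕ} (Ω : Set (En n)) (p : En n) (G : En n → En n) : Prop where
  differentiableOn : DifferentiableOn ℂ G Ω
  mapsTo : MapsTo G Ω Ω
  littleOh : LittleOh Ω G p 3

theorem IsTangentSelfMap.analyticAt_line {n : ℕ} {Ω : Set (En n)} {p v : En n} {G : En n → En n}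
    {ζ : ℂ} (hG : IsTangentSelfMap Ω p G) (hΩ : IsOpen Ω) (hmem : p + ζ • v ∈ Ω) :
    AnalyticAt ℂ (fun x : ℂ => G (p + x • v)) ζ :=
  analyticAt_comp_of_differentiableOn hG.differentiableOn hΩ (by fun_prop) hmem

/-- The filter of complex parameters `ζ` tending to `0` with `p + ζ • v` in `Ω`. -/
def lineNhds {n : ℕ} (Ω : Set (En n)) (p v : En n) : Filter ℂ :=
  𝓝[{ζ | p + ζ • v ∈ Ω}] 0

section LineNhds

variable {n : ℕ} {Ω : Set (En n)} {p v : En n}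

theorem eventually_lineNhds_norm_lt {η : ℝ} (hη : 0 < η) : ∀ᶠ ζ in lineNhds Ω p v, ‖ζ‖ < η :=
  eventually_nhdsWithin_of_eventually_nhds (eventually_norm_sub_lt 0 hη |>.mono (by simp))

theorem eventually_lineNhds_mem : ∀ᶠ ζ in lineNhds Ω p v, p + ζ • v ∈ Ω :=
  self_mem_nhdsWithin

theorem tendsto_line_lineNhds :
    Tendsto (fun ζ : ℂ => p + ζ • v) (lineNhds Ω p v) (𝓝[Ω] p) := by
  have hline : Continuous fun ζ : ℂ => p + ζ • v := by fun_prop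
  exact tendsto_nhdsWithin_iff.2
    ⟨(hline.tendsto' 0 p (by simp)).mono_left nhdsWithin_le_nhds, eventually_lineNhds_mem⟩

theorem IsTangentSelfMap.isLittleO_line {G : En n → En n} (hG : IsTangentSelfMap Ω p G)
    (hp : p ∉ Ω) :
    (fun ζ : ℂ => G (p + ζ • v) - (p + ζ • v)) =o[lineNhds Ω p v] fun ζ => ζ ^ 3 := by
  refine ((hG.littleOh.isLittleO hp).comp_tendsto tendsto_line_lineNhds).trans_isBigO ?_
  refine .of_bound (‖v‖ ^ 3) (.of_forall fun ζ => le_of_eq ?_)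
  simp [norm_smul, mul_pow, mul_comm]

end LineNhds

namespace ComparisonData

variable {n : ℕ} {Ω : Set (En n)} {p : En n} {ℓ : En n →L[ℂ] ℂ} {v : En n}
  (D : ComparisonData Ω p ℓ v)

/-- The holomorphic function of one variable measuring how far `G` is from the identity along the
line `ζ ↦ p + ζ • v`. -/
def reciprocalGap (G : En n → En n) (ζ : ℂ) : ℂ :=
  (D.f (G (p + ζ • v)))⁻¹ - (D.k ζ)⁻¹

/-- A superharmonic majorant of the real part of `reciprocalGap`. -/
def majorant (G : En n → En n) (ζ : ℂ) : ℝ :=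
  (D.reciprocalGap G ζ).re + D.K * -D.σ (G (p + ζ • v)) + D.κ * ‖G (p + ζ • v) - p‖ ^ 2
    + D.K * -D.σ (p + ζ • v)

theorem majorant_eq (G : En n → En n) (ζ : ℂ) :
    D.majorant G ζ = D.innerBarrier (G (p + ζ • v)) - D.lineBarrier ζ +
      D.c * ‖(D.f (G (p + ζ • v)))⁻¹ • D.tangential (G (p + ζ • v))‖ ^ 2 := by
  unfold majorant reciprocalGap innerBarrier lineBarrier
  rw [sub_re]
  ring

section Line

variable {ζ : ℂ}

include D in
theorem notMem : p ∉ Ω := fun h => by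
  have hp : ‖p - p‖ < D.r := by simpa using D.r_pos
  have hσ := D.abs_σ_le p hp
  rw [sub_self, norm_zero, mul_zero] at hσ
  exact ((D.mem_iff p hp).1 h).ne (abs_nonpos_iff.1 hσ)

include D in
theorem direction_ne_zero : v ≠ 0 := by
  rintro rfl
  simpa using D.ℓ_v

include D in
theorem param_ne_zero (h : p + ζ • v ∈ Ω) : ζ ≠ 0 := by
  rintro rfl
  exact D.notMem (by simpa using h)

theorem norm_line_sub_lt (hζ : ‖ζ‖ < D.δ') : ‖p + ζ • v - p‖ < D.r := by
  rw [add_sub_cancel_left]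
  exact D.norm_smul_lt ζ (hζ.trans_le D.δ'_le)

theorem σ_line_neg (hζ : ‖ζ‖ < D.δ') (h : p + ζ • v ∈ Ω) : D.σ (p + ζ • v) < 0 :=
  (D.mem_iff _ (D.norm_line_sub_lt hζ)).1 h

theorem norm_k_sub_le (hζ : ‖ζ‖ < D.δ') : ‖D.k ζ - ζ‖ ≤ ‖ζ‖ / 2 :=
  calc ‖D.k ζ - ζ‖ ≤ D.C * ‖ζ‖ * ‖ζ‖ := by
        simpa [sq, mul_assoc] using D.k_sub ζ (hζ.trans_le D.δ'_le)
    _ ≤ D.C * D.δ' * ‖ζ‖ := by gcongr; exact D.C_pos.le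
    _ ≤ 1 / 2 * ‖ζ‖ := by gcongr; linarith [D.C_mul_δ']
    _ = ‖ζ‖ / 2 := by ring

theorem half_norm_le_norm_k (hζ : ‖ζ‖ < D.δ') : ‖ζ‖ / 2 ≤ ‖D.k ζ‖ := by
  linarith [norm_sub_norm_le ζ (D.k ζ), D.norm_k_sub_le hζ, norm_sub_rev ζ (D.k ζ)]

theorem k_ne_zero (hζ : ‖ζ‖ < D.δ') (h0 : ζ ≠ 0) : D.k ζ ≠ 0 :=
  norm_pos_iff.1 ((half_pos (norm_pos_iff.2 h0)).trans_le (D.half_norm_le_norm_k hζ))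

theorem re_reciprocalGap_le_majorant {G : En n → En n} (hζ : ‖ζ‖ < D.δ') (hmem : p + ζ • v ∈ Ω)
    (hGmem : G (p + ζ • v) ∈ Ω) (hr : ‖G (p + ζ • v) - p‖ < D.r) :
    (D.reciprocalGap G ζ).re ≤ D.majorant G ζ := by
  have hσG := mul_pos D.K_pos (neg_pos.2 ((D.mem_iff _ hr).1 hGmem))
  have hσ := mul_pos D.K_pos (neg_pos.2 (D.σ_line_neg hζ hmem))
  have hκ := mul_nonneg D.κ_pos.le (sq_nonneg ‖G (p + ζ • v) - p‖)
  unfold majorant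
  linarith

theorem tangential_eq_sub_line (ζ : ℂ) (w : En n) :
    D.tangential w = w - (p + ζ • v) - ℓ (w - (p + ζ • v)) • v := by
  rw [tangential, ← sub_sub, map_sub ℓ (w - p), map_smul, D.ℓ_v, smul_eq_mul, mul_one, sub_smul]
  abel

end Line

section Asymptotics

variable {G : En n → En n} (hG : IsTangentSelfMap Ω p G)

include D hG in
theorem eventually_norm_comp_sub_le :
    ∀ᶠ ζ in lineNhds Ω p v, ‖G (p + ζ • v) - p‖ ≤ (‖v‖ + 1) * ‖ζ‖ := by
  filter_upwards [(hG.isLittleO_line D.notMem).bound one_pos, eventually_lineNhds_norm_lt one_pos]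
    with ζ hζ hζ1
  calc ‖G (p + ζ • v) - p‖ ≤ ‖G (p + ζ • v) - (p + ζ • v)‖ + ‖p + ζ • v - p‖ :=
        norm_sub_le_norm_sub_add_norm_sub _ _ _
    _ ≤ 1 * ‖ζ ^ 3‖ + ‖ζ‖ * ‖v‖ := by rw [add_sub_cancel_left, norm_smul]; gcongr
    _ ≤ 1 * ‖ζ‖ + ‖ζ‖ * ‖v‖ := by
        rw [norm_pow]
        gcongr
        exact pow_le_of_le_one (norm_nonneg ζ) hζ1.le three_ne_zero
    _ = (‖v‖ + 1) * ‖ζ‖ := by ring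

include D hG in
theorem eventually_norm_comp_sub_lt {η : ℝ} (hη : 0 < η) :
    ∀ᶠ ζ in lineNhds Ω p v, ‖G (p + ζ • v) - p‖ < η := by
  filter_upwards [D.eventually_norm_comp_sub_le hG,
    eventually_lineNhds_norm_lt (div_pos hη (by positivity : 0 < ‖v‖ + 1))] with ζ hζ hζη
  exact hζ.trans_lt ((lt_div_iff₀' (by positivity)).1 hζη)

include hG in
theorem isLittleO_f_comp_sub_k :
    (fun ζ : ℂ => D.f (G (p + ζ • v)) - D.k ζ) =o[lineNhds Ω p v] fun ζ => ζ ^ 3 := by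
  have hlip : (fun ζ : ℂ => D.f (G (p + ζ • v)) - D.f (p + ζ • v)) =O[lineNhds Ω p v]
      fun ζ => G (p + ζ • v) - (p + ζ • v) := by
    refine .of_bound D.C ?_
    filter_upwards [D.eventually_norm_comp_sub_lt hG D.r_pos,
      eventually_lineNhds_norm_lt D.δ'_pos] with ζ hG hζ
    exact D.lip _ _ hG (D.norm_line_sub_lt hζ)
  have hfk : (fun ζ : ℂ => D.f (p + ζ • v) - D.k ζ) =O[lineNhds Ω p v] fun ζ => ζ ^ 4 := by
    refine .of_bound D.C ?_
    filter_upwards [eventually_lineNhds_norm_lt D.δ_pos] with ζ hζ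
    simpa using D.f_sub_k ζ hζ
  refine ((hlip.trans_isLittleO (hG.isLittleO_line D.notMem)).add
    (hfk.trans_isLittleO ?_)).congr_left fun ζ => sub_add_sub_cancel _ _ _
  exact (Asymptotics.isLittleO_pow_pow (by norm_num)).mono nhdsWithin_le_nhds

theorem isBigO_k : (fun ζ : ℂ => ζ) =O[lineNhds Ω p v] D.k := by
  refine .of_bound 2 ?_
  filter_upwards [eventually_lineNhds_norm_lt D.δ'_pos] with ζ hζ
  linarith [D.half_norm_le_norm_k hζ]

include hG in
theorem isBigO_f_comp : (fun ζ : ℂ => ζ) =O[lineNhds Ω p v] fun ζ => D.f (G (p + ζ • v)) := by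
  have hpow : (fun ζ : ℂ => ζ ^ 3) =O[lineNhds Ω p v] fun ζ => ζ :=
    ((Asymptotics.isLittleO_pow_id (by norm_num)).mono nhdsWithin_le_nhds).isBigO
  exact D.isBigO_k.trans ((((D.isLittleO_f_comp_sub_k hG).trans_isBigO
    (hpow.trans D.isBigO_k)).right_isBigO_add).congr_right fun ζ => sub_add_cancel _ _)

include D in
theorem eventually_param_ne_zero : ∀ᶠ ζ in lineNhds Ω p v, ζ ≠ 0 :=
  eventually_lineNhds_mem.mono fun _ => D.param_ne_zero

include hG in
theorem isBigO_inv_f_comp :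
    (fun ζ : ℂ => (D.f (G (p + ζ • v)))⁻¹) =O[lineNhds Ω p v] fun ζ => ζ⁻¹ :=
  (D.isBigO_f_comp hG).inv_rev (D.eventually_param_ne_zero.mono fun _ h h0 => absurd h0 h)

include hG in
theorem isLittleO_reciprocalGap : D.reciprocalGap G =o[lineNhds Ω p v] fun ζ => ζ := by
  have hk : (fun ζ : ℂ => (D.k ζ)⁻¹) =O[lineNhds Ω p v] fun ζ => ζ⁻¹ :=
    D.isBigO_k.inv_rev (D.eventually_param_ne_zero.mono fun _ h h0 => absurd h0 h)
  refine ((D.isLittleO_f_comp_sub_k hG).neg_left.mul_isBigO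
    ((D.isBigO_inv_f_comp hG).mul hk)).congr' ?_ ?_
  · filter_upwards [eventually_lineNhds_mem, eventually_lineNhds_norm_lt D.δ'_pos,
      D.eventually_norm_comp_sub_lt hG D.r_pos] with ζ hmem hζ hr
    have hf := D.f_ne_zero (hG.mapsTo hmem) hr
    have hk := D.k_ne_zero hζ (D.param_ne_zero hmem)
    unfold reciprocalGap
    field_simp
    ring
  · filter_upwards [D.eventually_param_ne_zero] with ζ hζ
    field_simp

include hG in
theorem tendsto_reciprocalGap : Tendsto (D.reciprocalGap G) (lineNhds Ω p v) (𝓝 0) :=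
  (D.isLittleO_reciprocalGap hG).trans_tendsto (tendsto_id.mono_right nhdsWithin_le_nhds)

include hG in
theorem isLittleO_inv_f_comp_smul_tangential :
    (fun ζ : ℂ => (D.f (G (p + ζ • v)))⁻¹ • D.tangential (G (p + ζ • v))) =o[lineNhds Ω p v]
      fun ζ => ζ ^ 2 := by
  have htan : (fun ζ : ℂ => D.tangential (G (p + ζ • v))) =o[lineNhds Ω p v] fun ζ => ζ ^ 3 := by
    have h := ((ContinuousLinearMap.id ℂ (En n) - ℓ.smulRight v).isBigO_comp _
      (lineNhds Ω p v)).trans_isLittleO (hG.isLittleO_line (v := v) D.notMem)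
    exact h.congr_left fun ζ => (D.tangential_eq_sub_line ζ _).symm
  refine ((D.isBigO_inv_f_comp hG).smul_isLittleO htan).congr' .rfl ?_
  filter_upwards [D.eventually_param_ne_zero] with ζ hζ
  rw [smul_eq_mul]
  field_simp

include hG in
theorem tendsto_inv_f_comp_smul_tangential :
    Tendsto (fun ζ : ℂ => D.c * ‖(D.f (G (p + ζ • v)))⁻¹ • D.tangential (G (p + ζ • v))‖ ^ 2)
      (lineNhds Ω p v) (𝓝 0) := by
  have hpow : Tendsto (fun ζ : ℂ => ζ ^ 2) (lineNhds Ω p v) (𝓝 0) :=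
    ((continuous_pow 2).tendsto' 0 0 (by simp)).mono_left nhdsWithin_le_nhds
  have h := ((D.isLittleO_inv_f_comp_smul_tangential hG).trans_tendsto hpow).norm.pow 2
  simpa using h.const_mul D.c

end Asymptotics

end ComparisonData

theorem half_inv_le_re_inv {a : ℝ} {ζ : ℂ} (h : ‖ζ - a‖ < a) : 1 / (2 * a) ≤ (ζ⁻¹).re := by
  have ha : 0 < a := (norm_nonneg _).trans_lt h
  have hζ : 0 < ‖ζ‖ := norm_pos_iff.2 fun h0 => by simpa [h0] using re_pos_of_norm_sub_lt h
  rw [inv_re, normSq_eq_norm_sq, div_le_div_iff₀ (by positivity) (by positivity)]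
  linarith [norm_sq_lt_mul_re_of_norm_sub_lt h]

namespace ComparisonData

variable {n : ℕ} {Ω : Set (En n)} {p : En n} {ℓ : En n →L[ℂ] ℂ} {v : En n}
  (D : ComparisonData Ω p ℓ v) {G : En n → En n} {ζ : ℂ}

section LineBarrier

theorem lineBarrier_le (hζ : ‖ζ‖ < D.δ') (h : p + ζ • v ∈ Ω) :
    D.lineBarrier ζ ≤ (12 / ‖ζ‖ ^ 2 - D.K) * -D.σ (p + ζ • v) := by
  have hζ0 : 0 < ‖ζ‖ := norm_pos_iff.2 (D.param_ne_zero h)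
  have hσ : 0 < -D.σ (p + ζ • v) := neg_pos.2 (D.σ_line_neg hζ h)
  have hre : ((D.k ζ)⁻¹).re ≤ 12 / ‖ζ‖ ^ 2 * -D.σ (p + ζ • v) := by
    rw [inv_re, normSq_eq_norm_sq]
    calc (D.k ζ).re / ‖D.k ζ‖ ^ 2 ≤ 3 * -D.σ (p + ζ • v) / (‖ζ‖ / 2) ^ 2 := by
          gcongr
          exacts [D.re_k_le ζ (hζ.trans_le D.δ'_le) h, D.half_norm_le_norm_k hζ]
      _ = _ := by field_simp; ring
  unfold lineBarrier
  linarith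

theorem continuousAt_lineBarrier (hζ : ‖ζ‖ < D.δ') (h0 : ζ ≠ 0) :
    ContinuousAt D.lineBarrier ζ := by
  have hk : ContinuousAt (fun ζ => ((D.k ζ)⁻¹).re) ζ :=
    continuous_re.continuousAt.comp (D.k_diff.continuous.continuousAt.inv₀ (D.k_ne_zero hζ h0))
  have hσ : Continuous fun ζ : ℂ => D.σ (p + ζ • v) := D.contDiff.continuous.comp (by fun_prop)
  exact hk.add (continuousAt_const.mul hσ.continuousAt)

theorem analyticAt_inv_k (hζ : ‖ζ‖ < D.δ') (h0 : ζ ≠ 0) : AnalyticAt ℂ (fun x => (D.k x)⁻¹) ζ :=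
  (D.k_diff.analyticAt ζ).fun_inv (D.k_ne_zero hζ h0)

theorem deriv_line (ζ : ℂ) : deriv (fun x : ℂ => p + x • v) ζ = v := by
  simpa using (((hasDerivAt_id ζ).smul_const v).const_add p).deriv

theorem laplacianLE_neg_σ_line (hζ : ‖ζ‖ < D.δ') :
    LaplacianLE (fun x : ℂ => D.K * -D.σ (p + x • v)) ζ (D.K * (-4 * (D.c * ‖v‖ ^ 2))) := by
  refine ((LaplacianLE.neg_comp D.contDiff.contDiffAt (by fun_prop)).mono ?_).const_mul D.K_pos.le
  rw [deriv_line]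
  linarith [D.levi _ (D.norm_line_sub_lt hζ) v]

include D in
theorem K_mul_neg : D.K * (-4 * (D.c * ‖v‖ ^ 2)) < 0 := by
  have hv : 0 < ‖v‖ := norm_pos_iff.2 D.direction_ne_zero
  have := D.c_pos
  have := D.K_pos
  rw [neg_mul, mul_neg, neg_lt_zero]
  positivity

theorem laplacianLE_neg_lineBarrier (hζ : ‖ζ‖ < D.δ') (h0 : ζ ≠ 0) :
    LaplacianLE (fun x => -D.lineBarrier x) ζ (D.K * (-4 * (D.c * ‖v‖ ^ 2))) := by
  refine (((LaplacianLE.re_of_analyticAt (D.analyticAt_inv_k hζ h0).fun_neg).add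
    (D.laplacianLE_neg_σ_line hζ)).congr (.of_eq <| funext fun x => ?_)).mono (zero_add _).le
  simp only [lineBarrier, neg_re]
  ring

theorem exists_isCompact_lineBarrier_le {η ε : ℝ} (hη : 0 < η) (hε : 0 < ε) :
    ∃ S ⊆ {ζ : ℂ | ‖ζ‖ < D.δ' ∧ p + ζ • v ∈ Ω}, IsCompact S ∧
      ∀ ζ ∈ {ζ : ℂ | ‖ζ‖ < D.δ' ∧ p + ζ • v ∈ Ω}, ζ ∉ S → η ≤ ‖ζ‖ → D.lineBarrier ζ ≤ ε := by
  have hδ' := D.δ'_pos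
  have hσ : Continuous fun ζ : ℂ => D.σ (p + ζ • v) := D.contDiff.continuous.comp (by fun_prop)
  refine ⟨closedBall 0 (D.δ' / 2) ∩ {ζ | D.σ (p + ζ • v) ≤ -(ε * η ^ 2 / 12)}, ?_,
    (isCompact_closedBall _ _).inter_right (isClosed_le hσ continuous_const), ?_⟩
  · rintro ζ ⟨hball, hσζ⟩
    have hζ : ‖ζ‖ < D.δ' := (mem_closedBall_zero_iff.1 hball).trans_lt (half_lt_self hδ')
    have hneg : -(ε * η ^ 2 / 12) < 0 := neg_neg_of_pos (by positivity)
    exact ⟨hζ, (D.mem_iff _ (D.norm_line_sub_lt hζ)).2 (hσζ.trans_lt hneg)⟩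
  · rintro ζ ⟨hζ, hmem⟩ hS hηζ
    have hs : 0 < -D.σ (p + ζ • v) := neg_pos.2 (D.σ_line_neg hζ hmem)
    refine (D.lineBarrier_le hζ hmem).trans ?_
    rcases le_or_gt ‖ζ‖ (D.δ' / 2) with h | h
    · have hsmall : -D.σ (p + ζ • v) < ε * η ^ 2 / 12 :=
        neg_lt.1 (not_le.1 fun hle => hS ⟨mem_closedBall_zero_iff.2 h, hle⟩)
      calc (12 / ‖ζ‖ ^ 2 - D.K) * -D.σ (p + ζ • v)
          ≤ 12 / η ^ 2 * (ε * η ^ 2 / 12) := by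
            gcongr
            exact (sub_le_self _ D.K_pos.le).trans (by gcongr)
        _ = ε := by field_simp
    · have hK : 12 / ‖ζ‖ ^ 2 ≤ D.K := by
        rw [div_le_iff₀ (pow_pos (hη.trans_le hηζ) 2)]
        nlinarith [D.K_ge, mul_le_mul_of_nonneg_left (pow_le_pow_left₀ (by positivity) h.le 2)
          D.K_pos.le]
      exact (mul_nonpos_of_nonpos_of_nonneg (sub_nonpos.2 hK) hs.le).trans hε.le

theorem eventually_lineBarrier_le_add (hG : IsTangentSelfMap Ω p G) {ε : ℝ} (hε : 0 < ε) :
    ∀ᶠ ζ in lineNhds Ω p v, D.lineBarrier ζ ≤ D.barrier (G (p + ζ • v)) + ε := by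
  have hsum := ((D.tendsto_reciprocalGap hG).norm).add (D.tendsto_inv_f_comp_smul_tangential hG)
  rw [norm_zero, add_zero] at hsum
  filter_upwards [hsum.eventually_lt_const hε, eventually_lineNhds_mem,
    eventually_lineNhds_norm_lt D.δ'_pos, D.eventually_norm_comp_sub_lt hG D.r₁_pos]
    with ζ hζε hmem hζ hr₁
  have hre := D.re_reciprocalGap_le_majorant hζ hmem (hG.mapsTo hmem) (hr₁.trans D.r₁_lt_r)
  rw [D.barrier_of_norm_le (hG.mapsTo hmem) hr₁.le]
  rw [D.majorant_eq] at hre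
  linarith [neg_abs_le (D.reciprocalGap G ζ).re, abs_re_le_norm (D.reciprocalGap G ζ)]

theorem lineBarrier_le_barrier_comp (hΩ : IsOpen Ω) (hG : IsTangentSelfMap Ω p G)
    (hζ : ‖ζ‖ < D.δ') (hmem : p + ζ • v ∈ Ω) : D.lineBarrier ζ ≤ D.barrier (G (p + ζ • v)) := by
  have hline : Continuous fun ζ : ℂ => p + ζ • v := by fun_prop
  have hV : IsOpen {ζ : ℂ | ‖ζ‖ < D.δ' ∧ p + ζ • v ∈ Ω} :=
    (isOpen_lt continuous_norm continuous_const).inter (hΩ.preimage hline)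
  suffices 0 ≤ D.barrier (G (p + ζ • v)) + -D.lineBarrier ζ by linarith
  refine nonneg_of_laplacianLE_neg hV (U := fun ζ => D.barrier (G (p + ζ • v)) + -D.lineBarrier ζ)
    (fun x hx => ?_) (fun x hx => ⟨_, ?_, (D.laplacianLE_barrier (hG.analyticAt_line hΩ hx.2)
      (hG.mapsTo hx.2)).add (D.laplacianLE_neg_lineBarrier hx.1 (D.param_ne_zero hx.2))⟩)
    (fun ε hε => ?_) ⟨hζ, hmem⟩
  · exact (LowerSemicontinuousAt.comp (g := fun x : ℂ => G (p + x • v))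
      (D.lowerSemicontinuousAt_barrier (hG.mapsTo hx.2))
      (hG.analyticAt_line hΩ hx.2).continuousAt).add
      (D.continuousAt_lineBarrier hx.1 (D.param_ne_zero hx.2)).neg.lowerSemicontinuousAt
  · rw [zero_add]
    exact D.K_mul_neg
  · obtain ⟨η, hη, hnear⟩ := Metric.eventually_nhds_iff.1
      (eventually_nhdsWithin_iff.1 (D.eventually_lineBarrier_le_add hG hε))
    obtain ⟨S, hSV, hS, hfar⟩ := D.exists_isCompact_lineBarrier_le hη hε
    refine ⟨S, hSV, hS, fun x hx hxS => ?_⟩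
    rcases lt_or_ge ‖x‖ η with h | h
    · linarith [hnear (by rwa [dist_zero_right]) hx.2]
    · linarith [hfar x hx hxS h, D.barrier_nonneg (hG.mapsTo hx.2)]

end LineBarrier

section Localization

theorem abs_σ_le_C {z : En n} (hr : ‖z - p‖ < D.r) : |D.σ z| ≤ D.C :=
  (D.abs_σ_le z hr).trans (mul_le_of_le_one_right D.C_pos.le (hr.le.trans D.r_le_one))

theorem norm_inv_k_sub_inv_le (hζ : ‖ζ‖ < D.δ') (h0 : ζ ≠ 0) :
    ‖(D.k ζ)⁻¹ - ζ⁻¹‖ ≤ 2 * D.C := by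
  have : 0 < ‖ζ‖ := norm_pos_iff.2 h0
  have hC := D.C_pos
  rw [inv_sub_inv (D.k_ne_zero hζ h0) h0, norm_div, norm_mul, norm_sub_rev]
  calc ‖D.k ζ - ζ‖ / (‖D.k ζ‖ * ‖ζ‖) ≤ (D.C * ‖ζ‖ ^ 2) / (‖ζ‖ / 2 * ‖ζ‖) := by
        gcongr
        exacts [D.k_sub ζ (hζ.trans_le D.δ'_le), D.half_norm_le_norm_k hζ]
    _ = 2 * D.C := by field_simp

theorem le_lineBarrier {a : ℝ} (hζ : ‖ζ‖ < D.δ') (hζa : ‖ζ - a‖ < a) :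
    1 / (2 * a) - 2 * D.C - D.K * D.C ≤ D.lineBarrier ζ := by
  have h0 : ζ ≠ 0 := fun h => by simpa [h] using re_pos_of_norm_sub_lt hζa
  have hre := (abs_le.1 ((abs_re_le_norm _).trans (D.norm_inv_k_sub_inv_le hζ h0))).1
  have hσ := mul_le_mul_of_nonneg_left (abs_le.1 (D.abs_σ_le_C (D.norm_line_sub_lt hζ))).1
    D.K_pos.le
  rw [sub_re] at hre
  unfold lineBarrier
  linarith [half_inv_le_re_inv hζa]

theorem innerBarrier_le {z : En n} (hr : ‖z - p‖ < D.r) :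
    D.innerBarrier z ≤ ‖D.f z‖⁻¹ + D.K * D.C + D.κ := by
  have hσ := mul_le_mul_of_nonneg_left (abs_le.1 (D.abs_σ_le_C hr)).1 D.K_pos.le
  have hκ : D.κ * ‖z - p‖ ^ 2 ≤ D.κ :=
    mul_le_of_le_one_right D.κ_pos.le (pow_le_one₀ (norm_nonneg _) (hr.le.trans D.r_le_one))
  have hc := mul_nonneg D.c_pos.le (sq_nonneg ‖(D.f z)⁻¹ • D.tangential z‖)
  rw [← norm_inv]
  unfold innerBarrier
  linarith [re_le_norm (D.f z)⁻¹]

/-- For radii `a` up to this bound, every tangent self-map sends the disc `‖ζ - a‖ < a` of the line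
`ζ ↦ p + ζ • v` into the region where the barrier is `innerBarrier`. -/
def discRadius : ℝ :=
  min (min 1 (D.δ' / 4)) (1 / (8 * (2 * D.C + D.K * D.C + D.κ + 1)))

theorem discRadius_pos : 0 < D.discRadius := by
  have := D.C_pos
  have := D.K_pos
  have := D.κ_pos
  have := D.δ'_pos
  unfold discRadius
  positivity

variable {a : ℝ} (ha : a ≤ D.discRadius) (hζ : ‖ζ - a‖ < a)

include ha in
theorem le_one_of_le_discRadius : a ≤ 1 := ha.trans ((min_le_left _ _).trans (min_le_left _ _))

include ha in
theorem le_of_le_discRadius : a ≤ D.δ' / 4 :=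
  ha.trans ((min_le_left _ _).trans (min_le_right _ _))

include ha hζ

theorem norm_lt_of_mem_disc : ‖ζ‖ < D.δ' := by
  linarith [norm_lt_two_mul_of_norm_sub_lt hζ, D.le_of_le_discRadius ha, D.δ'_pos]

theorem mem_of_mem_disc : p + ζ • v ∈ Ω :=
  D.disc a (by linarith [D.le_of_le_discRadius ha, D.δ'_pos, D.δ'_le]) ζ hζ

theorem le_lineBarrier_of_mem_disc :
    1 / (8 * a) + D.K * D.C + D.κ < D.lineBarrier ζ := by
  have ha0 : 0 < a := (norm_nonneg _).trans_lt hζ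
  have hKC := mul_pos D.K_pos D.C_pos
  have hM : 0 < 2 * D.C + D.K * D.C + D.κ + 1 := by linarith [D.C_pos, D.κ_pos]
  have haM : 2 * D.C + D.K * D.C + D.κ + 1 ≤ 1 / (8 * a) := by
    rw [le_div_iff₀ (by positivity), mul_left_comm, ← mul_assoc, ← le_div_iff₀' (by positivity)]
    exact ha.trans (min_le_right _ _)
  have hhalf : 1 / (2 * a) = 4 * (1 / (8 * a)) := by field_simp; norm_num
  linarith [D.le_lineBarrier (D.norm_lt_of_mem_disc ha hζ) hζ, D.C_pos, D.κ_pos]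

variable (hΩ : IsOpen Ω) (hG : IsTangentSelfMap Ω p G)

include hΩ hG

theorem norm_comp_sub_lt_r₁ : ‖G (p + ζ • v) - p‖ < D.r₁ := by
  have hκ : D.κ * D.r₂ ^ 2 ≤ D.κ := mul_le_of_le_one_right D.κ_pos.le
    (pow_le_one₀ D.r₂_pos.le (D.r₂_lt.le.trans D.r_le_one))
  have ha0 : 0 < a := (norm_nonneg _).trans_lt hζ
  have hinv : 0 < 1 / (8 * a) := by positivity
  refine D.norm_lt_of_lt_barrier ?_
  linarith [D.le_lineBarrier_of_mem_disc ha hζ, mul_pos D.K_pos D.C_pos,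
    D.lineBarrier_le_barrier_comp hΩ hG (D.norm_lt_of_mem_disc ha hζ) (D.mem_of_mem_disc ha hζ)]

theorem norm_comp_sub_lt_r : ‖G (p + ζ • v) - p‖ < D.r :=
  (D.norm_comp_sub_lt_r₁ ha hζ hΩ hG).trans D.r₁_lt_r

theorem lineBarrier_le_innerBarrier_comp : D.lineBarrier ζ ≤ D.innerBarrier (G (p + ζ • v)) := by
  have hmem := D.mem_of_mem_disc ha hζ
  rw [← D.barrier_of_norm_le (hG.mapsTo hmem) (D.norm_comp_sub_lt_r₁ ha hζ hΩ hG).le]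
  exact D.lineBarrier_le_barrier_comp hΩ hG (D.norm_lt_of_mem_disc ha hζ) hmem

theorem f_comp_ne_zero : D.f (G (p + ζ • v)) ≠ 0 :=
  D.f_ne_zero (hG.mapsTo (D.mem_of_mem_disc ha hζ)) (D.norm_comp_sub_lt_r ha hζ hΩ hG)

theorem norm_f_comp_le : ‖D.f (G (p + ζ • v))‖ ≤ 8 * a := by
  have ha0 : 0 < a := (norm_nonneg _).trans_lt hζ
  have hf := norm_pos_iff.2 (D.f_comp_ne_zero ha hζ hΩ hG)
  rw [← inv_le_inv₀ (by positivity) hf, inv_eq_one_div]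
  linarith [D.le_lineBarrier_of_mem_disc ha hζ, D.lineBarrier_le_innerBarrier_comp ha hζ hΩ hG,
    D.innerBarrier_le (D.norm_comp_sub_lt_r ha hζ hΩ hG)]

end Localization

end ComparisonData

theorem exists_forall_mul_sq_div_sub_one_lt {R : ℝ} (hR : 0 < R) (β : ℝ) {ε : ℝ} (hε : 0 < ε) :
    ∃ ρ < R, ∀ r ∈ Ioo ρ R, β * ((R / r) ^ 2 - 1) < ε := by
  have hcont : ContinuousAt (fun r : ℝ => β * ((R / r) ^ 2 - 1)) R := by
    fun_prop (disch := exact hR.ne')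
  have hlim : Tendsto (fun r : ℝ => β * ((R / r) ^ 2 - 1)) (𝓝[<] R) (𝓝 0) := by
    simpa [hR.ne'] using hcont.tendsto.mono_left nhdsWithin_le_nhds
  exact mem_nhdsLT_iff_exists_Ioo_subset.1 (hlim.eventually_lt_const hε)

theorem mul_sq_div_sub_one_le_of_laplacianLE_neg {x₀ : ℂ} {s s' R β : ℝ} (hs : 0 < s)
    (hss' : s < s') (hsR : s < R) (hβ : 0 ≤ β) {u : ℂ → ℝ}
    (hu : ∀ ζ ∈ ball x₀ R, LowerSemicontinuousAt u ζ)
    (hlap : ∀ ζ ∈ ball x₀ R, ∃ l < 0, LaplacianLE u ζ l) (hu0 : ∀ ζ ∈ ball x₀ R, 0 ≤ u ζ)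
    (hβu : ∀ ζ ∈ closedBall x₀ s', β ≤ u ζ) {ζ : ℂ} (hζs : s < ‖ζ - x₀‖) (hζR : ‖ζ - x₀‖ < R) :
    β * ((R / ‖ζ - x₀‖) ^ 2 - 1) ≤ ((R / s) ^ 2 - 1) * u ζ := by
  have hR : 0 < R := hs.trans hsR
  have hD : 0 < (R / s) ^ 2 - 1 := sub_pos.2 (one_lt_pow₀ ((one_lt_div hs).2 hsR) two_ne_zero)
  have hnc : Continuous fun ζ : ℂ => ‖ζ - x₀‖ := by fun_prop
  have hγ : ∀ x : ℂ, s < ‖x - x₀‖ → AnalyticAt ℂ (fun x : ℂ => (R : ℂ) / (x - x₀)) x :=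
    fun x hx => by
      have : x - x₀ ≠ 0 := norm_pos_iff.1 (hs.trans hx)
      fun_prop (disch := assumption)
  have hnorm : ∀ x : ℂ, ‖(R : ℂ) / (x - x₀)‖ = R / ‖x - x₀‖ := fun x => by
    rw [norm_div, norm_real, Real.norm_of_nonneg hR.le]
  -- `(R / ‖ζ - x₀‖) ^ 2 - 1` is subharmonic and vanishes for `‖ζ - x₀‖ = R`.
  suffices 0 ≤ ((R / s) ^ 2 - 1) * u ζ + (β * -‖(R : ℂ) / (ζ - x₀)‖ ^ 2 + β) by
    rw [hnorm] at this
    linarith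
  refine nonneg_of_laplacianLE_neg (V := {ζ | s < ‖ζ - x₀‖ ∧ ‖ζ - x₀‖ < R})
    (U := fun x => ((R / s) ^ 2 - 1) * u x + (β * -‖(R : ℂ) / (x - x₀)‖ ^ 2 + β))
    ((isOpen_lt continuous_const hnc).inter (isOpen_lt hnc continuous_const))
    (fun x hx => ?_) (fun x hx => ?_) (fun ε hε => ?_) ⟨hζs, hζR⟩
  · have := (hγ x hx.1).continuousAt
    refine LowerSemicontinuousAt.add ?_ (ContinuousAt.lowerSemicontinuousAt (by fun_prop))
    exact (continuous_const_mul _).continuousAt.comp_lowerSemicontinuousAt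
      (hu x (mem_ball_iff_norm.2 hx.2)) (monotone_mul_left_of_nonneg hD.le)
  · obtain ⟨l, hl, hul⟩ := hlap x (mem_ball_iff_norm.2 hx.2)
    refine ⟨_, ?_, (hul.const_mul hD.le).add
      (((LaplacianLE.neg_norm_sq_of_analyticAt (hγ x hx.1)).const_mul hβ).add (.const β x))⟩
    simpa using mul_neg_of_pos_of_neg hD hl
  · obtain ⟨ρ, hρ, hρR⟩ := exists_forall_mul_sq_div_sub_one_lt hR β hε
    refine ⟨{x | s' ≤ ‖x - x₀‖ ∧ ‖x - x₀‖ ≤ ρ}, fun x hx => ⟨hss'.trans_le hx.1, hx.2.trans_lt hρ⟩,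
      ?_, fun x hx hxS => ?_⟩
    · refine (isCompact_closedBall x₀ ρ).of_isClosed_subset
        ((isClosed_le continuous_const hnc).inter (isClosed_le hnc continuous_const)) ?_
      exact fun x hx => mem_closedBall_iff_norm.2 hx.2
    rw [hnorm]
    rcases le_or_gt ‖x - x₀‖ s' with h | h
    · have hβux := mul_le_mul_of_nonneg_left (hβu x (mem_closedBall_iff_norm.2 h)) hD.le
      have hle : (R / ‖x - x₀‖) ^ 2 ≤ (R / s) ^ 2 := by
        have := hx.1.le
        gcongr
      nlinarith [mul_le_mul_of_nonneg_left hle hβ]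
    · have hout : β * ((R / ‖x - x₀‖) ^ 2 - 1) < ε :=
        hρR _ ⟨not_le.1 fun hle => hxS ⟨h.le, hle⟩, hx.2⟩
      nlinarith [mul_nonneg hD.le (hu0 x (mem_ball_iff_norm.2 hx.2))]

theorem norm_ofReal_sub_of_lt {a t : ℝ} (h : t < a) : ‖(t : ℂ) - a‖ = a - t := by
  rw [← ofReal_sub, norm_real, Real.norm_eq_abs, abs_sub_comm, abs_of_pos (sub_pos.2 h)]

theorem one_add_le_sq_div_sub {a t : ℝ} (ht : 0 ≤ t) (hta : t < a) :
    1 + 2 * t / a ≤ (a / (a - t)) ^ 2 := by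
  have ha : 0 < a := ht.trans_lt hta
  have hsub : 0 < a - t := sub_pos.2 hta
  calc 1 + 2 * t / a = 1 + (2 : ℕ) * (t / a) := by push_cast; ring
    _ ≤ (1 + t / a) ^ 2 := one_add_mul_le_pow (by linarith [div_nonneg ht ha.le]) 2
    _ ≤ (a / (a - t)) ^ 2 := by
        gcongr
        rw [le_div_iff₀ hsub, ← sub_nonneg]
        calc 0 ≤ t ^ 2 / a := by positivity
          _ = a - (1 + t / a) * (a - t) := by field_simp; ring

theorem hopf_le_mul_of_laplacianLE_neg {a β C : ℝ} (ha : 0 < a) {u : ℂ → ℝ}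
    (hu : ∀ ζ ∈ ball (a : ℂ) a, LowerSemicontinuousAt u ζ)
    (hlap : ∀ ζ ∈ ball (a : ℂ) a, ∃ l < 0, LaplacianLE u ζ l)
    (hu0 : ∀ ζ ∈ ball (a : ℂ) a, 0 ≤ u ζ) (hβu : ∀ ζ ∈ closedBall (a : ℂ) (a / 5), β ≤ u ζ)
    (hend : ∀ᶠ t : ℝ in 𝓝[>] 0, u t ≤ C * t) : β ≤ 18 * C * a := by
  obtain ⟨t, hut, ht0, hta⟩ := (hend.and (Ioo_mem_nhdsGT (half_pos ha))).exists
  have hta' : t < a := hta.trans (half_lt_self ha)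
  have hnorm := norm_ofReal_sub_of_lt hta'
  have hCt : 0 ≤ C * t := (hu0 t (mem_ball_iff_norm.2 (by linarith))).trans hut
  have hCa : 0 ≤ C * a := mul_nonneg (nonneg_of_mul_nonneg_left hCt ht0) ha.le
  rcases le_total β 0 with hβ | hβ
  · linarith
  have hannulus := mul_sq_div_sub_one_le_of_laplacianLE_neg (s := a / 6) (s' := a / 5)
    (ζ := (t : ℂ)) (by positivity) (by linarith) (by linarith) hβ hu hlap hu0 hβu
    (by linarith) (by linarith)
  rw [hnorm, show a / (a / 6) = 6 by field_simp] at hannulus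
  have hgrowth := mul_le_mul_of_nonneg_left (one_add_le_sq_div_sub ht0.le hta') hβ
  have hlin : β * 2 / a * t ≤ 35 * C * t :=
    calc β * 2 / a * t = β * (2 * t / a) := by ring
      _ ≤ 35 * C * t := by linarith
  have := le_of_mul_le_mul_right hlin ht0
  rw [div_le_iff₀ ha] at this
  linarith

theorem borelCaratheodory_sub {h : ℂ → ℂ} {x₀ x : ℂ} {M R : ℝ} (hM : 0 < M)
    (hh : DifferentiableOn ℂ h (ball x₀ R)) (hre : ∀ x ∈ ball x₀ R, (h x₀ - h x).re ≤ M)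
    (hx : x ∈ ball x₀ R) : ‖h x - h x₀‖ ≤ 2 * M * ‖x - x₀‖ / (R - ‖x - x₀‖) := by
  have hmaps : MapsTo (fun w => w + x₀) (ball 0 R) (ball x₀ R) := fun w hw => by
    simpa [dist_eq_norm] using hw
  rw [norm_sub_rev]
  simpa using borelCaratheodory_zero (f := fun w => h x₀ - h (w + x₀)) (z := x - x₀) hM
    ((differentiableOn_const _).sub (hh.comp (by fun_prop) hmaps))
    (fun w hw => hre _ (hmaps hw)) (pos_of_mem_ball hx) (by simpa [dist_eq_norm] using hx)
    (by simp)

section Oscillation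

variable {a e C : ℝ} {u : ℂ → ℝ} {h : ℂ → ℂ} (ha : 0 < a) (he : 0 < e)
  (hh : DifferentiableOn ℂ h (ball (a : ℂ) a))
  (hu0 : ∀ ζ ∈ ball (a : ℂ) a, 0 ≤ u ζ)
  (hle : ∀ ζ ∈ ball (a : ℂ) a, u ζ ≤ (h ζ).re + e)

include ha he hh hu0 hle

theorem norm_sub_le_of_nonneg_of_le {ζ : ℂ} (hζ : ζ ∈ ball (a : ℂ) a) :
    ‖h ζ - h a‖ ≤ 2 * ((h a).re + 2 * e) * ‖ζ - a‖ / (a - ‖ζ - a‖) := by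
  have hlower : ∀ x ∈ ball (a : ℂ) a, -e ≤ (h x).re := fun x hx => by
    linarith [hu0 x hx, hle x hx]
  refine borelCaratheodory_sub (by linarith [hlower a (mem_ball_self ha)]) hh (fun x hx => ?_) hζ
  rw [sub_re]
  linarith [hlower x hx]

variable (hge : ∀ ζ ∈ ball (a : ℂ) a, (h ζ).re ≤ u ζ)
  (hu : ∀ ζ ∈ ball (a : ℂ) a, LowerSemicontinuousAt u ζ)
  (hlap : ∀ ζ ∈ ball (a : ℂ) a, ∃ l < 0, LaplacianLE u ζ l)
  (hend : ∀ᶠ t : ℝ in 𝓝[>] 0, u t ≤ C * t)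

include hge hu hlap hend

theorem re_center_le : (h a).re + 2 * e ≤ 4 * e + 36 * C * a := by
  have hM : 0 ≤ (h a).re + 2 * e := by
    linarith [hu0 a (mem_ball_self ha), hle a (mem_ball_self ha)]
  have hopf := hopf_le_mul_of_laplacianLE_neg (β := ((h a).re + 2 * e) / 2 - 2 * e) ha hu hlap hu0
    (fun x hx => ?_) hend
  · linarith
  have hx' := mem_closedBall_iff_norm.1 hx
  have hxa : x ∈ ball (a : ℂ) a := mem_ball_iff_norm.2 (by linarith)
  have hosc : ‖h x - h a‖ ≤ ((h a).re + 2 * e) / 2 := by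
    refine (norm_sub_le_of_nonneg_of_le ha he hh hu0 hle hxa).trans ?_
    rw [div_le_iff₀ (by linarith)]
    linarith [mul_le_mul_of_nonneg_left hx' hM]
  have := (abs_le.1 ((abs_re_le_norm _).trans hosc)).1
  rw [sub_re] at this
  linarith [hge x hxa]

theorem norm_sub_center_le {ζ : ℂ} (hζ : ‖ζ - a‖ ≤ 3 / 4 * a) :
    ‖h ζ - h a‖ ≤ 24 * e + 216 * C * a := by
  have hζa : ζ ∈ ball (a : ℂ) a := mem_ball_iff_norm.2 (by linarith)
  have hM := re_center_le ha he hh hu0 hle hge hu hlap hend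
  have hM0 : 0 ≤ (h a).re + 2 * e := by
    linarith [hu0 a (mem_ball_self ha), hle a (mem_ball_self ha)]
  calc ‖h ζ - h a‖ ≤ 2 * ((h a).re + 2 * e) * ‖ζ - a‖ / (a - ‖ζ - a‖) :=
        norm_sub_le_of_nonneg_of_le ha he hh hu0 hle hζa
    _ ≤ 2 * ((h a).re + 2 * e) * (3 / 4 * a) / (a - 3 / 4 * a) := by
        gcongr
        linarith
    _ = 6 * ((h a).re + 2 * e) := by
        have : a - 3 / 4 * a ≠ 0 := by linarith
        field_simp
        ring
    _ ≤ 24 * e + 216 * C * a := by linarith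

end Oscillation

theorem norm_le_four_mul_sqrt {E : Type*} [NormedAddCommGroup E] {φ : ℝ → E} {A a₀ a : ℝ}
    (hA : 0 ≤ A) (hφ : Tendsto φ (𝓝[>] 0) (𝓝 0))
    (hhalf : ∀ a ∈ Ioc 0 a₀, ‖φ (a / 2) - φ a‖ ≤ A * √a) (ha : a ∈ Ioc 0 a₀) :
    ‖φ a‖ ≤ 4 * A * √a := by
  have hpos : ∀ m : ℕ, 0 < a / 2 ^ m := fun m => div_pos ha.1 (by positivity)
  have hmono : Monotone fun m : ℕ => ‖φ (a / 2 ^ m)‖ - 4 * A * √(a / 2 ^ m) := by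
    refine monotone_nat_of_le_succ fun m => ?_
    have hle : a / 2 ^ m ≤ a := div_le_self ha.1.le (one_le_pow₀ one_le_two)
    have hstep := hhalf _ ⟨hpos m, hle.trans ha.2⟩
    have hsqrt : √(a / 2 ^ m / 2) ≤ 3 / 4 * √(a / 2 ^ m) := by
      rw [Real.sqrt_le_left (by positivity), mul_pow, Real.sq_sqrt (hpos m).le]
      linarith [hpos m]
    rw [pow_succ, ← div_div]
    nlinarith [norm_sub_norm_le (φ (a / 2 ^ m)) (φ (a / 2 ^ m / 2)),
      norm_sub_rev (φ (a / 2 ^ m)) (φ (a / 2 ^ m / 2)), mul_le_mul_of_nonneg_left hsqrt hA]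
  have hlim : Tendsto (fun m : ℕ => a / 2 ^ m) atTop (𝓝[>] 0) :=
    tendsto_nhdsWithin_iff.2 ⟨tendsto_const_nhds.div_atTop
      (tendsto_pow_atTop_atTop_of_one_lt one_lt_two), .of_forall hpos⟩
  have hsqrt : Tendsto (fun m : ℕ => √(a / 2 ^ m)) atTop (𝓝 √0) :=
    (Real.continuous_sqrt.tendsto 0).comp (hlim.mono_right nhdsWithin_le_nhds)
  have hzero := (hφ.comp hlim).norm.sub (hsqrt.const_mul (4 * A))
  rw [Real.sqrt_zero, norm_zero, mul_zero, sub_zero] at hzero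
  simpa using hmono.ge_of_tendsto hzero 0

theorem le_sqrt_self {a : ℝ} (ha : 0 ≤ a) (ha1 : a ≤ 1) : a ≤ √a :=
  Real.le_sqrt_of_sq_le (pow_le_of_le_one ha ha1 two_ne_zero)

namespace ComparisonData

variable {n : ℕ} {Ω : Set (En n)} {p : En n} {ℓ : En n →L[ℂ] ℂ} {v : En n}
  (D : ComparisonData Ω p ℓ v) {G : En n → En n} {ζ : ℂ}

theorem majorant_le (hζ : ‖ζ‖ < D.δ') (hr : ‖G (p + ζ • v) - p‖ < D.r) :
    D.majorant G ζ ≤ (D.reciprocalGap G ζ).re + ((D.K * D.C + D.κ) * ‖G (p + ζ • v) - p‖ +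
      D.K * D.C * ‖v‖ * ‖ζ‖) := by
  have hσG := mul_le_mul_of_nonneg_left ((neg_le_abs _).trans (D.abs_σ_le _ hr)) D.K_pos.le
  have hσ := mul_le_mul_of_nonneg_left
    ((neg_le_abs _).trans (D.abs_σ_le _ (D.norm_line_sub_lt hζ))) D.K_pos.le
  have hκ := mul_le_mul_of_nonneg_left
    (pow_le_of_le_one (norm_nonneg _) (hr.le.trans D.r_le_one) two_ne_zero) D.κ_pos.le
  rw [add_sub_cancel_left, norm_smul] at hσ
  unfold majorant
  linarith

theorem analyticAt_reciprocalGap (hΩ : IsOpen Ω) (hG : IsTangentSelfMap Ω p G)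
    (hζ : ‖ζ‖ < D.δ') (hmem : p + ζ • v ∈ Ω) (hf : D.f (G (p + ζ • v)) ≠ 0) :
    AnalyticAt ℂ (D.reciprocalGap G) ζ :=
  ((analyticAt_comp_of_differentiableOn D.f_diff.differentiableOn isOpen_univ
    (hG.analyticAt_line hΩ hmem) (mem_univ _)).fun_inv hf).fun_sub
    (D.analyticAt_inv_k hζ (D.param_ne_zero hmem))

theorem laplacianLE_majorant (hΩ : IsOpen Ω) (hG : IsTangentSelfMap Ω p G)
    (hζ : ‖ζ‖ < D.δ') (hmem : p + ζ • v ∈ Ω) (hr : ‖G (p + ζ • v) - p‖ < D.r) :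
    LaplacianLE (D.majorant G) ζ (D.K * (-4 * (D.c * ‖v‖ ^ 2))) := by
  have hγ := hG.analyticAt_line hΩ hmem
  have hgap := LaplacianLE.re_of_analyticAt
    (D.analyticAt_reciprocalGap hΩ hG hζ hmem (D.f_ne_zero (hG.mapsTo hmem) hr))
  have hσ := (LaplacianLE.neg_comp D.contDiff.contDiffAt hγ).const_mul D.K_pos.le
  have hnorm := (LaplacianLE.norm_sq_of_analyticAt
    (hγ.fun_sub (analyticAt_const (v := p)))).const_mul D.κ_pos.le
  refine (((hgap.add hσ).add hnorm).add (D.laplacianLE_neg_σ_line hζ)).mono ?_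
  rw [deriv_sub_const]
  have hlevi := mul_le_mul_of_nonneg_left
    (D.levi _ hr (deriv (fun x : ℂ => G (p + x • v)) ζ)) D.K_pos.le
  have hκ := mul_le_mul_of_nonneg_right D.κ_le
    (sq_nonneg ‖deriv (fun x : ℂ => G (p + x • v)) ζ‖)
  linarith

theorem continuousAt_majorant (hΩ : IsOpen Ω) (hG : IsTangentSelfMap Ω p G)
    (hζ : ‖ζ‖ < D.δ') (hmem : p + ζ • v ∈ Ω) (hr : ‖G (p + ζ • v) - p‖ < D.r) :
    ContinuousAt (D.majorant G) ζ := by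
  have hγ := (hG.analyticAt_line hΩ hmem).continuousAt
  have hgap := (D.analyticAt_reciprocalGap hΩ hG hζ hmem
    (D.f_ne_zero (hG.mapsTo hmem) hr)).continuousAt
  have hσ := D.contDiff.continuous
  have hσG : ContinuousAt (fun x : ℂ => D.σ (G (p + x • v))) ζ :=
    ContinuousAt.comp (f := fun x : ℂ => G (p + x • v)) hσ.continuousAt hγ
  have hre : ContinuousAt (fun x => (D.reciprocalGap G x).re) ζ :=
    continuous_re.continuousAt.comp hgap
  exact ((hre.add (by fun_prop)).add
    (continuousAt_const.mul ((hγ.sub continuousAt_const).norm.pow 2))).add (by fun_prop)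

/-- The coefficient in the linear bound for the majorant at the boundary point `0`. -/
def boundaryRate : ℝ :=
  1 + ((D.K * D.C + D.κ) * (‖v‖ + 1) + D.K * D.C * ‖v‖)

/-- The coefficient in the bound by `√a` for the distance between the majorant and the real part of
the reciprocal gap on the disc `‖ζ - a‖ < a`. -/
def majorantError : ℝ :=
  (D.K * D.C + D.κ) * √(8 * D.C') + D.K * D.C * ‖v‖ * 2

/-- The coefficient in the bound by `√a` for the oscillation of the reciprocal gap around `a`. -/
def oscillationRate : ℝ :=
  24 * D.majorantError + 216 * D.boundaryRate

theorem boundaryRate_pos : 0 < D.boundaryRate := by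
  have := D.K_pos
  have := D.C_pos
  have := D.κ_pos
  unfold boundaryRate
  positivity

theorem majorantError_pos : 0 < D.majorantError := by
  have := D.K_pos
  have := D.C_pos
  have := D.C'_pos
  have := D.κ_pos
  unfold majorantError
  positivity

theorem oscillationRate_pos : 0 < D.oscillationRate := by
  have := D.boundaryRate_pos
  have := D.majorantError_pos
  unfold oscillationRate
  positivity

theorem eventually_majorant_le (hG : IsTangentSelfMap Ω p G) :
    ∀ᶠ ζ in lineNhds Ω p v, D.majorant G ζ ≤ D.boundaryRate * ‖ζ‖ := by
  filter_upwards [eventually_lineNhds_norm_lt D.δ'_pos, D.eventually_norm_comp_sub_lt hG D.r_pos,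
    D.eventually_norm_comp_sub_le hG, (D.isLittleO_reciprocalGap hG).bound one_pos]
    with ζ hζ hr hle hgap
  have hKC := mul_pos D.K_pos D.C_pos
  calc D.majorant G ζ ≤ (D.reciprocalGap G ζ).re + ((D.K * D.C + D.κ) * ‖G (p + ζ • v) - p‖ +
        D.K * D.C * ‖v‖ * ‖ζ‖) := D.majorant_le hζ hr
    _ ≤ 1 * ‖ζ‖ + ((D.K * D.C + D.κ) * ((‖v‖ + 1) * ‖ζ‖) + D.K * D.C * ‖v‖ * ‖ζ‖) := by
        have := D.κ_pos
        gcongr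
        exact (re_le_norm _).trans hgap
    _ = D.boundaryRate * ‖ζ‖ := by
        unfold boundaryRate
        ring

include D in
theorem tendsto_ofReal_lineNhds : Tendsto ((↑) : ℝ → ℂ) (𝓝[>] 0) (lineNhds Ω p v) := by
  refine tendsto_nhdsWithin_iff.2
    ⟨(continuous_ofReal.tendsto' 0 0 ofReal_zero).mono_left nhdsWithin_le_nhds, ?_⟩
  filter_upwards [Ioo_mem_nhdsGT D.δ_pos] with t ht
  exact D.disc t ht.2 t (by simpa using ht.1)

theorem eventually_majorant_ofReal_le (hG : IsTangentSelfMap Ω p G) :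
    ∀ᶠ t : ℝ in 𝓝[>] 0, D.majorant G t ≤ D.boundaryRate * t := by
  filter_upwards [D.tendsto_ofReal_lineNhds.eventually (D.eventually_majorant_le hG),
    self_mem_nhdsWithin] with t ht ht0
  rwa [norm_real, Real.norm_of_nonneg (le_of_lt ht0)] at ht

/-- The coefficient in the bound by `a ^ (5 / 4)` for the displacement of a tangent self-map. -/
def displacementRate : ℝ :=
  D.C * (8 * √(6 * D.oscillationRate / D.c) + (120 * D.oscillationRate + 16 * D.C))

section Disc

variable {a : ℝ} (ha : a ≤ D.discRadius)

include ha

theorem norm_k_le_of_mem_disc (hζ : ‖ζ - a‖ < a) : ‖D.k ζ‖ ≤ 3 * a := by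
  linarith [norm_le_norm_sub_add (D.k ζ) ζ, norm_lt_two_mul_of_norm_sub_lt hζ,
    D.norm_k_sub_le (D.norm_lt_of_mem_disc ha hζ)]

theorem norm_f_line_sub_k_le (hζ : ‖ζ - a‖ < a) :
    ‖D.f (p + ζ • v) - D.k ζ‖ ≤ 16 * D.C * (a * √(√a)) := by
  have ha0 : 0 < a := (norm_nonneg _).trans_lt hζ
  have ha1 := D.le_one_of_le_discRadius ha
  have hC := D.C_pos
  have hsqrt : a ≤ √(√a) := (le_sqrt_self ha0.le ha1).trans
    (le_sqrt_self (Real.sqrt_nonneg a) (Real.sqrt_le_one.2 ha1))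
  calc ‖D.f (p + ζ • v) - D.k ζ‖ ≤ D.C * ‖ζ‖ ^ 4 :=
        D.f_sub_k ζ ((D.norm_lt_of_mem_disc ha hζ).trans_le D.δ'_le)
    _ ≤ D.C * (2 * a) ^ 4 := by
        gcongr
        exact (norm_lt_two_mul_of_norm_sub_lt hζ).le
    _ = 16 * D.C * (a * a * (a * a)) := by ring
    _ ≤ 16 * D.C * (a * √(√a) * (1 * 1)) := by gcongr
    _ = 16 * D.C * (a * √(√a)) := by ring

variable (hΩ : IsOpen Ω) (hG : IsTangentSelfMap Ω p G)

include hΩ hG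

section

variable (hζ : ‖ζ - a‖ < a)

include hζ

theorem mul_norm_sq_le_majorant :
    D.c * ‖(D.f (G (p + ζ • v)))⁻¹ • D.tangential (G (p + ζ • v))‖ ^ 2 ≤ D.majorant G ζ := by
  rw [majorant_eq]
  linarith [D.lineBarrier_le_innerBarrier_comp ha hζ hΩ hG]

theorem norm_comp_sub_le_sqrt : ‖G (p + ζ • v) - p‖ ≤ √(8 * D.C') * √a := by
  have hC' := D.C'_pos
  rw [← Real.sqrt_mul (by positivity)]
  refine Real.le_sqrt_of_sq_le ?_
  calc ‖G (p + ζ • v) - p‖ ^ 2 ≤ D.C' * ‖D.f (G (p + ζ • v))‖ :=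
        D.norm_sq_le _ (hG.mapsTo (D.mem_of_mem_disc ha hζ)) (D.norm_comp_sub_lt_r ha hζ hΩ hG)
    _ ≤ D.C' * (8 * a) := by
        gcongr
        exact D.norm_f_comp_le ha hζ hΩ hG
    _ = 8 * D.C' * a := by ring

theorem majorant_le_add_sqrt :
    D.majorant G ζ ≤ (D.reciprocalGap G ζ).re + D.majorantError * √a := by
  have ha0 : 0 < a := (norm_nonneg _).trans_lt hζ
  have hsqrt := le_sqrt_self ha0.le (D.le_one_of_le_discRadius ha)
  have hζa : ‖ζ‖ ≤ 2 * √a := by linarith [norm_lt_two_mul_of_norm_sub_lt hζ]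
  have hKC := mul_pos D.K_pos D.C_pos
  have hκ := D.κ_pos
  calc D.majorant G ζ ≤ (D.reciprocalGap G ζ).re + ((D.K * D.C + D.κ) * ‖G (p + ζ • v) - p‖ +
        D.K * D.C * ‖v‖ * ‖ζ‖) :=
        D.majorant_le (D.norm_lt_of_mem_disc ha hζ) (D.norm_comp_sub_lt_r ha hζ hΩ hG)
    _ ≤ (D.reciprocalGap G ζ).re + ((D.K * D.C + D.κ) * (√(8 * D.C') * √a) +
        D.K * D.C * ‖v‖ * (2 * √a)) := by
        gcongr
        exact D.norm_comp_sub_le_sqrt ha hΩ hG hζ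
    _ = (D.reciprocalGap G ζ).re + D.majorantError * √a := by
        unfold majorantError
        ring

end

variable (ha0 : 0 < a)

include ha0

theorem norm_reciprocalGap_sub_le (hζ : ‖ζ - a‖ ≤ 3 / 4 * a) :
    ‖D.reciprocalGap G ζ - D.reciprocalGap G a‖ ≤ D.oscillationRate * √a := by
  have hosc := norm_sub_center_le (u := D.majorant G) (h := D.reciprocalGap G)
    (C := D.boundaryRate) ha0 (mul_pos D.majorantError_pos (Real.sqrt_pos.2 ha0))
    (fun x hx => ?_) (fun x hx => ?_) (fun x hx => ?_) (fun x hx => ?_) (fun x hx => ?_)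
    (fun x hx => ?_) (D.eventually_majorant_ofReal_le hG) hζ
  · refine hosc.trans ?_
    have := mul_le_mul_of_nonneg_left
      (le_sqrt_self ha0.le (D.le_one_of_le_discRadius ha)) D.boundaryRate_pos.le
    unfold oscillationRate
    linarith
  all_goals
    have hxa := mem_ball_iff_norm.1 hx
    have hxδ := D.norm_lt_of_mem_disc ha hxa
    have hmem := D.mem_of_mem_disc ha hxa
    have hr := D.norm_comp_sub_lt_r ha hxa hΩ hG
  · exact (D.analyticAt_reciprocalGap hΩ hG hxδ hmem
      (D.f_comp_ne_zero ha hxa hΩ hG)).differentiableAt.differentiableWithinAt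
  · exact (mul_nonneg D.c_pos.le (sq_nonneg _)).trans (D.mul_norm_sq_le_majorant ha hΩ hG hxa)
  · exact D.majorant_le_add_sqrt ha hΩ hG hxa
  · exact D.re_reciprocalGap_le_majorant hxδ hmem (hG.mapsTo hmem) hr
  · exact (D.continuousAt_majorant hΩ hG hxδ hmem hr).lowerSemicontinuousAt
  · exact ⟨_, D.K_mul_neg, D.laplacianLE_majorant hΩ hG hxδ hmem hr⟩

theorem norm_reciprocalGap_center_le : ‖D.reciprocalGap G a‖ ≤ 4 * D.oscillationRate * √a := by
  refine norm_le_four_mul_sqrt (φ := fun t : ℝ => D.reciprocalGap G t) D.oscillationRate_pos.le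
    ((D.tendsto_reciprocalGap hG).comp D.tendsto_ofReal_lineNhds) (fun b hb => ?_) ⟨ha0, ha⟩
  refine D.norm_reciprocalGap_sub_le hb.2 hΩ hG hb.1 ?_
  rw [norm_ofReal_sub_of_lt (half_lt_self hb.1)]
  linarith [hb.1]

variable (hζ : ‖ζ - a‖ ≤ 3 / 4 * a)

include hζ

theorem norm_reciprocalGap_le : ‖D.reciprocalGap G ζ‖ ≤ 5 * D.oscillationRate * √a := by
  have hsplit := norm_le_norm_sub_add (D.reciprocalGap G ζ) (D.reciprocalGap G a)
  linarith [D.norm_reciprocalGap_sub_le ha hΩ hG ha0 hζ,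
    D.norm_reciprocalGap_center_le ha hΩ hG ha0]

theorem mul_norm_inv_f_comp_smul_tangential_sq_le :
    D.c * ‖(D.f (G (p + ζ • v)))⁻¹ • D.tangential (G (p + ζ • v))‖ ^ 2 ≤
      6 * D.oscillationRate * √a := by
  have hζa : ‖ζ - a‖ < a := by linarith
  have hE : D.majorantError * √a ≤ D.oscillationRate * √a := by
    gcongr
    unfold oscillationRate
    linarith [D.boundaryRate_pos, D.majorantError_pos]
  linarith [D.mul_norm_sq_le_majorant ha hΩ hG hζa, D.majorant_le_add_sqrt ha hΩ hG hζa,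
    re_le_norm (D.reciprocalGap G ζ), D.norm_reciprocalGap_le ha hΩ hG ha0 hζ]

theorem norm_f_comp_sub_k_le :
    ‖D.f (G (p + ζ • v)) - D.k ζ‖ ≤ 120 * D.oscillationRate * (a * √(√a)) := by
  have hζa : ‖ζ - a‖ < a := by linarith
  have hf := D.f_comp_ne_zero ha hζa hΩ hG
  have hk := D.k_ne_zero (D.norm_lt_of_mem_disc ha hζa)
    (D.param_ne_zero (D.mem_of_mem_disc ha hζa))
  have hR := D.oscillationRate_pos
  have ha1 := D.le_one_of_le_discRadius ha
  have hgap : D.f (G (p + ζ • v)) - D.k ζ =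
      -(D.f (G (p + ζ • v)) * D.k ζ * D.reciprocalGap G ζ) := by
    unfold reciprocalGap
    field_simp
    ring
  rw [hgap, norm_neg, norm_mul, norm_mul]
  calc ‖D.f (G (p + ζ • v))‖ * ‖D.k ζ‖ * ‖D.reciprocalGap G ζ‖
      ≤ 8 * a * (3 * a) * (5 * D.oscillationRate * √a) := by
        gcongr
        exacts [D.norm_f_comp_le ha hζa hΩ hG, D.norm_k_le_of_mem_disc ha hζa,
          D.norm_reciprocalGap_le ha hΩ hG ha0 hζ]
    _ ≤ 8 * 1 * (3 * a) * (5 * D.oscillationRate * √(√a)) := by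
        gcongr
        exact le_sqrt_self ha0.le ha1
    _ = 120 * D.oscillationRate * (a * √(√a)) := by ring

theorem norm_tangential_comp_le :
    ‖D.tangential (G (p + ζ • v))‖ ≤ 8 * √(6 * D.oscillationRate / D.c) * (a * √(√a)) := by
  have hζa : ‖ζ - a‖ < a := by linarith
  have hf := norm_pos_iff.2 (D.f_comp_ne_zero ha hζa hΩ hG)
  have hR := D.oscillationRate_pos
  have hc := D.c_pos
  have hle : ‖(D.f (G (p + ζ • v)))⁻¹ • D.tangential (G (p + ζ • v))‖ ≤
      √(6 * D.oscillationRate / D.c) * √(√a) := by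
    rw [← Real.sqrt_mul (by positivity)]
    refine Real.le_sqrt_of_sq_le ?_
    rw [div_mul_eq_mul_div, le_div_iff₀' hc]
    exact D.mul_norm_inv_f_comp_smul_tangential_sq_le ha hΩ hG ha0 hζ
  rw [norm_smul, norm_inv, inv_mul_le_iff₀ hf] at hle
  calc ‖D.tangential (G (p + ζ • v))‖
      ≤ ‖D.f (G (p + ζ • v))‖ * (√(6 * D.oscillationRate / D.c) * √(√a)) := hle
    _ ≤ 8 * a * (√(6 * D.oscillationRate / D.c) * √(√a)) := by
        gcongr
        exact D.norm_f_comp_le ha hζa hΩ hG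
    _ = 8 * √(6 * D.oscillationRate / D.c) * (a * √(√a)) := by ring

theorem norm_comp_sub_self_le :
    ‖G (p + ζ • v) - (p + ζ • v)‖ ≤ D.displacementRate * (a * √(√a)) := by
  have hζa : ‖ζ - a‖ < a := by linarith
  have hr := D.norm_comp_sub_lt_r ha hζa hΩ hG
  have hline := D.norm_line_sub_lt (D.norm_lt_of_mem_disc ha hζa)
  calc ‖G (p + ζ • v) - (p + ζ • v)‖
      ≤ D.C * (‖D.tangential (G (p + ζ • v))‖ +
        ‖D.f (G (p + ζ • v)) - D.f (p + ζ • v)‖) := by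
        rw [D.tangential_eq_sub_line ζ]
        exact D.antilip _ _ hr hline
    _ ≤ D.C * (8 * √(6 * D.oscillationRate / D.c) * (a * √(√a)) +
        (120 * D.oscillationRate * (a * √(√a)) + 16 * D.C * (a * √(√a)))) := by
        gcongr
        · exact D.C_pos.le
        · exact D.norm_tangential_comp_le ha hΩ hG ha0 hζ
        · refine (norm_sub_le_norm_sub_add_norm_sub _ (D.k ζ) _).trans (add_le_add
            (D.norm_f_comp_sub_k_le ha hΩ hG ha0 hζ) ?_)
          rw [norm_sub_rev]
          exact D.norm_f_line_sub_k_le ha hζa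
    _ = D.displacementRate * (a * √(√a)) := by
        unfold displacementRate
        ring

end Disc

end ComparisonData

section IdentityTheorem

variable {E F : Type*} [NormedAddCommGroup E] [NormedSpace ℂ E] [NormedAddCommGroup F]
  [NormedSpace ℂ F] [CompleteSpace F] {φ : E → F} {U : Set E} {x : E}

theorem eqOn_zero_ball_of_eventuallyEq_zero {r : ℝ} (hφ : DifferentiableOn ℂ φ (ball x r))
    (h0 : φ =ᶠ[𝓝 x] 0) : EqOn φ 0 (ball x r) := by
  intro w hw
  rcases eq_or_ne w x with rfl | hne
  · exact h0.self_of_nhds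
  have hpos : 0 < ‖w - x‖ := norm_pos_iff.2 (sub_ne_zero.2 hne)
  set γ : ℂ → E := fun ζ => x + ζ • (w - x)
  have hγ : Differentiable ℂ γ := by fun_prop
  have hmaps : MapsTo γ (ball 0 (r / ‖w - x‖)) (ball x r) := fun ζ hζ => by
    rw [mem_ball_zero_iff, lt_div_iff₀ hpos] at hζ
    rwa [mem_ball_iff_norm, add_sub_cancel_left, norm_smul]
  have hr : 1 < r / ‖w - x‖ := by rwa [one_lt_div hpos, ← mem_ball_iff_norm]
  have hslice : EqOn (φ ∘ γ) 0 (ball 0 (r / ‖w - x‖)) :=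
    ((hφ.comp hγ.differentiableOn hmaps).analyticOnNhd
      isOpen_ball).eqOn_zero_of_preconnected_of_eventuallyEq_zero
      (convex_ball _ _).isPreconnected (mem_ball_self (by positivity))
      ((hγ.continuous.tendsto' 0 x (by simp [γ])).eventually h0)
  have h1 : (1 : ℂ) ∈ ball 0 (r / ‖w - x‖) := by rwa [mem_ball_zero_iff, norm_one]
  simpa only [γ, comp_apply, one_smul, add_sub_cancel, Pi.zero_apply] using hslice h1

theorem eqOn_zero_of_isPreconnected_of_eventuallyEq_zero (hφ : DifferentiableOn ℂ φ U)
    (hU : IsOpen U) (hc : IsPreconnected U) (hx : x ∈ U) (h0 : φ =ᶠ[𝓝 x] 0) : EqOn φ 0 U := by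
  have hsub : U ⊆ {y | φ =ᶠ[𝓝 y] 0} := by
    refine hc.subset_of_closure_inter_subset isOpen_setOfPred_eventually_nhds ⟨x, hx, h0⟩ ?_
    rintro y ⟨hy, hyU⟩
    obtain ⟨r, hr, hrU⟩ := Metric.isOpen_iff.1 hU y hyU
    obtain ⟨y', hy', hd⟩ := Metric.mem_closure_iff.1 hy (r / 2) (by positivity)
    have hball : ball y' (r / 2) ⊆ U :=
      (ball_subset_ball' (by rw [dist_comm]; linarith)).trans hrU
    filter_upwards [isOpen_ball.mem_nhds (mem_ball.2 hd)] with w hw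
    exact eqOn_zero_ball_of_eventuallyEq_zero (hφ.mono hball) hy' hw
  exact fun y hy => (hsub hy).self_of_nhds

end IdentityTheorem

section Iterates

theorem sum_iterate_sub_apply_sub {E : Type*} [AddCommGroup E] (F : E → E) (x : E) (N : ℕ) :
    ∑ k ∈ Finset.range N, (F^[k] (F x) - F x) - ∑ k ∈ Finset.range N, (F^[k] x - x) =
      F^[N] x - x - N • (F x - x) := by
  induction N with
  | zero => simp
  | succ N ih =>
    rw [Finset.sum_range_succ, Finset.sum_range_succ, add_sub_add_comm, ih, succ_nsmul,
      ← iterate_succ_apply]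
    abel

variable {E : Type*} [NormedAddCommGroup E] [NormedSpace ℂ E] {F : E → E} {x : E} {r M : ℝ}

theorem norm_sum_iterate_sub_le (hr : 0 < r) (hd : ∀ k, DifferentiableOn ℂ F^[k] (ball x r))
    (hM : 2 * M < r) (hk : ∀ k, ∀ z ∈ ball x r, ‖F^[k] z - z‖ ≤ M) (N : ℕ) :
    ‖∑ k ∈ Finset.range N, (F^[k] (F x) - F x) - ∑ k ∈ Finset.range N, (F^[k] x - x)‖ ≤
      2 * (N * M) / r * ‖F x - x‖ := by
  set S : E → E := fun z => ∑ k ∈ Finset.range N, (F^[k] z - z)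
  have hx : x ∈ ball x r := mem_ball_self hr
  have hFx : F x ∈ ball x r := by
    have h1 := hk 1 x hx
    rw [iterate_one] at h1
    rw [mem_ball_iff_norm]
    linarith [norm_nonneg (F x - x)]
  have hSd : DifferentiableOn ℂ S (ball x r) :=
    DifferentiableOn.fun_sum fun k _ => (hd k).sub differentiableOn_id
  have hSb : ∀ z ∈ ball x r, ‖S z‖ ≤ N * M := fun z hz =>
    (norm_sum_le_of_le _ fun k _ => hk k z hz).trans (by simp)
  have hSm : MapsTo S (ball x r) (closedBall (S x) (2 * (N * M))) := fun z hz => by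
    rw [mem_closedBall_iff_norm]
    linarith [norm_sub_le (S z) (S x), hSb z hz, hSb x hx]
  simpa only [dist_eq_norm] using Complex.dist_le_div_mul_dist_of_mapsTo_ball hSd hSm hFx

/- If `F` moved `x`, then summing the displacements of the iterates along the orbit would give
linear growth in the number of iterates, whereas the Schwarz lemma bounds a fraction of it. -/
theorem eq_self_of_forall_norm_iterate_sub_le (hr : 0 < r)
    (hd : ∀ k, DifferentiableOn ℂ F^[k] (ball x r)) (hM : 2 * M < r)
    (hk : ∀ k, ∀ z ∈ ball x r, ‖F^[k] z - z‖ ≤ M) : F x = x := by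
  by_contra hne
  have hpos : 0 < ‖F x - x‖ := norm_pos_iff.2 (sub_ne_zero.2 hne)
  have hbound : ∀ N : ℕ, N * ((1 - 2 * M / r) * ‖F x - x‖) ≤ M := fun N => by
    have hN : ‖N • (F x - x)‖ = N * ‖F x - x‖ := by
      rw [← Nat.cast_smul_eq_nsmul ℂ, norm_smul, norm_natCast]
    have htri := norm_sub_le (F^[N] x - x) (F^[N] x - x - N • (F x - x))
    rw [sub_sub_cancel, hN, ← sum_iterate_sub_apply_sub] at htri
    calc N * ((1 - 2 * M / r) * ‖F x - x‖)
        = N * ‖F x - x‖ - 2 * (N * M) / r * ‖F x - x‖ := by ring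
      _ ≤ M := by
          linarith [hk N x (mem_ball_self hr), norm_sum_iterate_sub_le hr hd hM hk N]
  have hfrac : 0 < (1 - 2 * M / r) * ‖F x - x‖ :=
    mul_pos (sub_pos.2 ((div_lt_one hr).2 hM)) hpos
  obtain ⟨N, hN⟩ := exists_nat_gt (M / ((1 - 2 * M / r) * ‖F x - x‖))
  rw [div_lt_iff₀ hfrac] at hN
  exact hN.not_ge (hbound N)

end Iterates

section UniformDisplacement

theorem exists_nonempty_inter_interior_of_isOpen_subset_iUnion {X ι : Type*} [TopologicalSpace X]
    [BaireSpace X] [Countable ι] {S : Set X} (hS : IsOpen S) (hne : S.Nonempty) {A : ι → Set X}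
    (hA : ∀ i, IsClosed (A i)) (hSA : S ⊆ ⋃ i, A i) : ∃ i, (S ∩ interior (A i)).Nonempty := by
  have hne' := hne.to_subtype
  have := hS.baireSpace
  obtain ⟨i, x, hx⟩ := nonempty_interior_of_iUnion_of_closed
    (f := fun i => ((↑) : S → X) ⁻¹' A i) (fun i => (hA i).preimage continuous_subtype_val)
    (by rw [← preimage_iUnion]; exact eq_univ_of_forall fun x => hSA x.2)
  rw [← hS.isOpenMap_subtype_val.preimage_interior_eq_interior_preimage
    continuous_subtype_val] at hx
  exact ⟨i, x, x.2, hx⟩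

variable {E : Type*} [NormedAddCommGroup E] [NormedSpace ℝ E] {Ω : Set E} {p : E} {F : E → E}
  {ω : ℝ → ℝ}

/-- The directions `w` in which all iterates of `F` move the points `p + t • w`, `t ≤ 1 / (N + 1)`,
by at most `N * ω t`. Membership of `p + t • w` in `Ω` is only required in the closure, which makes
this a closed set. -/
def uniformDisplacementSet (Ω : Set E) (p : E) (F : E → E) (ω : ℝ → ℝ) (N : ℕ) : Set E :=
  {w | ∀ t ∈ Ioc (0 : ℝ) (1 / (N + 1)), p + t • w ∈ closure Ω ∧
    (p + t • w ∈ Ω → ∀ k, ‖F^[k] (p + t • w) - (p + t • w)‖ ≤ N * ω t)}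

theorem isClosed_uniformDisplacementSet (hΩ : IsOpen Ω) (hF : ∀ k, ContinuousOn F^[k] Ω) (N : ℕ) :
    IsClosed (uniformDisplacementSet Ω p F ω N) := by
  refine isClosed_of_closure_subset fun w hw t ht => ?_
  obtain ⟨x, hx, hxw⟩ := mem_closure_iff_seq_limit.1 hw
  have hc : Continuous fun w : E => p + t • w := by fun_prop
  have hxt : Tendsto (fun j => p + t • x j) atTop (𝓝 (p + t • w)) := (hc.tendsto w).comp hxw
  refine ⟨isClosed_closure.mem_of_tendsto hxt (.of_forall fun j => (hx j t ht).1),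
    fun hmem k => ?_⟩
  refine le_of_tendsto
    (((((hF k).continuousAt (hΩ.mem_nhds hmem)).tendsto.comp hxt).sub hxt).norm) ?_
  filter_upwards [hxt.eventually (hΩ.mem_nhds hmem)] with j hj
  exact (hx j t ht).2 hj k

theorem mem_iUnion_uniformDisplacementSet {w : E} {a B : ℝ} (ha : 0 < a) (hω : ∀ t > 0, 0 ≤ ω t)
    (h : ∀ t ∈ Ioc 0 a, p + t • w ∈ Ω ∧ ∀ k, ‖F^[k] (p + t • w) - (p + t • w)‖ ≤ B * ω t) :
    w ∈ ⋃ N, uniformDisplacementSet Ω p F ω N := by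
  obtain ⟨N, hN⟩ := exists_nat_gt (max B (1 / a))
  obtain ⟨hBN, haN⟩ := max_lt_iff.1 hN
  refine mem_iUnion.2 ⟨N, fun t ht => ?_⟩
  have hta : t ≤ a := ht.2.trans ((one_div_le (by positivity) ha).2 (by linarith))
  obtain ⟨hmem, hle⟩ := h t ⟨ht.1, hta⟩
  exact ⟨subset_closure hmem, fun _ k =>
    (hle k).trans (mul_le_mul_of_nonneg_right hBN.le (hω t ht.1))⟩

theorem exists_ball_norm_iterate_sub_le (hΩ : interior (closure Ω) ⊆ Ω) (hω : ω =o[𝓝[>] 0] id)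
    {N : ℕ} {w₀ : E} (hw₀ : w₀ ∈ interior (uniformDisplacementSet Ω p F ω N)) {ε : ℝ} (hε : 0 < ε) :
    ∃ z₀, ∃ s > 0, ball z₀ s ⊆ Ω ∧ ∀ k, ∀ z ∈ ball z₀ s, ‖F^[k] z - z‖ ≤ ε * s := by
  obtain ⟨r, hr, hball⟩ := Metric.isOpen_iff.1 isOpen_interior w₀ hw₀
  obtain ⟨t, ht, htN⟩ := (((hω.const_mul_left N).bound (mul_pos hε hr)).and
    (Ioc_mem_nhdsGT (by positivity : (0 : ℝ) < 1 / (N + 1)))).exists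
  have hpoint : ∀ z ∈ ball (p + t • w₀) (t * r),
      ∃ w ∈ uniformDisplacementSet Ω p F ω N, p + t • w = z := fun z hz => by
    have hzt : p + t • (t⁻¹ • (z - p)) = z := by
      rw [smul_inv_smul₀ htN.1.ne', add_sub_cancel]
    refine ⟨t⁻¹ • (z - p), interior_subset (hball ?_), hzt⟩
    rw [← hzt, mem_ball, dist_add_left, dist_smul₀, Real.norm_of_nonneg htN.1.le] at hz
    exact lt_of_mul_lt_mul_left hz htN.1.le
  have hsub : ball (p + t • w₀) (t * r) ⊆ Ω :=
    (interior_maximal (fun z hz => by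
      obtain ⟨w, hw, rfl⟩ := hpoint z hz
      exact (hw t htN).1) isOpen_ball).trans hΩ
  refine ⟨p + t • w₀, t * r, mul_pos htN.1 hr, hsub, fun k z hz => ?_⟩
  obtain ⟨w, hw, rfl⟩ := hpoint z hz
  calc ‖F^[k] (p + t • w) - (p + t • w)‖ ≤ N * ω t := (hw t htN).2 (hsub hz) k
    _ ≤ ε * r * ‖id t‖ := (le_abs_self _).trans ht
    _ = ε * (t * r) := by rw [id, Real.norm_of_nonneg htN.1.le]; ring

theorem isLittleO_mul_sqrt_sqrt : (fun t : ℝ => t * √(√t)) =o[𝓝[>] 0] id := by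
  have hc : Continuous fun t : ℝ => √(√t) := by fun_prop
  have hlim : Tendsto (fun t : ℝ => √(√t)) (𝓝[>] 0) (𝓝 0) :=
    (hc.tendsto' 0 0 (by simp)).mono_left nhdsWithin_le_nhds
  simpa [Function.id_def] using (Asymptotics.isBigO_refl id _).mul_isLittleO
    ((Asymptotics.isLittleO_one_iff ℝ).2 hlim)

end UniformDisplacement

section TangentSelfMaps

variable {n : ℕ} {Ω : Set (En n)} {p : En n}

namespace IsTangentSelfMap

theorem comp {F G : En n → En n} (hF : IsTangentSelfMap Ω p F) (hG : IsTangentSelfMap Ω p G)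
    (hp : p ∉ Ω) : IsTangentSelfMap Ω p (F ∘ G) := by
  refine ⟨hF.differentiableOn.comp hG.differentiableOn hG.mapsTo, hF.mapsTo.comp hG.mapsTo, ?_⟩
  have hGo := hG.littleOh.isLittleO hp
  have hsub : Tendsto (fun z => z - p) (𝓝[Ω] p) (𝓝 0) :=
    ((continuous_sub_right p).tendsto' p 0 (sub_self p)).mono_left nhdsWithin_le_nhds
  have hGO : (fun z => G z - p) =O[𝓝[Ω] p] fun z => z - p := by
    have hpow : (fun z => ‖z - p‖ ^ 3) =O[𝓝[Ω] p] fun z => z - p :=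
      ((Asymptotics.isLittleO_norm_pow_id (by norm_num)).comp_tendsto hsub).isBigO
    simpa using (hGo.isBigO.trans hpow).add (Asymptotics.isBigO_refl (fun z => z - p) _)
  have hGt : Tendsto G (𝓝[Ω] p) (𝓝[Ω] p) :=
    tendsto_nhdsWithin_iff.2 ⟨tendsto_sub_nhds_zero_iff.1 (hGO.trans_tendsto hsub),
      eventually_mem_nhdsWithin.mono hG.mapsTo⟩
  have hFG := ((hF.littleOh.isLittleO hp).comp_tendsto hGt).trans_isBigO (hGO.norm_norm.pow 3)
  simpa [LittleOh] using (hFG.add hGo).norm_left.tendsto_div_nhds_zero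

theorem id : IsTangentSelfMap Ω p id :=
  ⟨differentiableOn_id, mapsTo_id _, by simp [LittleOh, tendsto_const_nhds]⟩

theorem iterate {F : En n → En n} (hF : IsTangentSelfMap Ω p F) (hp : p ∉ Ω) (k : ℕ) :
    IsTangentSelfMap Ω p F^[k] := by
  induction k with
  | zero => exact .id
  | succ k ih => exact ih.comp hF hp

end IsTangentSelfMap

theorem IsDefiningFunction.of_le {ρ : En n → ℝ} {m k : ℕ∞} (hρ : IsDefiningFunction Ω m ρ)
    (hkm : k ≤ m) : IsDefiningFunction Ω k ρ :=
  ⟨hρ.1.of_le (WithTop.coe_le_coe.2 hkm), hρ.2⟩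

theorem IsDefiningFunction.interior_closure_subset {ρ : En n → ℝ} {m : ℕ∞}
    (hρ : IsDefiningFunction Ω m ρ) : interior (closure Ω) ⊆ Ω := by
  obtain ⟨hc, hΩ, hfr, hd⟩ := hρ
  have hle : closure Ω ⊆ {z | ρ z ≤ 0} :=
    closure_minimal (hΩ.trans_subset fun _ => le_of_lt (α := ℝ))
      (isClosed_le hc.continuous continuous_const)
  intro z hz
  by_contra hzΩ
  have hzf : z ∈ frontier Ω := ⟨interior_subset hz, fun h => hzΩ (interior_subset h)⟩
  have hmax : IsLocalMax ρ z := by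
    filter_upwards [mem_interior_iff_mem_nhds.1 hz] with x hx
    rw [show ρ z = 0 from hfr.subset hzf]
    exact hle hx
  exact hd z hzf hmax.fderiv_eq_zero

theorem ComparisonData.norm_comp_smul_sub_le {ℓ : En n →L[ℂ] ℂ} {w : En n} (hw : ‖ℓ w - 1‖ ≤ 3 / 4)
    (D : ComparisonData Ω p ℓ ((ℓ w)⁻¹ • w)) (hΩ : IsOpen Ω) {t : ℝ} (ht : t ∈ Ioc 0 D.discRadius) :
    p + t • w ∈ Ω ∧ ∀ G, IsTangentSelfMap Ω p G →
      ‖G (p + t • w) - (p + t • w)‖ ≤ D.displacementRate * (t * √(√t)) := by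
  have hℓ : ℓ w ≠ 0 := fun h => by norm_num [h] at hw
  have hζ : ‖(t : ℂ) * ℓ w - t‖ ≤ 3 / 4 * t := by
    rw [← mul_sub_one, norm_mul, norm_real, Real.norm_of_nonneg ht.1.le, mul_comm]
    exact mul_le_mul_of_nonneg_right hw ht.1.le
  have hpoint : ((t : ℂ) * ℓ w) • (ℓ w)⁻¹ • w = t • w := by
    rw [smul_smul, mul_assoc, mul_inv_cancel₀ hℓ, mul_one, coe_smul]
  rw [← hpoint]
  exact ⟨D.mem_of_mem_disc ht.2 (hζ.trans_lt (by linarith [ht.1])),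
    fun G hG => D.norm_comp_sub_self_le ht.2 hΩ hG ht.1 hζ⟩

theorem exists_isOpen_forall_norm_comp_sub_le {ρ : En n → ℝ} (hρ : IsDefiningFunction Ω 4 ρ)
    (hp : p ∈ frontier Ω) (hspc : StronglyPcxAt ρ p) (hΩ : IsOpen Ω) :
    ∃ S : Set (En n), IsOpen S ∧ S.Nonempty ∧ ∀ w ∈ S, ∃ a > 0, ∃ B, ∀ t ∈ Ioc (0 : ℝ) a,
      p + t • w ∈ Ω ∧ ∀ G, IsTangentSelfMap Ω p G →
        ‖G (p + t • w) - (p + t • w)‖ ≤ B * (t * √(√t)) := by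
  obtain ⟨ℓ, ⟨v, hv⟩, hℓ⟩ := exists_localModel hρ hp hspc
  refine ⟨{w | ‖ℓ w - 1‖ < 3 / 4}, isOpen_lt (by fun_prop) continuous_const,
    ⟨v, by simp [hv]⟩, fun w (hw : ‖ℓ w - 1‖ < 3 / 4) => ?_⟩
  have hℓw : ℓ w ≠ 0 := fun h => by norm_num [h] at hw
  obtain ⟨D₀⟩ := hℓ ((ℓ w)⁻¹ • w) (by rw [map_smul, smul_eq_mul, inv_mul_cancel₀ hℓw])
  obtain ⟨D⟩ := D₀.nonempty_comparisonData
  exact ⟨D.discRadius, D.discRadius_pos, D.displacementRate,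
    fun t ht => D.norm_comp_smul_sub_le hw.le hΩ ht⟩

theorem IsTangentSelfMap.exists_eventually_eq_self {ρ : En n → ℝ} {F : En n → En n}
    (hρ : IsDefiningFunction Ω 4 ρ) (hp : p ∈ frontier Ω) (hspc : StronglyPcxAt ρ p)
    (hΩ : IsOpen Ω) (hF : IsTangentSelfMap Ω p F) : ∃ z₀ ∈ Ω, ∀ᶠ x in 𝓝 z₀, F x = x := by
  have hpΩ : p ∉ Ω := (hΩ.frontier_eq.subset hp).2
  have hd : ∀ k, DifferentiableOn ℂ F^[k] Ω := fun k => (hF.iterate hpΩ k).differentiableOn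
  obtain ⟨S, hSo, hSne, hS⟩ := exists_isOpen_forall_norm_comp_sub_le hρ hp hspc hΩ
  have hcover : S ⊆ ⋃ N, uniformDisplacementSet Ω p F (fun t => t * √(√t)) N := fun w hw => by
    obtain ⟨a, ha, B, hB⟩ := hS w hw
    exact mem_iUnion_uniformDisplacementSet ha (fun t ht => by positivity) fun t ht =>
      ⟨(hB t ht).1, fun k => (hB t ht).2 _ (hF.iterate hpΩ k)⟩
  obtain ⟨N, w₀, -, hw₀⟩ := exists_nonempty_inter_interior_of_isOpen_subset_iUnion hSo hSne
    (isClosed_uniformDisplacementSet hΩ fun k => (hd k).continuousOn) hcover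
  obtain ⟨z₀, s, hs, hsΩ, hclose⟩ := exists_ball_norm_iterate_sub_le hρ.interior_closure_subset
    isLittleO_mul_sqrt_sqrt hw₀ (ε := 1 / 8) (by norm_num)
  refine ⟨z₀, hsΩ (mem_ball_self hs), ?_⟩
  filter_upwards [ball_mem_nhds z₀ (half_pos hs)] with x hx
  have hsub : ball x (s / 2) ⊆ ball z₀ s :=
    ball_subset_ball' (by linarith [mem_ball.1 hx])
  exact eq_self_of_forall_norm_iterate_sub_le (half_pos hs)
    (fun k => (hd k).mono (hsub.trans hsΩ)) (by linarith) fun k z hz => hclose k z (hsub hz)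

end TangentSelfMaps

theorem burns_krantz_rigidity_general {n : ℕ} {Ω : Set (En n)} {ρ : En n → ℝ} (hΩ : IsDomain' Ω)
    (hρ : IsDefiningFunction Ω 4 ρ) {p : En n} (hp : p ∈ frontier Ω) (hspc : StronglyPcxAt ρ p)
    {F : En n → En n} (hF : DifferentiableOn ℂ F Ω) (hFself : MapsTo F Ω Ω)
    (ho : LittleOh Ω F p 3) : ∀ z ∈ Ω, F z = z := by
  obtain ⟨z₀, hz₀, hz₀F⟩ :=
    IsTangentSelfMap.exists_eventually_eq_self hρ hp hspc hΩ.1 ⟨hF, hFself, ho⟩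
  have hzero : EqOn (fun z => F z - z) 0 Ω :=
    eqOn_zero_of_isPreconnected_of_eventuallyEq_zero (hF.sub differentiableOn_id) hΩ.1
      hΩ.2.isPreconnected hz₀ (hz₀F.mono fun _ => sub_eq_zero.2)
  exact fun z hz => sub_eq_zero.1 (hzero hz)

theorem burns_krantz_rigidity
    {n : ℕ} (hn : 1 ≤ n) (Ω : Set (En n)) (ρ : En n → ℝ)
    (hΩ : IsDomain' Ω) (hbd : Bornology.IsBounded Ω)
    (hρ : IsDefiningFunction Ω ⊤ ρ)
    (hspc : ∀ q ∈ frontier Ω, StronglyPcxAt ρ q)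
    (p : En n) (hp : p ∈ frontier Ω)
    (F : En n → En n) (hF : DifferentiableOn ℂ F Ω) (hFself : MapsTo F Ω Ω)
    (ho : LittleOh Ω F p 3) :
    ∀ z ∈ Ω, F z = z :=
  burns_krantz_rigidity_general hΩ (hρ.of_le le_top) hp (hspc p hp) hF hFself ho
end
end

section
/- Let 𝔻 be the open unit disk in ℂ and let F : 𝔻 → 𝔻 be a holomorphic map with F(z) = z + o(|z−1|³) as z → 1 within 𝔻. Then F(z) = z for all z ∈ 𝔻. -/
open Complex Topology Filter Metric Set Function

noncomputable section

/-!
The Herglotz kernel `z ↦ (σ + z) / (σ - z)` carries the disk onto the right half-plane, its real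
part being the Poisson kernel at the boundary point `σ`. Since `F` is tangent to the identity at
`σ`, its angular derivative there is `1`, so Julia's lemma (the boundary limit of the Schwarz–Pick
inequality) says that composing with `F` does not decrease the Poisson kernel. Hence the Herglotz
kernel increment `g z = (σ + F z) / (σ - F z) - (σ + z) / (σ - z)` has nonnegative real part. The
two poles turn third-order contact of `F` with the identity into `g = o(1 - ‖z‖)` within a Stolz
region, where `‖σ - z‖ = O(1 - ‖z‖)`; Harnack's inequality forbids this decay unless `g = 0`.
-/

open Asymptotics ComplexConjugate

section Harnack

variable {E : Type*} [NormedAddCommGroup E] [NormedSpace ℂ E] {g : E → ℂ} {c z : E} {R : ℝ}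

theorem norm_sub_le_norm_add_conj {a b : ℂ} (ha : 0 ≤ a.re) (hb : 0 ≤ b.re) :
    ‖a - b‖ ≤ ‖a + conj b‖ := by
  rw [← sq_le_sq₀ (norm_nonneg _) (norm_nonneg _), ← normSq_eq_norm_sq, ← normSq_eq_norm_sq,
    normSq_apply, normSq_apply]
  simp only [sub_re, sub_im, add_re, add_im, conj_re, conj_im]
  nlinarith

theorem mul_norm_sub_le_dist_mul_norm_add_conj_of_re_pos
    (hg : DifferentiableOn ℂ g (ball c R)) (hre : ∀ w ∈ ball c R, 0 < (g w).re)
    (hz : z ∈ ball c R) :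
    R * ‖g z - g c‖ ≤ dist z c * ‖g z + conj (g c)‖ := by
  have hR : 0 < R := nonempty_ball.1 ⟨z, hz⟩
  have hne : ∀ w ∈ ball c R, g w + conj (g c) ≠ 0 := fun w hw h => by
    have hsum : (g w).re + (g c).re = 0 := by simpa using congrArg re h
    linarith [hre w hw, hre c (mem_ball_self hR)]
  have hschwarz : ‖(g z - g c) / (g z + conj (g c))‖ ≤ dist z c / R := by
    have h := dist_le_div_mul_dist_of_mapsTo_ball
      (f := fun w => (g w - g c) * (g w + conj (g c))⁻¹) (R₂ := 1)
      ((hg.sub_const _).mul ((hg.add_const _).inv hne)) (fun w hw => ?_) hz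
    · simpa [div_eq_mul_inv, mul_comm] using h
    · simpa [← div_eq_mul_inv] using div_le_one_of_le₀
        (norm_sub_le_norm_add_conj (hre w hw).le (hre c (mem_ball_self hR)).le) (norm_nonneg _)
  rw [norm_div, div_le_div_iff₀ (norm_pos_iff.2 (hne z hz)) hR] at hschwarz
  linarith

theorem mul_norm_sub_le_dist_mul_norm_add_conj
    (hg : DifferentiableOn ℂ g (ball c R)) (hre : ∀ w ∈ ball c R, 0 ≤ (g w).re)
    (hz : z ∈ ball c R) :
    R * ‖g z - g c‖ ≤ dist z c * ‖g z + conj (g c)‖ := by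
  have hlim : Tendsto (fun ε : ℝ => dist z c * ‖g z + ε + conj (g c + ε)‖) (𝓝[>] 0)
      (𝓝 (dist z c * ‖g z + conj (g c)‖)) :=
    (Continuous.tendsto' (by fun_prop) _ _ (by simp)).mono_left nhdsWithin_le_nhds
  refine ge_of_tendsto hlim (eventually_mem_nhdsWithin.mono fun ε (hε : 0 < ε) => ?_)
  have h := mul_norm_sub_le_dist_mul_norm_add_conj_of_re_pos (g := fun w => g w + ε)
    (hg.add_const _) (fun w hw => ?_) hz
  · rwa [add_sub_add_right_eq_sub] at h
  · simpa using add_pos_of_nonneg_of_pos (hre w hw) hε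

theorem mul_abs_norm_sub_norm_le_of_re_nonneg
    (hg : DifferentiableOn ℂ g (ball c R)) (hre : ∀ w ∈ ball c R, 0 ≤ (g w).re)
    (hz : z ∈ ball c R) :
    R * |‖g z‖ - ‖g c‖| ≤ dist z c * (‖g z‖ + ‖g c‖) :=
  have hR : 0 < R := nonempty_ball.1 ⟨z, hz⟩
  calc R * |‖g z‖ - ‖g c‖| ≤ R * ‖g z - g c‖ := by gcongr; exact abs_norm_sub_norm_le _ _
    _ ≤ dist z c * ‖g z + conj (g c)‖ := mul_norm_sub_le_dist_mul_norm_add_conj hg hre hz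
    _ ≤ dist z c * (‖g z‖ + ‖g c‖) := by
      gcongr
      exact (norm_add_le _ _).trans_eq (by rw [norm_conj])

theorem eqOn_zero_of_re_nonneg_of_apply_center_eq_zero
    (hg : DifferentiableOn ℂ g (ball c R)) (hre : ∀ w ∈ ball c R, 0 ≤ (g w).re)
    (hc : g c = 0) : EqOn g 0 (ball c R) := by
  intro z hz
  have h := mul_abs_norm_sub_norm_le_of_re_nonneg hg hre hz
  simp only [hc, norm_zero, sub_zero, add_zero, abs_norm] at h
  refine norm_le_zero_iff.1 (not_lt.1 fun hpos => ?_)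
  exact h.not_gt (mul_lt_mul_of_pos_right (mem_ball.1 hz) hpos)

theorem eqOn_zero_of_re_nonneg_of_isLittleO {l : Filter E} [l.NeBot]
    (hg : DifferentiableOn ℂ g (ball c R)) (hre : ∀ w ∈ ball c R, 0 ≤ (g w).re)
    (hl : l ≤ 𝓟 (ball c R)) (ho : g =o[l] fun w => R - dist w c) : EqOn g 0 (ball c R) := by
  have hmem : ∀ᶠ w in l, w ∈ ball c R := hl (mem_principal_self _)
  refine eqOn_zero_of_re_nonneg_of_apply_center_eq_zero hg hre ?_
  have hO : (fun w => (R - dist w c) * ‖g c‖) =O[l] g := by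
    refine IsBigO.of_bound (2 * R) (hmem.mono fun w hw => ?_)
    have hd : dist w c < R := hw
    have hharnack := mul_abs_norm_sub_norm_le_of_re_nonneg hg hre hw
    rw [Real.norm_of_nonneg (mul_nonneg (sub_pos.2 hd).le (norm_nonneg _))]
    nlinarith [neg_le_abs (‖g w‖ - ‖g c‖), norm_nonneg (g w), dist_nonneg (x := w) (y := c)]
  by_contra hgc
  refine isLittleO_irrefl (hmem.mono fun w hw => ?_).frequently
    (((isBigO_self_const_mul (norm_ne_zero_iff.2 hgc) _ l).congr_right fun w =>
      mul_comm _ _).trans_isLittleO (hO.trans_isLittleO ho))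
  exact (sub_pos.2 (mem_ball.1 hw)).ne'

end Harnack

section SchwarzPick

variable {a z : ℂ}

/-- The involutive automorphism of the unit disk exchanging `a` and `0`; its modulus at `z` is the
pseudo-hyperbolic distance between `a` and `z`. -/
def diskInvolution (a z : ℂ) : ℂ := (a - z) / (1 - conj a * z)

theorem one_sub_conj_mul_ne_zero (ha : ‖a‖ ≤ 1) (hz : ‖z‖ < 1) : 1 - conj a * z ≠ 0 := by
  refine sub_ne_zero.2 fun h => ?_
  have hnorm : 1 = ‖a‖ * ‖z‖ := by simpa using congrArg norm h
  nlinarith [norm_nonneg z]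

theorem norm_one_sub_conj_mul_sq_sub_norm_sub_sq (a z : ℂ) :
    ‖1 - conj a * z‖ ^ 2 - ‖a - z‖ ^ 2 = (1 - ‖a‖ ^ 2) * (1 - ‖z‖ ^ 2) := by
  simp only [← normSq_eq_norm_sq, normSq_apply, sub_re, sub_im, mul_re, mul_im, conj_re, conj_im,
    one_re, one_im]
  ring

theorem norm_one_sub_conj_mul_of_norm_eq_one (ha : ‖a‖ = 1) (z : ℂ) :
    ‖1 - conj a * z‖ = ‖a - z‖ := by
  have h := norm_one_sub_conj_mul_sq_sub_norm_sub_sq a z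
  rw [ha, one_pow, sub_self, zero_mul, sub_eq_zero] at h
  exact (sq_eq_sq₀ (norm_nonneg _) (norm_nonneg _)).1 h

theorem one_sub_norm_diskInvolution_sq (ha : ‖a‖ ≤ 1) (hz : ‖z‖ < 1) :
    1 - ‖diskInvolution a z‖ ^ 2 = (1 - ‖a‖ ^ 2) * (1 - ‖z‖ ^ 2) / ‖1 - conj a * z‖ ^ 2 := by
  have hne : ‖1 - conj a * z‖ ^ 2 ≠ 0 :=
    pow_ne_zero _ (norm_ne_zero_iff.2 (one_sub_conj_mul_ne_zero ha hz))
  rw [← norm_one_sub_conj_mul_sq_sub_norm_sub_sq, diskInvolution, norm_div, div_pow, sub_div,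
    div_self hne]

theorem diskInvolution_zero (a : ℂ) : diskInvolution a 0 = a := by simp [diskInvolution]

theorem diskInvolution_self (a : ℂ) : diskInvolution a a = 0 := by simp [diskInvolution]

theorem mapsTo_diskInvolution_ball (ha : a ∈ ball (0 : ℂ) 1) :
    MapsTo (diskInvolution a) (ball 0 1) (ball 0 1) := by
  intro z hz
  rw [mem_ball_zero_iff] at ha hz ⊢
  have hpos : 0 < 1 - ‖diskInvolution a z‖ ^ 2 := by
    rw [one_sub_norm_diskInvolution_sq ha.le hz]
    have hne := one_sub_conj_mul_ne_zero ha.le hz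
    have ha' : 0 < 1 - ‖a‖ ^ 2 := by nlinarith [norm_nonneg a]
    have hz' : 0 < 1 - ‖z‖ ^ 2 := by nlinarith [norm_nonneg z]
    positivity
  nlinarith

theorem differentiableOn_diskInvolution (ha : ‖a‖ ≤ 1) :
    DifferentiableOn ℂ (diskInvolution a) (ball 0 1) :=
  DifferentiableOn.div (by fun_prop) (by fun_prop)
    fun _ hz => one_sub_conj_mul_ne_zero ha (mem_ball_zero_iff.1 hz)

theorem diskInvolution_diskInvolution (ha : ‖a‖ < 1) (hz : ‖z‖ < 1) :
    diskInvolution a (diskInvolution a z) = z := by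
  have hz' : 1 - conj a * z ≠ 0 := one_sub_conj_mul_ne_zero ha.le hz
  have ha' : 1 - conj a * a ≠ 0 := one_sub_conj_mul_ne_zero ha.le ha
  have hnum : a - (a - z) / (1 - conj a * z) = z * (1 - conj a * a) / (1 - conj a * z) := by
    rw [eq_div_iff hz', sub_mul, div_mul_cancel₀ _ hz']
    ring
  have hden : 1 - conj a * ((a - z) / (1 - conj a * z))
      = (1 - conj a * a) / (1 - conj a * z) := by
    rw [eq_div_iff hz', sub_mul, mul_assoc, div_mul_cancel₀ _ hz']
    ring
  rw [diskInvolution, diskInvolution, hnum, hden, div_div_div_cancel_right₀ hz',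
    mul_div_cancel_right₀ _ ha']

theorem norm_diskInvolution_le_of_mapsTo_ball {F : ℂ → ℂ}
    (hF : DifferentiableOn ℂ F (ball 0 1)) (hmaps : MapsTo F (ball 0 1) (ball 0 1))
    (ha : a ∈ ball (0 : ℂ) 1) (hz : z ∈ ball (0 : ℂ) 1) :
    ‖diskInvolution (F a) (F z)‖ ≤ ‖diskInvolution a z‖ := by
  have ha' := mem_ball_zero_iff.1 ha
  have hmapsa := mapsTo_diskInvolution_ball ha
  have h := norm_le_norm_of_mapsTo_ball (f := diskInvolution (F a) ∘ F ∘ diskInvolution a) (R := 1)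
    ((differentiableOn_diskInvolution (mem_ball_zero_iff.1 (hmaps ha)).le).comp
      (hF.comp (differentiableOn_diskInvolution ha'.le) hmapsa) (hmaps.comp hmapsa))
    (((mapsTo_diskInvolution_ball (hmaps ha)).comp (hmaps.comp hmapsa)).mono_right
      ball_subset_closedBall)
    (by simp [diskInvolution_zero, diskInvolution_self]) (mem_ball_zero_iff.1 (hmapsa hz))
  simpa [diskInvolution_diskInvolution ha' (mem_ball_zero_iff.1 hz)] using h

end SchwarzPick

section Julia

variable {F : ℂ → ℂ} {l : Filter ℂ} {σ τ z : ℂ} {α : ℝ}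

theorem one_add_norm_mul_le_of_mapsTo_ball
    (hF : DifferentiableOn ℂ F (ball 0 1)) (hmaps : MapsTo F (ball 0 1) (ball 0 1)) {a : ℂ}
    (ha : a ∈ ball (0 : ℂ) 1) (hz : z ∈ ball (0 : ℂ) 1) :
    (1 + ‖a‖) * ((1 - ‖z‖ ^ 2) / ‖1 - conj a * z‖ ^ 2) ≤
      (1 - ‖F a‖) / (1 - ‖a‖) *
        ((1 + ‖F a‖) * ((1 - ‖F z‖ ^ 2) / ‖1 - conj (F a) * F z‖ ^ 2)) := by
  have ha' := mem_ball_zero_iff.1 ha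
  have hpick : 1 - ‖diskInvolution a z‖ ^ 2 ≤ 1 - ‖diskInvolution (F a) (F z)‖ ^ 2 := by
    gcongr
    exact norm_diskInvolution_le_of_mapsTo_ball hF hmaps ha hz
  rw [one_sub_norm_diskInvolution_sq ha'.le (mem_ball_zero_iff.1 hz),
    one_sub_norm_diskInvolution_sq (mem_ball_zero_iff.1 (hmaps ha)).le
      (mem_ball_zero_iff.1 (hmaps hz))] at hpick
  rw [div_mul_eq_mul_div, le_div_iff₀ (sub_pos.2 ha')]
  calc _ = (1 - ‖a‖ ^ 2) * (1 - ‖z‖ ^ 2) / ‖1 - conj a * z‖ ^ 2 := by ring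
    _ ≤ (1 - ‖F a‖ ^ 2) * (1 - ‖F z‖ ^ 2) / ‖1 - conj (F a) * F z‖ ^ 2 := hpick
    _ = _ := by ring

theorem norm_eq_one_of_tendsto_of_tendsto_div [l.NeBot] (hσ : ‖σ‖ = 1)
    (hl : l ≤ 𝓝[ball 0 1] σ) (hτ : Tendsto F l (𝓝 τ))
    (hα : Tendsto (fun z => (1 - ‖F z‖) / (1 - ‖z‖)) l (𝓝 α)) : ‖τ‖ = 1 := by
  have hnorm : Tendsto (fun z : ℂ => 1 - ‖z‖) l (𝓝 0) :=
    (Continuous.tendsto' (by fun_prop) σ 0 (by simp [hσ])).mono_left (hl.trans nhdsWithin_le_nhds)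
  have hzero : Tendsto (fun z => 1 - ‖F z‖) l (𝓝 0) := by
    refine (mul_zero α ▸ hα.mul hnorm).congr' ?_
    filter_upwards [hl self_mem_nhdsWithin] with z hz
    exact div_mul_cancel₀ _ (sub_pos.2 (mem_ball_zero_iff.1 hz)).ne'
  linarith [tendsto_nhds_unique hzero (hτ.norm.const_sub 1)]

/-- **Julia's lemma**, the angular derivative `α` being computed along an arbitrary filter. -/
theorem poissonKernel_le_mul_poissonKernel_of_tendsto_div [l.NeBot]
    (hF : DifferentiableOn ℂ F (ball 0 1)) (hmaps : MapsTo F (ball 0 1) (ball 0 1))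
    (hσ : ‖σ‖ = 1) (hl : l ≤ 𝓝[ball 0 1] σ) (hτ : Tendsto F l (𝓝 τ))
    (hα : Tendsto (fun z => (1 - ‖F z‖) / (1 - ‖z‖)) l (𝓝 α)) (hz : z ∈ ball (0 : ℂ) 1) :
    poissonKernel 0 z σ ≤ α * poissonKernel 0 (F z) τ := by
  have hτ1 : ‖τ‖ = 1 := norm_eq_one_of_tendsto_of_tendsto_div hσ hl hτ hα
  have hmem : ∀ᶠ a in l, a ∈ ball (0 : ℂ) 1 := hl self_mem_nhdsWithin
  have hid : Tendsto id l (𝓝 σ) := hl.trans nhdsWithin_le_nhds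
  have hlim {G : ℂ → ℂ} {ρ w : ℂ} (hG : Tendsto G l (𝓝 ρ)) (hρ : ‖ρ‖ = 1) (hw : ‖w‖ < 1) :
      Tendsto (fun a => (1 + ‖G a‖) * ((1 - ‖w‖ ^ 2) / ‖1 - conj (G a) * w‖ ^ 2)) l
        (𝓝 (2 * poissonKernel 0 w ρ)) := by
    have hne := one_sub_conj_mul_ne_zero hρ.le hw
    have hden : Tendsto (fun a => ‖1 - conj (G a) * w‖ ^ 2) l (𝓝 (‖1 - conj ρ * w‖ ^ 2)) :=
      (((continuous_conj.tendsto ρ).comp hG).mul_const w |>.const_sub 1).norm.pow 2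
    have hval : (1 + ‖ρ‖) * ((1 - ‖w‖ ^ 2) / ‖1 - conj ρ * w‖ ^ 2) = 2 * poissonKernel 0 w ρ := by
      rw [poissonKernel_def, norm_one_sub_conj_mul_of_norm_eq_one hρ]
      simp only [sub_zero, hρ]
      ring
    exact hval ▸ (hG.norm.const_add 1).mul (tendsto_const_nhds.div hden (by positivity))
  have hle := le_of_tendsto_of_tendsto (hlim hid hσ (mem_ball_zero_iff.1 hz))
    (hα.mul (hlim hτ hτ1 (mem_ball_zero_iff.1 (hmaps hz))))
    (hmem.mono fun a ha => one_add_norm_mul_le_of_mapsTo_ball hF hmaps ha hz)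
  linarith

end Julia

section Herglotz

variable {F : ℂ → ℂ} {l : Filter ℂ} {σ w z : ℂ}

theorem herglotzRieszKernel_zero_sub (hw : w ≠ σ) (hz : z ≠ σ) :
    herglotzRieszKernel 0 w σ - herglotzRieszKernel 0 z σ
      = 2 * σ * (w - z) / ((σ - w) * (σ - z)) := by
  have hw' : σ - w ≠ 0 := sub_ne_zero.2 hw.symm
  have hz' : σ - z ≠ 0 := sub_ne_zero.2 hz.symm
  simp only [herglotzRieszKernel_def, sub_zero]
  rw [div_sub_div _ _ hw' hz']
  ring

theorem differentiableOn_herglotzRieszKernel_zero_comp {s t : Set ℂ} (hF : DifferentiableOn ℂ F s)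
    (hmaps : MapsTo F s t) (hσ : σ ∉ t) :
    DifferentiableOn ℂ (fun z => herglotzRieszKernel 0 (F z) σ) s := by
  simp only [herglotzRieszKernel_def, sub_zero]
  exact (hF.const_add σ).div (hF.const_sub σ)
    fun z hz => sub_ne_zero.2 (ne_of_mem_of_not_mem (hmaps hz) hσ).symm

theorem isLittleO_herglotzRieszKernel_zero_comp_sub {φ : ℂ → ℝ} (hne : ∀ᶠ z in l, z ≠ σ)
    (htan : (fun z => F z - z) =o[l] fun z => σ - z)
    (ho : (fun z => F z - z) =o[l] fun z => ‖σ - z‖ ^ 2 * φ z) :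
    (fun z => herglotzRieszKernel 0 (F z) σ - herglotzRieszKernel 0 z σ) =o[l] φ := by
  have hequiv : (fun z => σ - F z) ~[l] fun z => σ - z :=
    (IsEquivalent.refl.sub_isLittleO htan).congr_left (.of_forall fun z => by simp)
  have hinv : (fun z => ((σ - F z) * (σ - z))⁻¹) =O[l] fun z => (‖σ - z‖ ^ 2)⁻¹ :=
    ((hequiv.mul IsEquivalent.refl).inv.isBigO.norm_right).congr_right fun z => by simp [sq]
  refine ((ho.const_mul_left (2 * σ)).mul_isBigO hinv).congr' ?_ ?_
  · filter_upwards [hne, hequiv.isBigO_symm.eq_zero_imp] with z hz hFz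
    rw [herglotzRieszKernel_zero_sub
      (fun h => hz (sub_eq_zero.1 (hFz (sub_eq_zero.2 h.symm))).symm) hz, div_eq_mul_inv]
  · filter_upwards [hne] with z hz
    have hpos : ‖σ - z‖ ≠ 0 := norm_ne_zero_iff.2 (sub_ne_zero.2 hz.symm)
    field_simp

theorem injOn_herglotzRieszKernel_zero (hσ : σ ≠ 0) :
    InjOn (fun z => herglotzRieszKernel 0 z σ) {σ}ᶜ := by
  intro w hw z hz h
  have hdiff := herglotzRieszKernel_zero_sub (mem_compl_singleton_iff.1 hw)
    (mem_compl_singleton_iff.1 hz)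
  rw [sub_eq_zero.2 h, eq_comm, div_eq_zero_iff] at hdiff
  simpa [hσ, sub_eq_zero, (mem_compl_singleton_iff.1 hw).symm,
    (mem_compl_singleton_iff.1 hz).symm] using hdiff

end Herglotz

theorem tendsto_one_sub_norm_div_of_isLittleO {E : Type*} [SeminormedAddCommGroup E] {F : E → E}
    {l : Filter E} (hball : ∀ᶠ z in l, z ∈ ball (0 : E) 1)
    (ho : (fun z => F z - z) =o[l] fun z => 1 - ‖z‖) :
    Tendsto (fun z => (1 - ‖F z‖) / (1 - ‖z‖)) l (𝓝 1) := by
  have hnorm : (fun z => ‖F z‖ - ‖z‖) =o[l] fun z => 1 - ‖z‖ :=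
    (IsBigO.of_bound' (.of_forall fun z => abs_norm_sub_norm_le _ _)).trans_isLittleO ho
  refine (isEquivalent_iff_tendsto_one (hball.mono fun z hz => ?_)).1
    ((IsEquivalent.refl.sub_isLittleO hnorm).congr_left (.of_forall fun z => by simp))
  exact (sub_pos.2 (mem_ball_zero_iff.1 hz)).ne'

theorem isLittleO_one_sub_norm_of_isLittleO {E E' : Type*} [SeminormedAddCommGroup E] [Norm E']
    {f : E → E'} {l : Filter E} {σ : E} (hl : l ≤ 𝓝 σ)
    (ho : f =o[l] fun z => ‖σ - z‖ ^ 2 * (1 - ‖z‖)) : f =o[l] fun z => 1 - ‖z‖ := by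
  have hbdd : (fun z => ‖σ - z‖ ^ 2) =O[l] fun _ => (1 : ℝ) :=
    (Continuous.tendsto (by fun_prop) σ).isBigO_one ℝ |>.mono hl
  simpa using ho.trans_isBigO (hbdd.mul (isBigO_refl _ l))

theorem nhdsWithin_stolzSet_neBot {M : ℝ} (hM : 1 < M) : (𝓝[stolzSet M] (1 : ℂ)).NeBot :=
  NeBot.mono inferInstance (nhdsWithin_lt_le_nhdsWithin_stolzSet hM)

theorem stolzSet_subset_ball (M : ℝ) : stolzSet M ⊆ ball 0 1 :=
  fun _ hz => mem_ball_zero_iff.2 hz.1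

theorem isBigO_norm_one_sub_pow_three_stolzSet (M : ℝ) :
    (fun z : ℂ => ‖z - 1‖ ^ 3) =O[𝓝[stolzSet M] 1] fun z => ‖1 - z‖ ^ 2 * (1 - ‖z‖) := by
  refine IsBigO.of_bound M (eventually_mem_nhdsWithin.mono fun z hz => ?_)
  have hpos : 0 < 1 - ‖z‖ := sub_pos.2 hz.1
  rw [Real.norm_of_nonneg (by positivity), Real.norm_of_nonneg (by positivity), norm_sub_rev]
  calc ‖1 - z‖ ^ 3 = ‖1 - z‖ ^ 2 * ‖1 - z‖ := pow_succ _ _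
    _ ≤ ‖1 - z‖ ^ 2 * (M * (1 - ‖z‖)) := by gcongr; exact hz.2.le
    _ = M * (‖1 - z‖ ^ 2 * (1 - ‖z‖)) := by ring

theorem isLittleO_nhdsWithin_stolzSet_of_tendsto_norm_div (M : ℝ) {f : ℂ → ℂ}
    (hf : Tendsto (fun z => ‖f z‖ / ‖z - 1‖ ^ 3) (𝓝[ball 0 1] 1) (𝓝 0)) :
    f =o[𝓝[stolzSet M] 1] fun z => ‖1 - z‖ ^ 2 * (1 - ‖z‖) := by
  have hle : 𝓝[stolzSet M] (1 : ℂ) ≤ 𝓝[ball 0 1] 1 := nhdsWithin_mono _ (stolzSet_subset_ball M)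
  have hcube : f =o[𝓝[ball 0 1] 1] fun z => ‖z - 1‖ ^ 3 := by
    refine (isLittleO_of_tendsto' (eventually_mem_nhdsWithin.mono fun z hz h => ?_) hf).of_norm_left
    simp [sub_eq_zero.1 (norm_eq_zero.1 (pow_eq_zero_iff three_ne_zero |>.1 h))] at hz
  exact (hcube.mono hle).trans_isBigO (isBigO_norm_one_sub_pow_three_stolzSet M)

theorem burns_krantz_disk_general {F : ℂ → ℂ} {σ : ℂ} {l : Filter ℂ} [l.NeBot]
    (hF : DifferentiableOn ℂ F (ball 0 1)) (hmaps : MapsTo F (ball 0 1) (ball 0 1))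
    (hσ : ‖σ‖ = 1) (hl : l ≤ 𝓝[ball 0 1] σ)
    (ho : (fun z => F z - z) =o[l] fun z => ‖σ - z‖ ^ 2 * (1 - ‖z‖)) :
    EqOn F id (ball 0 1) := by
  have hnhds : l ≤ 𝓝 σ := hl.trans nhdsWithin_le_nhds
  have hball : ∀ᶠ z in l, z ∈ ball (0 : ℂ) 1 := hl self_mem_nhdsWithin
  have hσball : σ ∉ ball (0 : ℂ) 1 := by simp [hσ]
  have hzσ {z : ℂ} (hz : z ∈ ball (0 : ℂ) 1) : z ≠ σ := ne_of_mem_of_not_mem hz hσball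
  have htan : (fun z => F z - z) =o[l] fun z => 1 - ‖z‖ :=
    isLittleO_one_sub_norm_of_isLittleO hnhds ho
  have htan' : (fun z => F z - z) =o[l] fun z => σ - z :=
    htan.trans_isBigO (IsBigO.of_bound' (.of_forall fun z => by
      simpa [hσ] using abs_norm_sub_norm_le σ z))
  have hlim : Tendsto F l (𝓝 σ) := by
    have h0 : Tendsto (fun z => σ - z) l (𝓝 0) :=
      (Continuous.tendsto' (by fun_prop) σ 0 (sub_self σ)).mono_left hnhds
    simpa using (htan'.trans_tendsto h0).add (tendsto_id.mono_left hnhds)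
  have hzero := eqOn_zero_of_re_nonneg_of_isLittleO
    (g := fun z => herglotzRieszKernel 0 (F z) σ - herglotzRieszKernel 0 z σ) (l := l)
    ((differentiableOn_herglotzRieszKernel_zero_comp hF hmaps hσball).sub
      (differentiableOn_herglotzRieszKernel_zero_comp differentiableOn_id (mapsTo_id _) hσball))
    (fun z hz => ?_) (hl.trans inf_le_right) ?_
  · exact fun z hz => injOn_herglotzRieszKernel_zero (norm_ne_zero_iff.1 (by simp [hσ]))
      (hzσ (hmaps hz)) (hzσ hz) (sub_eq_zero.1 (hzero hz))
  · have hjulia := poissonKernel_le_mul_poissonKernel_of_tendsto_div hF hmaps hσ hl hlim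
      (tendsto_one_sub_norm_div_of_isLittleO hball htan) hz
    simpa [poissonKernel_eq_re_herglotzRieszKernel] using hjulia
  · simpa using isLittleO_herglotzRieszKernel_zero_comp_sub (hball.mono fun z => hzσ) htan' ho

theorem burns_krantz_disk
    (F : ℂ → ℂ) (hF : DifferentiableOn ℂ F (Metric.ball (0 : ℂ) 1))
    (hFself : MapsTo F (Metric.ball (0 : ℂ) 1) (Metric.ball (0 : ℂ) 1))
    (ho : Tendsto (fun z => ‖F z - z‖ / ‖z - 1‖ ^ 3)
      (𝓝[Metric.ball (0 : ℂ) 1] 1) (𝓝 0)) :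
    ∀ z ∈ Metric.ball (0 : ℂ) 1, F z = z := by
  have := nhdsWithin_stolzSet_neBot one_lt_two
  exact burns_krantz_disk_general hF hFself norm_one (nhdsWithin_mono _ (stolzSet_subset_ball 2))
    (isLittleO_nhdsWithin_stolzSet_of_tendsto_norm_div 2 ho)
end
end
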